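/- arXiv:1109.5524 — 5 statements merged into one kernel-verified Lean document; each statement's English description precedes it below -/
import Mathlib

section
/- Plücker identity for maximal minors. Let 𝒩 ≥ 1, let M be an 𝒩×(𝒩+2) matrix over a commutative ring, and for 1 ≤ a < b ≤ 𝒩+2 let D[a,b] denote the determinant of the 𝒩×𝒩 matrix obtained from M by deleting columns a and b. Then for all column indices 1 ≤ k1 < k2 < k3 < k4 ≤ 𝒩+2 one has D[k1,k2]·D[k3,k4] − D[k1,k3]·D[k2,k4] + D[k1,k4]·D[k2,k3] = 0. -/
namespace Stmt5

/-- The strictly monotone embedding `Fin n → Fin (n+2)` whose image misses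
exactly the two columns `a < b`. -/
def delTwo {n : ℕ} (a b : Fin (n + 2)) (h : a < b) : Fin n → Fin (n + 2) :=
  fun i =>
    b.succAbove
      ((Fin.castLT a (by
        have hab : (a : ℕ) < (b : ℕ) := h
        have hb := b.isLt
        omega)).succAbove i)

/-- The maximal minor `D[a,b]` of an `n × (n+2)` matrix obtained by deleting
columns `a` and `b` (keeping the remaining columns in their original order). -/
def minorDel {R : Type*} [CommRing R] {n : ℕ} (M : Matrix (Fin n) (Fin (n + 2)) R)
    (a b : Fin (n + 2)) (h : a < b) : R :=
  (M.submatrix id (delTwo a b h)).det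

/-!
Bordered by two rows `u`, `v`, the matrix `M` becomes square, and its determinant is an alternating
form `B u v` whose values on (signed) standard basis vectors are the minors `D[a,b]`. For fixed `a`,
antisymmetrizing `φ ⊗ det` with `φ := B a` gives an alternating form in one more variable than the
dimension, hence zero. On the vectors `b`, `c`, `d` and the rows of `M`, which `φ` kills, this reads
`B a b * B c d - B a c * B b d + B a d * B b c = 0`.
-/

open Matrix
open Module (Basis)

section AlternatingMap

theorem alternatingMap_eq_zero_of_card_lt {R V N ι κ : Type*} [CommSemiring R] [AddCommMonoid V]
    [Module R V] [AddCommMonoid N] [Module R N] [Fintype ι] [Fintype κ] (e : Basis ι R V)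
    (h : Fintype.card ι < Fintype.card κ) (f : V [⋀^κ]→ₗ[R] N) : f = 0 :=
  e.ext_alternating fun v hv ↦ absurd (Fintype.card_le_of_injective v hv) h.not_ge

variable {R V N ι : Type*} [CommRing R] [AddCommGroup V] [Module R V] [AddCommGroup N] [Module R N]
  [Fintype ι] {n : ℕ}

theorem sum_neg_one_pow_smul_map_removeNth_eq_zero (e : Basis ι R V) (h : Fintype.card ι ≤ n)
    (f : V →ₗ[R] V [⋀^Fin n]→ₗ[R] N) (v : Fin (n + 1) → V) :
    ∑ i : Fin (n + 1), (-1) ^ (i : ℕ) • f (v i) (i.removeNth v) = 0 := by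
  have hf : AlternatingMap.alternatizeUncurryFin f = 0 :=
    alternatingMap_eq_zero_of_card_lt e (by simpa using Nat.lt_succ_of_le h) _
  rw [← AlternatingMap.alternatizeUncurryFin_apply, hf, AlternatingMap.zero_apply]

theorem removeNth_succ_vecCons {α : Type*} (a : α) (v : Fin (n + 1) → α) (i : Fin (n + 1)) :
    i.succ.removeNth (vecCons a v) = vecCons a (i.removeNth v) :=
  Fin.cons_comp_succ_succAbove a v i

theorem smul_map_sub_smul_map_add_smul_map_eq_zero (e : Basis ι R V) (h : Fintype.card ι ≤ n + 2)
    (φ : V →ₗ[R] R) (ω : V [⋀^Fin (n + 2)]→ₗ[R] N) (x : Fin n → V) (hφ : ∀ i, φ (x i) = 0)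
    (b c d : V) :
    φ b • ω (vecCons c (vecCons d x)) - φ c • ω (vecCons b (vecCons d x)) +
      φ d • ω (vecCons b (vecCons c x)) = 0 := by
  have hsum := sum_neg_one_pow_smul_map_removeNth_eq_zero e h (φ.smulRight ω)
    (vecCons b (vecCons c (vecCons d x)))
  have removeNth_zero_vecCons {m : ℕ} (a : V) (v : Fin m → V) :
      Fin.removeNth 0 (vecCons a v) = v := rfl
  simp only [Fin.sum_univ_succ, removeNth_zero_vecCons, removeNth_succ_vecCons, cons_val_zero,
    cons_val_succ, LinearMap.smulRight_apply, AlternatingMap.smul_apply, hφ, zero_smul,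
    smul_zero, Finset.sum_const_zero, Fin.val_zero, Fin.val_succ] at hsum
  linear_combination (norm := module) hsum

theorem grassmann_plucker_relation (e : Basis ι R V) (h : Fintype.card ι ≤ n + 2)
    (η : V [⋀^Fin (n + 2)]→ₗ[R] R) (ω : V [⋀^Fin (n + 2)]→ₗ[R] N) (x : Fin n → V) (a b c d : V) :
    η (vecCons a (vecCons b x)) • ω (vecCons c (vecCons d x)) -
      η (vecCons a (vecCons c x)) • ω (vecCons b (vecCons d x)) +
      η (vecCons a (vecCons d x)) • ω (vecCons b (vecCons c x)) = 0 := by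
  let φ : V →ₗ[R] R :=
    { toFun v := (η.curryLeft a).curryLeft v x
      map_add' := by simp
      map_smul' := by simp }
  have hφ (i : Fin n) : φ (x i) = 0 :=
    η.map_eq_zero_of_eq (i := 1) (j := i.succ.succ) _ rfl (by simp [Fin.ext_iff])
  exact smul_map_sub_smul_map_add_smul_map_eq_zero e h φ ω x hφ b c d

end AlternatingMap

section SignedSingle

variable {n : ℕ}

/-- The standard basis vector `eⱼ` with the Laplace sign `(-1) ^ j`, so that prepending it to a
matrix as a new row deletes column `j` from the determinant without leaving a sign. -/
def signedSingle (R : Type*) [Ring R] (j : Fin n) : Fin n → R :=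
  Pi.single j ((-1) ^ (j : ℕ))

theorem signedSingle_comp_succAbove {R : Type*} [Ring R] {a b : Fin (n + 1)} (h : a < b) :
    signedSingle R a ∘ b.succAbove = signedSingle R (a.castPred (Fin.ne_last_of_lt h)) := by
  ext j
  have hj : b.succAbove j = a ↔ j = a.castPred (Fin.ne_last_of_lt h) := by
    rw [← Fin.succAbove_right_inj (p := b), Fin.succAbove_castPred_of_lt b a h]
  simp [signedSingle, Pi.single_apply, hj]

end SignedSingle

section Minors

variable {R : Type*} [CommRing R] {n : ℕ}

theorem det_vecCons_signedSingle (j : Fin (n + 1)) (A : Fin n → Fin (n + 1) → R) :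
    det (of (vecCons (signedSingle R j) A)) = det (of fun i ↦ A i ∘ j.succAbove) := by
  rw [det_succ_row_zero, Fintype.sum_eq_single j fun k hk ↦ by simp [signedSingle, hk]]
  have hsign : (-1 : R) ^ (j : ℕ) * signedSingle R j j = 1 := by simp [signedSingle, ← mul_pow]
  calc
    _ = (-1) ^ (j : ℕ) * signedSingle R j j * det (of fun i ↦ A i ∘ j.succAbove) := rfl
    _ = det (of fun i ↦ A i ∘ j.succAbove) := by rw [hsign, one_mul]

theorem detRowAlternating_signedSingle_signedSingle (M : Matrix (Fin n) (Fin (n + 2)) R)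
    {a b : Fin (n + 2)} (h : a < b) :
    detRowAlternating (vecCons (signedSingle R b) (vecCons (signedSingle R a) M.row)) =
      minorDel M a b h := by
  have hM : (fun i ↦ vecCons (signedSingle R a) M.row i ∘ b.succAbove) =
      vecCons (signedSingle R (a.castPred (Fin.ne_last_of_lt h)))
        fun i ↦ M.row i ∘ b.succAbove :=
    funext <| Fin.cases (signedSingle_comp_succAbove h) fun _ ↦ rfl
  calc
    _ = det (of fun i ↦ vecCons (signedSingle R a) M.row i ∘ b.succAbove) :=
      det_vecCons_signedSingle b _
    _ = det (of fun i ↦ (M.row i ∘ b.succAbove) ∘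
        (a.castPred (Fin.ne_last_of_lt h)).succAbove) := by
      rw [hM, det_vecCons_signedSingle]
    _ = minorDel M a b h := rfl

end Minors

/-- **Plücker identity for maximal minors.** -/
theorem plucker {R : Type*} [CommRing R] {n : ℕ} (hn : 1 ≤ n)
    (M : Matrix (Fin n) (Fin (n + 2)) R)
    (k1 k2 k3 k4 : Fin (n + 2)) (h12 : k1 < k2) (h23 : k2 < k3) (h34 : k3 < k4) :
    minorDel M k1 k2 h12 * minorDel M k3 k4 h34 -
      minorDel M k1 k3 (h12.trans h23) * minorDel M k2 k4 (h23.trans h34) +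
      minorDel M k1 k4 (h12.trans (h23.trans h34)) * minorDel M k2 k3 h23 = 0 := by
  have hrel := grassmann_plucker_relation (Pi.basisFun R (Fin (n + 2))) (Fintype.card_fin _).le
    detRowAlternating detRowAlternating M.row
    (signedSingle R k4) (signedSingle R k3) (signedSingle R k2) (signedSingle R k1)
  simp only [detRowAlternating_signedSingle_signedSingle, h12, h23, h34, h12.trans h23,
    h23.trans h34, h12.trans (h23.trans h34), smul_eq_mul] at hrel
  linear_combination hrel

end Stmt5
end

section
/- Bäcklund transformations for the Wronskian T-functions. For fixed b1 ∈ B1, f1 ∈ F1, b2 ∈ B2, f2 ∈ F2, write T^{B1′}, T^{F1′}, T^{B2′}, T^{F2′} for the Wronskian T-functions built with b1 removed from B1, f1 removed from F1, b2 removed from B2, f2 removed from F2, respectively (all other data unchanged). Then for all a, s ∈ ℤ, pointwise on ℂ: (1) T^{[−1]}_{a+1,s}·T^{B1′[+1]}_{a,s} − T_{a,s}·T^{B1′}_{a+1,s} = z_{b1}·T_{a+1,s−1}·T^{B1′}_{a,s+1}; (2) T_{a,s+1}·T^{B1′}_{a,s} − T^{[−1]}_{a,s}·T^{B1′[+1]}_{a,s+1}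 = z_{b1}·T_{a+1,s}·T^{B1′}_{a−1,s+1}; (3) T^{F1′[−1]}_{a+1,s}·T^{[+1]}_{a,s} − T^{F1′}_{a,s}·T_{a+1,s} = z_{f1}·T^{F1′}_{a+1,s−1}·T_{a,s+1}; (4) T^{F1′}_{a,s+1}·T_{a,s} − T^{F1′[−1]}_{a,s}·T^{[+1]}_{a,s+1} = z_{f1}·T^{F1′}_{a+1,s}·T_{a−1,s+1}; (5) z_{b2}·T^{[+1]}_{a+1,s}·T^{B2′[−1]}_{a,s} − T_{a,s}·T^{B2′}_{a+1,s} = T_{a+1,s+1}·T^{B2′}_{a,s−1}; (6) T_{a,s−1}·T^{B2′}_{a,s} − T^{[+1]}_{a,s}·T^{B2′[−1]}_{a,s−1} = T_{a+1,s}·T^{B2′}_{a−1,s−1}; (7) z_{f2}·T^{F2′[+1]}_{a+1,s}·T^{[−1]}_{a,s} + T^{F2′}_{a,s}·T_{a+1,s} = T^{F2′}_{a+1,s+1}·T_{a,s−1}; (8) T^{F2′}_{a,s−1}·T_{a,s} − T^{F2′[+1]}_{a,s}·T^{[−1]}_{a,s−1} = −T^{F2′}_{a+1,s}·T_{a−1,s−1}.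 -/
open scoped BigOperators

namespace StmtT

/-- The integer segment tuple `⟨a,b⟩ = (a, a+1, …, b)`, empty when `b < a`. -/
def seg (a b : ℤ) : List ℤ := (List.range (b - a + 1).toNat).map (fun k => a + (k : ℤ))

/-- Product of `g x y` over ordered pairs `x ≺ y` in the list `L`. -/
def pairProd {ι : Type*} (L : List ι) (g : ι → ι → ℂ) : ℂ :=
  ∏ i : Fin L.length, ∏ j : Fin L.length, if i < j then g (L.get i) (L.get j) else 1

/-- Product of `g x` over a list. -/
def prodL {ι : Type*} (L : List ι) (g : ι → ℂ) : ℂ := (L.map g).prod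

/-- Product of `g x y` over pairs `(x, y) ∈ L × M`. -/
def prodLL {ι : Type*} (L M : List ι) (g : ι → ι → ℂ) : ℂ :=
  (L.map (fun x => (M.map (g x)).prod)).prod

/-- Determinant of the square matrix whose rows and columns are labelled by the given
key lists (by convention `0` if the two lists have different lengths). -/
noncomputable def listDet {α β : Type*} (rows : List α) (cols : List β) (e : α → β → ℂ) : ℂ :=
  if h : rows.length = cols.length then
    Matrix.det (Matrix.of fun i j : Fin rows.length =>
      e (rows.get i) (cols.get (Fin.cast h j)))
  else 0

/-- The denominator formula `D(B|F)`. -/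
noncomputable def Dden {ι : Type*} (z : ι → ℂ) (B F : List ι) : ℂ :=
  pairProd B (fun b b' => z b - z b') * pairProd F (fun f f' => z f' - z f) /
    prodLL B F (fun b f => z b - z f)

/-- The sparse determinant `Δ^{B1,B2,R,[η;ξ]}_{F,S,T1,T2}` built from Baxter
Q-functions, as a function of the spectral parameter `u`. -/
noncomputable def DeltaT {ι : Type*} [DecidableEq ι] (z : ι → ℂ) (hbar : ℂ)
    (Q : Finset ι → ℂ → ℂ) (B1 B2 F : List ι) (R S T1 T2 : List ℤ) (η ξ : ℤ) (u : ℂ) : ℂ :=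
  listDet
    ((B1.map (Sum.inl : ι → ι ⊕ (ι ⊕ ℤ)) ++
      B2.map (fun b => (Sum.inr (Sum.inl b) : ι ⊕ (ι ⊕ ℤ))) ++
      R.map (fun r => (Sum.inr (Sum.inr r) : ι ⊕ (ι ⊕ ℤ)))))
    ((F.map (Sum.inl : ι → ι ⊕ (ℤ ⊕ (ℤ ⊕ ℤ))) ++
      S.map (fun j => (Sum.inr (Sum.inl j) : ι ⊕ (ℤ ⊕ (ℤ ⊕ ℤ)))) ++
      T1.map (fun j => (Sum.inr (Sum.inr (Sum.inl j)) : ι ⊕ (ℤ ⊕ (ℤ ⊕ ℤ)))) ++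
      T2.map (fun j => (Sum.inr (Sum.inr (Sum.inr j)) : ι ⊕ (ℤ ⊕ (ℤ ⊕ ℤ))))))
    (fun row col =>
      match row, col with
      | Sum.inl b, Sum.inl f => Q {b, f} (u + (ξ : ℂ) * hbar) / (z b - z f)
      | Sum.inl b, Sum.inr (Sum.inl j) =>
          z b ^ (j - 1) * Q {b} (u + ((ξ + 2 * j - 1 : ℤ) : ℂ) * hbar)
      | Sum.inl b, Sum.inr (Sum.inr (Sum.inl j)) =>
          z b ^ (j - 1) * Q {b} (u + ((ξ + 2 * j - 1 : ℤ) : ℂ) * hbar)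
      | Sum.inl _, Sum.inr (Sum.inr (Sum.inr _)) => 0
      | Sum.inr (Sum.inl b), Sum.inl f =>
          (-z f / z b) ^ η * Q {b, f} (u + ((ξ - 2 * η : ℤ) : ℂ) * hbar) / (z b - z f)
      | Sum.inr (Sum.inl b), Sum.inr (Sum.inl j) =>
          z b ^ (j - 1) * Q {b} (u + ((ξ + 2 * j - 1 : ℤ) : ℂ) * hbar)
      | Sum.inr (Sum.inl _), Sum.inr (Sum.inr (Sum.inl _)) => 0
      | Sum.inr (Sum.inl b), Sum.inr (Sum.inr (Sum.inr j)) =>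
          z b ^ (j - 1) * Q {b} (u + ((ξ + 2 * j - 1 : ℤ) : ℂ) * hbar)
      | Sum.inr (Sum.inr r), Sum.inl f =>
          (-z f) ^ (r - 1) * Q {f} (u + ((ξ - 2 * r + 1 : ℤ) : ℂ) * hbar)
      | Sum.inr (Sum.inr _), Sum.inr _ => 0)

/-- The family `Q` of Baxter Q-functions satisfies the QQ-relations on the index
set `S` (with grading `p` and twist parameters `z`), normalized by `Q_∅ = 1`. -/
def QQsys {ι : Type*} [DecidableEq ι] (z : ι → ℂ) (hbar : ℂ) (p : ι → ℤ) (S : Set ι)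
    (Q : Finset ι → ℂ → ℂ) : Prop :=
  (∀ u, Q ∅ u = 1) ∧
  (∀ I : Finset ι, ↑I ⊆ S → ∀ i ∈ S, ∀ j ∈ S, i ∉ I → j ∉ I → i ≠ j → p i = p j →
    ∀ u, (z i - z j) * (Q I u * Q (insert i (insert j I)) u) =
      z i * Q (insert i I) (u + (p i : ℂ) * hbar) * Q (insert j I) (u - (p i : ℂ) * hbar) -
      z j * Q (insert i I) (u - (p i : ℂ) * hbar) * Q (insert j I) (u + (p i : ℂ) * hbar)) ∧
  (∀ I : Finset ι, ↑I ⊆ S → ∀ i ∈ S, ∀ j ∈ S, i ∉ I → j ∉ I → i ≠ j → p i = -p j →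
    ∀ u, (z i - z j) * (Q (insert i I) u * Q (insert j I) u) =
      z i * Q I (u - (p i : ℂ) * hbar) * Q (insert i (insert j I)) (u + (p i : ℂ) * hbar) -
      z j * Q I (u + (p i : ℂ) * hbar) * Q (insert i (insert j I)) (u - (p i : ℂ) * hbar))

/-- `T` is the Wronskian T-function family for the data `(z, hbar, Q, B1, B2, F1, F2)`:
it vanishes outside the generalized T-hook and is given by the eight regional
sparse determinant formulas inside the hook. -/
def IsT {ι : Type*} [DecidableEq ι] (z : ι → ℂ) (hbar : ℂ) (Q : Finset ι → ℂ → ℂ)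
    (B1 B2 F1 F2 : List ι) (T : ℤ → ℤ → ℂ → ℂ) : Prop :=
  let m1 : ℤ := B1.length
  let m2 : ℤ := B2.length
  let n1 : ℤ := F1.length
  let n2 : ℤ := F2.length
  let η1 : ℤ := m1 - n1
  let η2 : ℤ := m2 - n2
  let θ : ℤ := (m1 + m2) * (m1 + m2 - 1) / 2 + (n1 + n2) * (n1 + n2 - 1) / 2
  let F : List ι := F1 ++ F2
  let Dd : ℂ := Dden z (B1 ++ B2) F
  (∀ a s : ℤ, (a < 0 ∨ (m1 < a ∧ n1 < s) ∨ (m2 < a ∧ s < -n2)) → ∀ u, T a s u = 0) ∧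
  (∀ a s : ℤ, s + η1 ≤ a → -s + η2 ≤ a → 0 ≤ a → -η1 ≤ s → s ≤ η2 → ∀ u,
    T a s u = (-1 : ℂ) ^ ((s + η1) * (s + n2) + θ) *
      DeltaT z hbar Q B1 B2 F [] [] (seg 1 (s + η1)) (seg (s - a + η1 + 1) (-a + η1 + η2))
        (a - s - η1) (a - s - η1 - η2) u / Dd) ∧
  (∀ a s : ℤ, s + η1 ≤ a → -s + η2 ≤ a → 0 ≤ a → -η1 ≤ s → η2 ≤ s → ∀ u,
    T a s u = (-1 : ℂ) ^ ((s + η1) * (s + n2) + θ) *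
      DeltaT z hbar Q B1 B2 F (seg (a - s - η1 + 1) (a - η1 - η2)) [] (seg 1 (s + η1)) []
        (a - s - η1) (a - s - η1 - η2) u / Dd) ∧
  (∀ a s : ℤ, s + η1 ≤ a → -s + η2 ≤ a → 0 ≤ a → s ≤ -η1 → s ≤ η2 → ∀ u,
    T a s u = (-1 : ℂ) ^ ((s + η1) * m2 + θ) *
      DeltaT z hbar Q B1 B2 F (seg 1 (-s - η1)) [] [] (seg (s - a + η1 + 1) (-a + η1 + η2))
        (a - s - η1) (a - s - η1 - η2) u / Dd) ∧
  (∀ a s : ℤ, s + η1 ≤ a → -s + η2 ≤ a → 0 ≤ a → η2 ≤ s → s ≤ -η1 → ∀ u,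
    T a s u = (-1 : ℂ) ^ ((s + η1) * m2 + θ) *
      DeltaT z hbar Q B1 B2 F (seg 1 (-s - η1) ++ seg (a - s - η1 + 1) (a - η1 - η2)) [] [] []
        (a - s - η1) (a - s - η1 - η2) u / Dd) ∧
  (∀ a s : ℤ, a ≤ s + η1 → a ≤ η1 + η2 → ∀ u,
    T a s u = (-1 : ℂ) ^ (m2 * a + θ) *
      DeltaT z hbar Q B1 B2 F [] (seg 1 (-a + η1 + η2)) (seg (s - a + η1 + 1) (s + η1)) []
        0 (a - s - η1 - η2) u / Dd) ∧
  (∀ a s : ℤ, η1 + η2 ≤ a → a ≤ s + η1 → ∀ u,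
    T a s u = (-1 : ℂ) ^ (a * (η1 + n2 + 1) + θ) *
      DeltaT z hbar Q B1 B2 F (seg 1 (a - η1 - η2)) [] (seg (s - a + η1 + 1) (s + η1)) []
        0 (a - s - η1 - η2) u / Dd) ∧
  (∀ a s : ℤ, a ≤ -s + η2 → a ≤ η1 + η2 → ∀ u,
    T a s u = (-1 : ℂ) ^ (a * (m2 + 1) + θ) *
      DeltaT z hbar Q B1 B2 F [] (seg 1 (-a + η1 + η2)) [] (seg (s - a + η1 + 1) (s + η1))
        0 (a - s - η1 - η2) u / Dd) ∧
  (∀ a s : ℤ, η1 + η2 ≤ a → a ≤ -s + η2 → ∀ u,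
    T a s u = (-1 : ℂ) ^ (a * (η1 + n2) + θ) *
      DeltaT z hbar Q B1 B2 F (seg 1 (a - η1 - η2)) [] [] (seg (s - a + η1 + 1) (s + η1))
        0 (a - s - η1 - η2) u / Dd)

/-!
By the mixed QQ-relation, the matrices with the entries `Q_{b,f} / (z_b - z_f)` at consecutive
values of the spectral parameter differ, after multiplication by suitable powers of `z_b` and `z_f`,
by the rank-one matrix `Q_b Q_f`. Bordering such a matrix by auxiliary rows and columns with unit
entries and eliminating them therefore moves the spectral parameter, independently in the rows of
`B1` and of `B2`. In this way the eight regional formulas are gauge transforms of a single bordered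
determinant, in which a point of the hook is encoded by the numbers of auxiliary rows and columns of
two kinds each. A step on the lattice adds or deletes auxiliary rows and columns, and the
removal of an index from `B1`, `B2`, `F1` or `F2` deletes one more row or column: the Bäcklund
transformations are three-term Plücker relations.
-/

/-! ### Signs -/

/-- The nontrivial character of `ℤ/2`: exponents of `-1` are kept modulo `2`, where identities
between them are settled by `x * x = x`. -/
noncomputable def sgn (x : ZMod 2) : ℂ := if x = 0 then 1 else -1

theorem sgn_zero : sgn 0 = 1 := by simp [sgn]

theorem sgn_one : sgn 1 = -1 := by simp [sgn]

theorem sgn_add (x y : ZMod 2) : sgn (x + y) = sgn x * sgn y := by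
  have zero_or_one : ∀ x : ZMod 2, x = 0 ∨ x = 1 := by decide
  rcases zero_or_one x with rfl | rfl <;> rcases zero_or_one y with rfl | rfl <;>
    simp [sgn, show (1 : ZMod 2) + 1 = 0 by decide]

theorem sgn_mul_self (x : ZMod 2) : sgn x * sgn x = 1 := by
  rw [← sgn_add, CharTwo.add_self_eq_zero, sgn_zero]

theorem sgn_pow (x : ZMod 2) (n : ℕ) : sgn x ^ n = sgn (x * n) := by
  induction n with
  | zero => simp [sgn_zero]
  | succ n ih => rw [pow_succ, ih, Nat.cast_succ, mul_add, sgn_add, mul_one]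

theorem sgn_natCast (n : ℕ) : sgn n = (-1) ^ n := by
  induction n with
  | zero => simp [sgn_zero]
  | succ n ih => rw [Nat.cast_succ, sgn_add, ih, sgn_one, pow_succ]

theorem sgn_intCast (n : ℤ) : sgn n = (-1) ^ n := by
  rcases Int.even_or_odd' n with ⟨k, rfl | rfl⟩ <;>
    simp [sgn_one, sgn_zero, CharTwo.two_eq_zero, zpow_add₀, zpow_mul]

theorem neg_zpow_eq_sgn_mul (w : ℂ) (n : ℤ) : (-w) ^ n = sgn n * w ^ n := by
  rw [sgn_intCast, ← mul_zpow, neg_one_mul]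

/-! ### Determinants labelled by lists -/

section ListDet

variable {α β : Type*}

theorem exists_eq_ofFn {n : ℕ} (R : List α) (h : R.length = n) :
    ∃ v : Fin n → α, R = List.ofFn v := by
  subst h
  exact ⟨R.get, (List.ofFn_get R).symm⟩

theorem listDet_ofFn {n : ℕ} (v : Fin n → α) (w : Fin n → β) (e : α → β → ℂ) :
    listDet (List.ofFn v) (List.ofFn w) e = (Matrix.of fun i j => e (v i) (w j)).det := by
  rw [listDet, dif_pos (by simp),
    ← Matrix.det_submatrix_equiv_self (finCongr (List.length_ofFn (f := v)).symm)]
  congr 1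
  ext i j
  simp

theorem listDet_eq_zero_of_length_ne {R : List α} {C : List β} (e : α → β → ℂ)
    (h : R.length ≠ C.length) : listDet R C e = 0 := dif_neg h

theorem listDet_flip (R : List α) (C : List β) (e : α → β → ℂ) :
    listDet R C e = listDet C R (fun c r => e r c) := by
  by_cases h : R.length = C.length
  · obtain ⟨v, rfl⟩ := exists_eq_ofFn R h
    obtain ⟨w, hw⟩ := exists_eq_ofFn C rfl
    generalize C.length = n at *
    subst hw
    rw [listDet_ofFn, listDet_ofFn, ← Matrix.det_transpose]
    rfl
  · rw [listDet_eq_zero_of_length_ne _ h, listDet_eq_zero_of_length_ne _ (Ne.symm h)]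

theorem listDet_scale {α' β' : Type*} (R : List α) (C : List β) (e : α → β → ℂ)
    (f : α → α') (g : β → β') (e' : α' → β' → ℂ) (x : α → ℂ) (y : β → ℂ)
    (h : ∀ r ∈ R, ∀ c ∈ C, e r c = x r * y c * e' (f r) (g c)) :
    listDet R C e = (R.map x).prod * (C.map y).prod * listDet (R.map f) (C.map g) e' := by
  by_cases hl : R.length = C.length
  · obtain ⟨v, rfl⟩ := exists_eq_ofFn R hl
    obtain ⟨w, hw⟩ := exists_eq_ofFn C rfl
    generalize C.length = n at *
    subst hw
    simp only [List.map_ofFn, listDet_ofFn, List.prod_ofFn]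
    rw [mul_assoc, ← Matrix.det_mul_row, ← Matrix.det_mul_column]
    congr 1
    ext i j
    simp only [Matrix.of_apply, Function.comp,
      h (v i) (List.mem_ofFn.mpr ⟨_, rfl⟩) (w j) (List.mem_ofFn.mpr ⟨_, rfl⟩)]
    ring
  · rw [listDet_eq_zero_of_length_ne _ hl, listDet_eq_zero_of_length_ne _ (by simpa using hl),
      mul_zero]

theorem listDet_congr {R : List α} {C : List β} {e e' : α → β → ℂ}
    (h : ∀ r ∈ R, ∀ c ∈ C, e r c = e' r c) : listDet R C e = listDet R C e' := by
  rw [listDet_scale R C e id id e' (fun _ => 1) (fun _ => 1) (by simpa using h)]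
  simp

theorem listDet_map_apply (R : List α) (C : List β) (e : α → β → ℂ) :
    listDet (R.map e) C (fun φ c => φ c) = listDet R C e := by
  rw [listDet_scale R C e e id (fun φ c => φ c) (fun _ => 1) (fun _ => 1) fun _ _ _ _ => by simp]
  simp

theorem listDet_cons (x : α) (R : List α) (C : List β) (e : α → β → ℂ) :
    listDet (x :: R) C e =
      ∑ i : Fin C.length, (-1) ^ (i : ℕ) * e x (C.get i) * listDet R (C.eraseIdx i) e := by
  by_cases hl : R.length + 1 = C.length
  · obtain ⟨v, hv⟩ := exists_eq_ofFn R rfl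
    obtain ⟨w, rfl⟩ := exists_eq_ofFn C hl.symm
    generalize R.length = n at *
    subst hv
    have head : x :: List.ofFn v = List.ofFn (Fin.cons x v : Fin (n + 1) → α) := by
      simp [List.ofFn_succ]
    have tail (i : Fin (n + 1)) : (List.ofFn w).eraseIdx i = List.ofFn (w ∘ i.succAbove) := by
      refine List.ext_getElem (by simp [List.length_eraseIdx, i.is_le]) fun k _ _ => ?_
      simp only [List.getElem_eraseIdx, List.getElem_ofFn, Function.comp]
      split_ifs with hk
      · rw [Fin.succAbove_of_castSucc_lt _ _ (by simpa [Fin.lt_def] using hk)]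
        rfl
      · rw [Fin.succAbove_of_le_castSucc _ _ (by simpa [Fin.le_def] using hk)]
        rfl
    rw [head, listDet_ofFn, Matrix.det_succ_row_zero,
      ← (finCongr (List.length_ofFn (f := w)).symm).sum_comp]
    refine Finset.sum_congr rfl fun i _ => ?_
    simp only [finCongr_apply, Fin.val_cast, tail, listDet_ofFn, List.get_ofFn, Fin.cast_cast,
      Fin.cast_eq_self, Matrix.of_apply, Fin.cons_zero]
    rfl
  · rw [listDet_eq_zero_of_length_ne _ (by simpa using hl)]
    refine (Finset.sum_eq_zero fun i _ => ?_).symm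
    rw [listDet_eq_zero_of_length_ne _ (by have := i.isLt; grind), mul_zero]

theorem listDet_swap (A B : List α) (x y : α) (C : List β) (e : α → β → ℂ) :
    listDet (A ++ x :: y :: B) C e = -listDet (A ++ y :: x :: B) C e := by
  induction A generalizing C with
  | nil =>
    by_cases hl : B.length + 2 = C.length
    · obtain ⟨v, hv⟩ := exists_eq_ofFn B rfl
      obtain ⟨w, rfl⟩ := exists_eq_ofFn C hl.symm
      generalize B.length = n at *
      subst hv
      have head (x y : α) : x :: y :: List.ofFn v =
          List.ofFn (Fin.cons x (Fin.cons y v : Fin (n + 1) → α) : Fin (n + 2) → α) := by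
        simp [List.ofFn_succ]
      have permuted := Matrix.det_permute (Equiv.swap (0 : Fin (n + 2)) 1) (Matrix.of fun i j =>
        e ((Fin.cons y (Fin.cons x v : Fin (n + 1) → α) : Fin (n + 2) → α) i) (w j))
      rw [Equiv.Perm.sign_swap (by simp)] at permuted
      simp only [List.nil_append, head, listDet_ofFn]
      rw [← neg_one_mul, ← Int.cast_one, ← Int.cast_neg]
      refine Eq.trans ?_ permuted
      congr 1
      ext i j
      refine Fin.cases ?_ (Fin.cases ?_ fun i => ?_) i
      · simp
      · simp
      · simp [Equiv.swap_apply_of_ne_of_ne (Fin.succ_ne_zero _)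
          (show i.succ.succ ≠ 1 from fun h => Fin.succ_ne_zero i (Fin.succ_injective _ h))]
    · rw [listDet_eq_zero_of_length_ne _ (by simpa using hl),
        listDet_eq_zero_of_length_ne _ (by simpa using hl), neg_zero]
  | cons z A ih =>
    simp only [List.cons_append, listDet_cons z, ih, mul_neg, Finset.sum_neg_distrib]

theorem listDet_move (K A B : List α) (x : α) (C : List β) (e : α → β → ℂ) :
    listDet (K ++ (A ++ x :: B)) C e = sgn A.length * listDet (K ++ x :: (A ++ B)) C e := by
  induction A generalizing K with
  | nil => simp [sgn_zero]
  | cons y A ih =>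
    have := ih (K ++ [y])
    simp only [List.append_assoc, List.cons_append, List.nil_append] at this ⊢
    rw [this, listDet_swap, List.length_cons, Nat.cast_succ, sgn_add, sgn_one]
    ring

theorem listDet_append_swap (K U V L : List α) (C : List β) (e : α → β → ℂ) :
    listDet (K ++ (U ++ (V ++ L))) C e =
      sgn (U.length * V.length) * listDet (K ++ (V ++ (U ++ L))) C e := by
  induction V generalizing K with
  | nil => simp [sgn_zero]
  | cons y V ih =>
    have := ih (K ++ [y])
    simp only [List.append_assoc, List.cons_append, List.nil_append] at this ⊢
    rw [listDet_move, this, List.length_cons, Nat.cast_succ, mul_add, sgn_add]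
    ring_nf

theorem listDet_append_swap_col (R : List α) (K U V L : List β) (e : α → β → ℂ) :
    listDet R (K ++ (U ++ (V ++ L))) e =
      sgn (U.length * V.length) * listDet R (K ++ (V ++ (U ++ L))) e := by
  rw [listDet_flip, listDet_append_swap, listDet_flip R]

theorem listDet_append_rev (U V L : List α) (C : List β) (e : α → β → ℂ) :
    listDet (U ++ (V ++ L)) C e =
      sgn (U.length * (V.length + L.length) + V.length * L.length) *
        listDet (L ++ (V ++ U)) C e := by
  have moved_U := listDet_append_swap [] U (V ++ L) [] C e
  have moved_V := listDet_append_swap [] V L U C e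
  simp only [List.nil_append, List.append_nil, List.append_assoc, List.length_append,
    Nat.cast_add] at moved_U moved_V
  rw [moved_U, moved_V, sgn_add, mul_assoc]

theorem listDet_append_rev_col (R : List α) (U V L : List β) (e : α → β → ℂ) :
    listDet R (U ++ (V ++ L)) e =
      sgn (U.length * (V.length + L.length) + V.length * L.length) *
        listDet R (L ++ (V ++ U)) e := by
  rw [listDet_flip, listDet_append_rev, listDet_flip R]

theorem listDet_reverse (K A L : List α) (C : List β) (e : α → β → ℂ) :
    listDet (K ++ (A.reverse ++ L)) C e =
      sgn (A.length.choose 2 : ℕ) * listDet (K ++ (A ++ L)) C e := by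
  induction A generalizing K with
  | nil => simp [sgn_zero]
  | cons y A ih =>
    have := ih (K ++ [y])
    simp only [List.append_assoc, List.cons_append, List.nil_append, List.reverse_cons] at this ⊢
    rw [listDet_move, this, List.length_reverse, List.length_cons, Nat.choose_succ_succ' _ 1,
      Nat.choose_one_right, Nat.cast_add, sgn_add, mul_assoc]

theorem listDet_cons_eq_zero {x : α} {R : List α} (h : x ∈ R) (C : List β) (e : α → β → ℂ) :
    listDet (x :: R) C e = 0 := by
  obtain ⟨A, B, rfl⟩ := List.append_of_mem h
  have moved := listDet_move [x] A B x C e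
  have swapped := listDet_swap [] (A ++ B) x x C e
  simp only [List.nil_append, List.cons_append] at moved swapped
  rw [moved, self_eq_neg.mp swapped, mul_zero]

theorem listDet_zero_row {x : α} {R : List α} (hx : x ∈ R) {C : List β} {e : α → β → ℂ}
    (h : ∀ c ∈ C, e x c = 0) : listDet R C e = 0 := by
  obtain ⟨A, B, rfl⟩ := List.append_of_mem hx
  have moved := listDet_move [] A B x C e
  rw [List.nil_append, List.nil_append] at moved
  rw [moved, listDet_cons]
  simp [h]

theorem listDet_cons_sum {κ : Type*} (s : Finset κ) (k : κ → ℂ) (y : κ → α) {x : α}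
    (R : List α) {C : List β} {e : α → β → ℂ} (h : ∀ c ∈ C, e x c = ∑ i ∈ s, k i * e (y i) c) :
    listDet (x :: R) C e = ∑ i ∈ s, k i * listDet (y i :: R) C e := by
  simp only [listDet_cons, Finset.mul_sum]
  rw [Finset.sum_comm]
  refine Finset.sum_congr rfl fun j _ => ?_
  rw [h _ (List.get_mem C j), Finset.mul_sum, Finset.sum_mul]
  exact Finset.sum_congr rfl fun i _ => by ring

theorem listDet_replace_row (K L : List α) {x x' y : α} {C : List β} {e : α → β → ℂ} {κ μ : ℂ}
    (hy : y ∈ K ++ L) (h : ∀ c ∈ C, e x' c = κ * e x c + μ * e y c) :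
    listDet (K ++ x' :: L) C e = κ * listDet (K ++ x :: L) C e := by
  have moved := fun x => listDet_move [] K L x C e
  simp only [List.nil_append] at moved
  rw [moved, moved, listDet_cons_sum (Finset.univ : Finset (Fin 2)) ![κ, μ] ![x, y] _
    (by simpa [Fin.sum_univ_two] using h)]
  simp [Fin.sum_univ_two, listDet_cons_eq_zero hy]
  ring

theorem listDet_replace_rows {γ : Type*} (A : List γ) (g g' y : γ → α) (K L : List α) {C : List β}
    {e : α → β → ℂ} {κ : ℂ} {μ : γ → ℂ} (hy : ∀ i ∈ A, y i ∈ K ++ L)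
    (h : ∀ i ∈ A, ∀ c ∈ C, e (g' i) c = κ * e (g i) c + μ i * e (y i) c) :
    listDet (K ++ (A.map g' ++ L)) C e = κ ^ A.length * listDet (K ++ (A.map g ++ L)) C e := by
  induction A generalizing K with
  | nil => simp
  | cons i A ih =>
    have head : y i ∈ K ++ (A.map g ++ L) := by grind
    have tail := ih (K ++ [g' i]) (by grind) (by grind)
    simp only [List.append_assoc, List.cons_append, List.nil_append, List.map_cons,
      List.length_cons] at tail ⊢
    rw [tail, listDet_replace_row _ _ head (h i (by simp))]
    ring

theorem listDet_replace_cols {γ : Type*} (A : List γ) (g g' y : γ → β) {R : List α} (K L : List β)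
    {e : α → β → ℂ} {κ : ℂ} {μ : γ → ℂ} (hy : ∀ i ∈ A, y i ∈ K ++ L)
    (h : ∀ i ∈ A, ∀ r ∈ R, e r (g' i) = κ * e r (g i) + μ i * e r (y i)) :
    listDet R (K ++ (A.map g' ++ L)) e = κ ^ A.length * listDet R (K ++ (A.map g ++ L)) e := by
  rw [listDet_flip, listDet_replace_rows A g g' y K L hy h, listDet_flip R]

theorem listDet_cons_cons_of_col_zero (x : α) (y : β) {R : List α} (C : List β) {e : α → β → ℂ}
    (h : ∀ r ∈ R, e r y = 0) : listDet (x :: R) (y :: C) e = e x y * listDet R C e := by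
  rw [listDet_flip, listDet_cons]
  change ∑ i : Fin (R.length + 1), _ = _
  rw [Fin.sum_univ_succ, Finset.sum_eq_zero fun i _ => by simp [h], add_zero, listDet_flip R]
  simp

theorem listDet_pivot (x : α) (y : β) (R : List α) (C : List β) {e e' : α → β → ℂ} {π : ℂ}
    (hπ : π * π = 1) (hxy : e x y = π)
    (h : ∀ r ∈ R, ∀ c ∈ C, e' r c = e r c - π * e r y * e x c) :
    listDet (x :: R) (y :: C) e = π * listDet R C e' := by
  have cleared := listDet_replace_rows (C := y :: C) (e := fun φ c => φ c) (κ := 1) R e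
    (fun r c => e r c - π * e r y * e x c) (fun _ => e x) [e x] []
    (μ := fun r => -π * e r y) (by simp) (fun r _ c _ => by ring)
  rw [List.append_nil, List.append_nil, List.singleton_append, List.singleton_append,
    listDet_cons_cons_of_col_zero _ _ _ (by simp [hxy, mul_right_comm _ _ π, hπ])] at cleared
  rw [← listDet_map_apply (x :: R), List.map_cons, ← one_mul (listDet (e x :: _) _ _),
    ← one_pow R.length, ← cleared, hxy, listDet_map_apply]
  exact congrArg (π * ·) (listDet_congr fun r hr c hc => (h r hr c hc).symm)

end ListDet

/-! ### Plücker relations -/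

section Pluecker

variable {α β : Type*}

theorem listDet_cons_col (R : List α) (y : β) (C : List β) (e : α → β → ℂ) :
    listDet R (y :: C) e =
      ∑ i : Fin R.length, (-1) ^ (i : ℕ) * listDet (R.eraseIdx i) C e * e (R.get i) y := by
  rw [listDet_flip, listDet_cons]
  exact Finset.sum_congr rfl fun i _ => by rw [← listDet_flip]; ring

theorem listDet_expand_two {x : α} (u v : β) (R : List α) {C : List β} {e : α → β → ℂ}
    (h : ∀ c ∈ C, e x c = 0) :
    listDet (x :: R) (u :: v :: C) e =
      e x u * listDet R (v :: C) e - e x v * listDet R (u :: C) e := by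
  rw [listDet_cons]
  change ∑ i : Fin (C.length + 2), _ = _
  rw [Fin.sum_univ_succ, Fin.sum_univ_succ, Finset.sum_eq_zero fun i _ => by simp [h]]
  simp
  ring

theorem listDet_expand_three {x : α} (u v w : β) (R : List α) {C : List β} {e : α → β → ℂ}
    (h : ∀ c ∈ C, e x c = 0) :
    listDet (x :: R) (u :: v :: w :: C) e = e x u * listDet R (v :: w :: C) e
      - e x v * listDet R (u :: w :: C) e + e x w * listDet R (u :: v :: C) e := by
  rw [listDet_cons]
  change ∑ i : Fin (C.length + 3), _ = _
  rw [Fin.sum_univ_succ, Fin.sum_univ_succ, Fin.sum_univ_succ,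
    Finset.sum_eq_zero fun i _ => by simp [h]]
  simp only [Fin.val_succ, Fin.val_zero, List.get_eq_getElem, List.getElem_cons_zero,
    List.getElem_cons_succ, List.eraseIdx_cons_zero, List.eraseIdx_cons_succ]
  ring

theorem listDet_cons_col_eq_zero {y : β} {C : List β} (h : y ∈ C) (R : List α) (e : α → β → ℂ) :
    listDet R (y :: C) e = 0 := by
  rw [listDet_flip, listDet_cons_eq_zero h]

/-- As a function of `y`, the minor `[R | y C]` is a linear combination of the rows in `R`, so it
may be prepended to a matrix containing these rows at no cost. -/
theorem pluecker_one_row (x : α) (u v w : β) (R : List α) (C : List β) (e : α → β → ℂ) :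
    listDet R (u :: C) e * listDet (x :: R) (v :: w :: C) e
      - listDet R (v :: C) e * listDet (x :: R) (u :: w :: C) e
      + listDet R (w :: C) e * listDet (x :: R) (u :: v :: C) e = 0 := by
  set l : β → ℂ := fun y => listDet R (y :: C) e
  have expanded := listDet_expand_three (e := fun φ c => φ c) u v w ((x :: R).map e)
    (x := l) (C := C) fun c hc => listDet_cons_col_eq_zero hc R e
  simp only [listDet_map_apply] at expanded
  rw [← expanded, listDet_cons_sum Finset.univ _ (fun j => e (R.get j)) _ fun c _ =>
    listDet_cons_col R c C e]
  refine Finset.sum_eq_zero fun j _ => ?_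
  rw [listDet_cons_eq_zero (List.mem_map_of_mem (List.mem_cons_of_mem _ (List.get_mem R j))),
    mul_zero]

theorem pluecker_two_rows (x y : α) (u v : β) (R : List α) (C : List β) (e : α → β → ℂ) :
    listDet R C e * listDet (y :: x :: R) (u :: v :: C) e =
      listDet (y :: R) (u :: C) e * listDet (x :: R) (v :: C) e
      - listDet (y :: R) (v :: C) e * listDet (x :: R) (u :: C) e := by
  set l : β → ℂ := fun c => listDet (y :: R) (c :: C) e
  have expanded := listDet_expand_two (e := fun φ c => φ c) u v ((x :: R).map e)
    (x := l) (C := C) fun c hc => listDet_cons_col_eq_zero hc (y :: R) e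
  simp only [listDet_map_apply] at expanded
  rw [← expanded, listDet_cons_sum Finset.univ _ (fun j => e ((y :: R).get j)) _ fun c _ =>
    listDet_cons_col (y :: R) c C e]
  change _ = ∑ i : Fin (R.length + 1), _
  rw [Fin.sum_univ_succ, Finset.sum_eq_zero fun j _ => ?_]
  · simp [← listDet_map_apply (y :: x :: R)]
  · exact mul_eq_zero_of_right _ (listDet_cons_eq_zero
      (List.mem_map_of_mem (List.mem_cons_of_mem x (List.get_mem R j))) _ _)

theorem listDet_append_cons (A B : List α) (x : α) (C : List β) (e : α → β → ℂ) :
    listDet (A ++ x :: B) C e = sgn A.length * listDet (x :: (A ++ B)) C e :=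
  listDet_move [] A B x C e

theorem listDet_cons_append_cons (A B : List α) (x y : α) (C : List β) (e : α → β → ℂ) :
    listDet (y :: (A ++ x :: B)) C e = sgn A.length * listDet (y :: x :: (A ++ B)) C e :=
  listDet_move [y] A B x C e

theorem listDet_col_append_cons (R : List α) (A B : List β) (x : β) (e : α → β → ℂ) :
    listDet R (A ++ x :: B) e = sgn A.length * listDet R (x :: (A ++ B)) e := by
  rw [listDet_flip, listDet_append_cons, listDet_flip R]

theorem listDet_col_cons_append_cons (R : List α) (A B : List β) (x y : β) (e : α → β → ℂ) :
    listDet R (y :: (A ++ x :: B)) e = sgn A.length * listDet R (y :: x :: (A ++ B)) e := by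
  rw [listDet_flip, listDet_cons_append_cons, listDet_flip R]

/-- In this and the next two relations rows and columns are inserted in place, which makes all
signs independent of the positions. -/
theorem pluecker_three_cols (K L : List α) (x : α) (A B C D : List β) (u v w : β)
    (e : α → β → ℂ) :
    listDet (K ++ L) (A ++ u :: (B ++ (C ++ D))) e *
        listDet (K ++ x :: L) (A ++ (B ++ v :: (C ++ w :: D))) e
      - listDet (K ++ L) (A ++ (B ++ v :: (C ++ D))) e *
        listDet (K ++ x :: L) (A ++ u :: (B ++ (C ++ w :: D))) e
      + listDet (K ++ L) (A ++ (B ++ (C ++ w :: D))) e *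
        listDet (K ++ x :: L) (A ++ u :: (B ++ v :: (C ++ D))) e = 0 := by
  have hu := fun R => listDet_col_append_cons R A (B ++ (C ++ D)) u e
  have hv := fun R => listDet_col_append_cons R (A ++ B) (C ++ D) v e
  have hw := fun R => listDet_col_append_cons R (A ++ (B ++ C)) D w e
  have hvw := fun R => listDet_col_append_cons R (A ++ B) (C ++ w :: D) v e
  have huw := fun R => listDet_col_append_cons R A (B ++ (C ++ w :: D)) u e
  have huv := fun R => listDet_col_append_cons R A (B ++ v :: (C ++ D)) u e
  have hvw' := fun R => listDet_col_cons_append_cons R (A ++ (B ++ C)) D w v e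
  have huw' := fun R => listDet_col_cons_append_cons R (A ++ (B ++ C)) D w u e
  have huv' := fun R => listDet_col_cons_append_cons R (A ++ B) (C ++ D) v u e
  have head := pluecker_one_row x u v w (K ++ L) (A ++ (B ++ (C ++ D))) e
  simp only [List.append_assoc, List.length_append, Nat.cast_add, sgn_add] at *
  simp only [hu, hv, hw, hvw, huw, huv, hvw', huw', huv', listDet_append_cons]
  linear_combination sgn K.length * (sgn A.length * (sgn A.length * sgn B.length) *
    (sgn A.length * (sgn B.length * sgn C.length))) * head

theorem pluecker_three_rows (A B C D : List α) (u v w : α) (K L : List β) (x : β)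
    (e : α → β → ℂ) :
    listDet (A ++ u :: (B ++ (C ++ D))) (K ++ L) e *
        listDet (A ++ (B ++ v :: (C ++ w :: D))) (K ++ x :: L) e
      - listDet (A ++ (B ++ v :: (C ++ D))) (K ++ L) e *
        listDet (A ++ u :: (B ++ (C ++ w :: D))) (K ++ x :: L) e
      + listDet (A ++ (B ++ (C ++ w :: D))) (K ++ L) e *
        listDet (A ++ u :: (B ++ v :: (C ++ D))) (K ++ x :: L) e = 0 := by
  simpa only [← listDet_flip] using
    pluecker_three_cols K L x A B C D u v w (fun c r => e r c)

theorem pluecker_two_rows_cols (A B C : List α) (u v : α) (K L M : List β) (x y : β)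
    (e : α → β → ℂ) :
    listDet (A ++ (B ++ C)) (K ++ (L ++ M)) e *
        listDet (A ++ u :: (B ++ v :: C)) (K ++ x :: (L ++ y :: M)) e =
      listDet (A ++ u :: (B ++ C)) (K ++ x :: (L ++ M)) e *
        listDet (A ++ (B ++ v :: C)) (K ++ (L ++ y :: M)) e
      - listDet (A ++ u :: (B ++ C)) (K ++ (L ++ y :: M)) e *
        listDet (A ++ (B ++ v :: C)) (K ++ x :: (L ++ M)) e := by
  have hu := listDet_append_cons A (B ++ C) u (e := e)
  have hv := listDet_append_cons (A ++ B) C v (e := e)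
  have huv := listDet_append_cons A (B ++ v :: C) u (e := e)
  have huv' := listDet_cons_append_cons (A ++ B) C v u (e := e)
  have hx := fun R => listDet_col_append_cons R K (L ++ M) x e
  have hy := fun R => listDet_col_append_cons R (K ++ L) M y e
  have hxy := fun R => listDet_col_append_cons R K (L ++ y :: M) x e
  have hxy' := fun R => listDet_col_cons_append_cons R (K ++ L) M y x e
  have head := pluecker_two_rows v u x y (A ++ (B ++ C)) (K ++ (L ++ M)) e
  simp only [List.append_assoc, List.length_append, Nat.cast_add, sgn_add] at *
  simp only [hu, hv, huv, huv', hx, hy, hxy, hxy']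
  linear_combination (sgn A.length * (sgn A.length * sgn B.length)) *
    (sgn K.length * (sgn K.length * sgn L.length)) * head

end Pluecker

/-! ### Integer segments -/

/-- The half-open integer segment `(a, b]`, in which counting is free of boundary shifts. -/
def segIoc (a b : ℤ) : List ℤ := seg (a + 1) b

-- The cast in `seg` is elaborated on the list `List.range`, as a coercion in the list monad.
theorem seg_eq_map_range (a b : ℤ) :
    seg a b = (List.range (b - a + 1).toNat).map fun k : ℕ => a + (k : ℤ) := by
  simp [seg, ← List.map_eq_flatMap]

theorem segIoc_eq_map_range (a b : ℤ) :
    segIoc a b = (List.range (b - a).toNat).map fun k : ℕ => a + 1 + (k : ℤ) := by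
  rw [segIoc, seg_eq_map_range]
  congr 3
  ring

theorem length_segIoc (a b : ℤ) : (segIoc a b).length = (b - a).toNat := by
  simp [segIoc_eq_map_range]

theorem mem_segIoc {a b i : ℤ} : i ∈ segIoc a b ↔ a < i ∧ i ≤ b := by
  simp only [segIoc_eq_map_range, List.mem_map, List.mem_range]
  exact ⟨by rintro ⟨k, hk, rfl⟩; omega, fun h => ⟨(i - a - 1).toNat, by omega, by omega⟩⟩

theorem segIoc_eq_nil {a b : ℤ} (h : b ≤ a) : segIoc a b = [] := by
  rw [← List.length_eq_zero_iff, length_segIoc]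
  omega

theorem segIoc_eq_cons {a b : ℤ} (h : a < b) : segIoc a b = (a + 1) :: segIoc (a + 1) b := by
  rw [segIoc_eq_map_range, segIoc_eq_map_range,
    show (b - a).toNat = (b - (a + 1)).toNat + 1 by omega, List.range_succ_eq_map]
  simp [Function.comp_def, add_comm, add_left_comm]

theorem segIoc_succ {a b : ℤ} (h : a ≤ b) : segIoc a (b + 1) = segIoc a b ++ [b + 1] := by
  rw [segIoc_eq_map_range, segIoc_eq_map_range,
    show (b + 1 - a).toNat = (b - a).toNat + 1 by omega, List.range_succ, List.map_append]
  simp only [List.map_cons, List.map_nil, List.append_cancel_left_eq, List.cons.injEq, and_true]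
  omega

theorem map_add_segIoc (k a b : ℤ) : (segIoc a b).map (k + ·) = segIoc (k + a) (k + b) := by
  simp [segIoc_eq_map_range, Function.comp_def, add_assoc]

theorem map_sub_segIoc (k a b : ℤ) :
    (segIoc a b).map (k + 1 - ·) = (segIoc (k - b) (k - a)).reverse := by
  refine List.ext_getElem (by simp [length_segIoc]) fun i hi _ => ?_
  simp only [List.length_map, length_segIoc] at hi
  simp only [segIoc_eq_map_range, List.getElem_map, List.getElem_range, List.getElem_reverse,
    List.length_map, List.length_range]
  omega

/-! ### Elimination of auxiliary rows and columns -/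

/-- The data from which determinant entries are built, indexed by a discrete time `k`: the block
`X k b f` and the vectors `c k b`, `r k f`. -/
structure WaveData (ι : Type*) where
  X : ℤ → ι → ι → ℂ
  c : ℤ → ι → ℂ
  r : ℤ → ι → ℂ

/-- In each time step `X` changes by the rank-one matrix `c rᵀ`. -/
def WaveData.IsRankOneFlow {ι : Type*} (W : WaveData ι) (B F : List ι) : Prop :=
  ∀ k, ∀ b ∈ B, ∀ f ∈ F, W.X (k + 1) b f = W.X k b f + W.c (k + 1) b * W.r (k + 1) f

/-- Row labels: bosonic indices, placed in one of two sectors, and auxiliary rows at time `i`, with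
a coefficient `κ` for their fermionic entries and a weight `α` for each sector. -/
inductive Row (ι : Type*) where
  | boson (γ : Fin 2) (b : ι) : Row ι
  | aux (κ : ℤ) (α : Fin 2 → ℤ) (i : ℤ) : Row ι

/-- Column labels: fermionic indices, and columns at time `j` weighted by `β` in the two sectors.
The families `S`, `T₁`, `T₂` of the T-functions have `β = (1, 1)`, `(1, 0)`, `(0, 1)`. -/
inductive Col (ι : Type*) where
  | fermion (f : ι) : Col ι
  | wave (β : Fin 2 → ℤ) (j : ℤ) : Col ι

section Elimination

open scoped Matrix

variable {ι : Type*} (W : WaveData ι)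

/-- The entry in given row and column, where `x γ` is the time of `X` in sector `γ`. -/
noncomputable def entry (x : Fin 2 → ℤ) : Row ι → Col ι → ℂ
  | .boson γ b, .fermion f => W.X (x γ) b f
  | .boson γ b, .wave β j => β γ * W.c j b
  | .aux κ _ i, .fermion f => κ * W.r i f
  | .aux _ α i, .wave β j => if i = j then -(α ⬝ᵥ β : ℤ) else 0

/-- The rows of the bosonic indices, those of `B₁` in the first sector. -/
def bosons (B₁ B₂ : List ι) : List (Row ι) := B₁.map (.boson 0) ++ B₂.map (.boson 1)

/-- The columns of the fermionic indices. -/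
def fermions (F : List ι) : List (Col ι) := F.map .fermion

theorem exists_of_mem_bosons {B₁ B₂ : List ι} {x : Row ι} (h : x ∈ bosons B₁ B₂) :
    ∃ γ, ∃ b ∈ B₁ ++ B₂, x = .boson γ b := by
  simp only [bosons, List.mem_append, List.mem_map] at h ⊢
  grind

/-- A family of auxiliary rows serving as pivots for a family of wave columns: elimination
multiplies by signs only, and advances the time by `δ` per pivot in the sectors whose time `x` is
still `0`. -/
structure IsPivotPair (x δ : Fin 2 → ℤ) (κ : ℤ) (α β : Fin 2 → ℤ) : Prop where
  dot_mul_self : (α ⬝ᵥ β) * (α ⬝ᵥ β) = 1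
  step_eq : ∀ γ, δ γ = α ⬝ᵥ β * β γ * κ
  step_eq_zero_or : ∀ γ, δ γ = 0 ∨ δ γ = 1 ∧ x γ = 0

variable {W} {B₁ B₂ F : List ι} {x δ : Fin 2 → ℤ}
  {κ κ' : ℤ} {α β α' β' : Fin 2 → ℤ}

/-- Clearing the row `aux κ α (i+1)` with the pivot in the column `wave β (i+1)` advances the time
in the sectors `γ` with `δ γ = 1`. -/
theorem entry_advance (hW : W.IsRankOneFlow (B₁ ++ B₂) F)
    (hδ : IsPivotPair x δ κ α β) (i : ℤ)
    {row : Row ι} (hrow : row ∈ bosons B₁ B₂ ∨ ∃ κ' α' i', row = .aux κ' α' i' ∧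
      (α' ⬝ᵥ β = 0 ∨ i' ≠ i + 1))
    {col : Col ι} (hcol : col ∈ fermions F ∨ ∃ β' j, col = .wave β' j ∧
      (α ⬝ᵥ β' = 0 ∨ j ≠ i + 1)) :
    entry W (x + (i + 1) • δ) row col = entry W (x + i • δ) row col -
      -(α ⬝ᵥ β : ℤ) * entry W (x + i • δ) row (.wave β (i + 1)) *
        entry W (x + i • δ) (.aux κ α (i + 1)) col := by
  rcases hrow with h | ⟨κ', α', i', rfl, h⟩
  · obtain ⟨γ, b, hb, rfl⟩ := exists_of_mem_bosons h
    rcases hcol with h | ⟨β', j, rfl, h⟩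
    · obtain ⟨f, hf, rfl⟩ := List.mem_map.mp h
      have hδγ : (δ γ : ℂ) = (α ⬝ᵥ β : ℤ) * β γ * κ := by exact_mod_cast hδ.step_eq γ
      have step : W.X ((x + (i + 1) • δ) γ) b f =
          W.X ((x + i • δ) γ) b f + δ γ * (W.c (i + 1) b * W.r (i + 1) f) := by
        rcases hδ.step_eq_zero_or γ with h0 | ⟨h1, hxγ⟩
        · simp [h0]
        · simp [h1, hxγ, hW i b hb f hf]
      simp only [entry, step, hδγ]
      ring
    · have : entry W (x + i • δ) (.aux κ α (i + 1)) (.wave β' j) = 0 := by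
        rcases h with h | h <;> simp [entry, h, Ne.symm]
      rw [this, mul_zero, sub_zero]
      rfl
  · have : entry W (x + i • δ) (.aux κ' α' i') (.wave β (i + 1)) = 0 := by
      rcases h with h | h <;> simp [entry, h]
    rw [this, mul_zero, zero_mul, sub_zero]
    cases col <;> rfl

/-- The auxiliary rows are used up as pivots as long as there are wave columns. -/
theorem listDet_entry_pivots (hW : W.IsRankOneFlow (B₁ ++ B₂) F)
    (hδ : IsPivotPair x δ κ α β) (hα' : α' ⬝ᵥ β = 0)
    (hβ' : α ⬝ᵥ β' = 0) (I J : List ℤ) (p h l : ℕ) (hp : l ≤ p) (hh : l ≤ h) :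
    listDet ((segIoc 0 p).map (.aux κ α) ++ (I.map (.aux κ' α') ++ bosons B₁ B₂))
        ((segIoc 0 h).map (.wave β) ++ (J.map (.wave β') ++ fermions F)) (entry W x) =
      (-(α ⬝ᵥ β : ℤ)) ^ l *
        listDet ((segIoc l p).map (.aux κ α) ++ (I.map (.aux κ' α') ++ bosons B₁ B₂))
        ((segIoc l h).map (.wave β) ++ (J.map (.wave β') ++ fermions F))
        (entry W (x + (l : ℤ) • δ)) := by
  induction l with
  | zero => simp
  | succ l ih =>
    have hαβ' : (-(α ⬝ᵥ β : ℤ) : ℂ) * -(α ⬝ᵥ β : ℤ) = 1 := by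
      rw [neg_mul_neg]
      exact_mod_cast hδ.dot_mul_self
    rw [ih (by omega) (by omega), segIoc_eq_cons (b := p) (by omega),
      segIoc_eq_cons (b := h) (by omega), List.map_cons, List.map_cons, List.cons_append,
      List.cons_append, listDet_pivot _ _ _ _ hαβ' (by simp [entry]), pow_succ, mul_assoc]
    · push_cast
      rfl
    intro row hrow col hcol
    refine entry_advance hW hδ l ?_ ?_
    · simp only [List.mem_append, List.mem_map, mem_segIoc] at hrow
      rcases hrow with ⟨i, hi, rfl⟩ | ⟨i, -, rfl⟩ | hrow
      · exact Or.inr ⟨_, _, _, rfl, Or.inr (by omega)⟩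
      · exact Or.inr ⟨_, _, _, rfl, Or.inl hα'⟩
      · exact Or.inl hrow
    · simp only [List.mem_append, List.mem_map, mem_segIoc] at hcol
      rcases hcol with ⟨i, hi, rfl⟩ | ⟨i, -, rfl⟩ | hcol
      · exact Or.inr ⟨_, _, rfl, Or.inr (by omega)⟩
      · exact Or.inr ⟨_, _, rfl, Or.inl hβ'⟩
      · exact Or.inl hcol

/-- Once the wave columns are used up, the remaining auxiliary rows still advance the time, now
through row operations. -/
theorem listDet_entry_advance (hW : W.IsRankOneFlow (B₁ ++ B₂) F) (hδ : IsPivotPair x δ κ α β)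
    (hα' : α' ⬝ᵥ β = 0) (hβ' : α ⬝ᵥ β' = 0) (I J : List ℤ) (p h l : ℕ) (hl : h + l ≤ p) :
    listDet ((segIoc h p).map (.aux κ α) ++ (I.map (.aux κ' α') ++ bosons B₁ B₂))
        (J.map (.wave β') ++ fermions F) (entry W (x + ((h : ℤ) + l) • δ)) =
      listDet ((segIoc h p).map (.aux κ α) ++ (I.map (.aux κ' α') ++ bosons B₁ B₂))
        (J.map (.wave β') ++ fermions F) (entry W (x + (h : ℤ) • δ)) := by
  induction l with
  | zero => rw [Nat.cast_zero, add_zero]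
  | succ l ih =>
    rw [← ih (by omega), Nat.cast_succ, ← add_assoc]
    set pivot : Row ι := .aux κ α (h + l + 1)
    set e := entry W (x + ((h : ℤ) + l) • δ)
    set e' := entry W (x + ((h : ℤ) + l + 1) • δ)
    have advanced := listDet_replace_rows (I.map (.aux κ' α') ++ bosons B₁ B₂) e e'
      (fun _ => e pivot) ((segIoc h p).map (e ∘ .aux κ α)) [] (C := J.map (.wave β') ++ fermions F)
      (e := fun φ c => φ c) (κ := 1)
      (μ := fun row => (α ⬝ᵥ β : ℤ) * e row (.wave β (h + l + 1)))
      (fun _ _ => by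
        rw [List.append_nil]
        exact List.mem_map.mpr ⟨_, mem_segIoc.mpr (by omega), rfl⟩)
      (fun row hrow col hcol => by
        have := entry_advance hW hδ (h + l) (row := row) (col := col) (by
          rcases List.mem_append.mp hrow with h | h
          · obtain ⟨i, -, rfl⟩ := List.mem_map.mp h
            exact Or.inr ⟨_, _, _, rfl, Or.inl hα'⟩
          · exact Or.inl h) (by
          rcases List.mem_append.mp hcol with h | h
          · obtain ⟨i, -, rfl⟩ := List.mem_map.mp h
            exact Or.inr ⟨_, _, rfl, Or.inl hβ'⟩
          · exact Or.inl h)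
        linear_combination this)
    have unchanged : e ∘ Row.aux κ α = e' ∘ Row.aux κ α := by
      funext i col
      cases col <;> rfl
    rw [one_pow, one_mul, List.append_nil, List.append_nil, ← List.map_map, ← List.map_append,
      listDet_map_apply, List.map_map, unchanged, ← List.map_map, ← List.map_append,
      listDet_map_apply] at advanced
    exact advanced

theorem listDet_entry_eliminate (hW : W.IsRankOneFlow (B₁ ++ B₂) F) (hδ : IsPivotPair x δ κ α β)
    (hα' : α' ⬝ᵥ β = 0) (hβ' : α ⬝ᵥ β' = 0) (I J : List ℤ) (p h : ℕ) :
    listDet ((segIoc 0 p).map (.aux κ α) ++ (I.map (.aux κ' α') ++ bosons B₁ B₂))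
        ((segIoc 0 h).map (.wave β) ++ (J.map (.wave β') ++ fermions F)) (entry W x) =
      (-(α ⬝ᵥ β : ℤ)) ^ min p h *
        listDet ((segIoc h p).map (.aux κ α) ++ (I.map (.aux κ' α') ++ bosons B₁ B₂))
          ((segIoc p h).map (.wave β) ++ (J.map (.wave β') ++ fermions F))
          (entry W (x + (p : ℤ) • δ)) := by
  rw [listDet_entry_pivots hW hδ hα' hβ' I J p h (min p h) (min_le_left p h) (min_le_right p h)]
  rcases le_total p h with hph | hph
  · rw [min_eq_left hph, segIoc_eq_nil (le_refl (p : ℤ)),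
      segIoc_eq_nil (Int.ofNat_le.mpr hph)]
  · have := listDet_entry_advance hW hδ hα' hβ' (κ' := κ') I J p h (p - h) (by omega)
    rw [← Nat.cast_add, Nat.add_sub_cancel' hph] at this
    rw [min_eq_right hph, segIoc_eq_nil (le_refl (h : ℤ)), segIoc_eq_nil (Int.ofNat_le.mpr hph)]
    simp only [List.map_nil, List.nil_append, this]

/-- The row with its wave entries erased. -/
def Row.unweighted : Row ι → Row ι
  | .boson γ b => .boson γ b
  | .aux κ _ i => .aux κ 0 i

theorem listDet_map_unweighted {R : List (Row ι)} {C : List (Col ι)}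
    (h : ∀ κ α i, .aux κ α i ∈ R → ∀ β, .wave β i ∈ C → α ⬝ᵥ β = 0) :
    listDet (R.map Row.unweighted) C (entry W x) = listDet R C (entry W x) := by
  rw [listDet_scale R C (entry W x) Row.unweighted id (entry W x) (fun _ => 1) (fun _ => 1)]
  · simp
  · rintro (⟨γ, b⟩ | ⟨κ, α, i⟩) hrow (f | ⟨β, j⟩) hcol
    · simp [Row.unweighted]
    · simp [Row.unweighted]
    · simp [Row.unweighted, entry]
    · by_cases hij : i = j
      · subst hij
        simp [Row.unweighted, entry, h κ α i hrow β hcol]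
      · simp [Row.unweighted, entry, hij]

/-- Two elimination processes that do not disturb each other. The surplus rows have no partners
among the surplus columns, so that the weights of their wave entries are immaterial. -/
theorem listDet_entry_eliminate_two {δ' : Fin 2 → ℤ} (hW : W.IsRankOneFlow (B₁ ++ B₂) F)
    (hδ : IsPivotPair 0 δ κ α β) (hα' : α' ⬝ᵥ β = 0) (hβ' : α ⬝ᵥ β' = 0) (p h q t : ℕ)
    (hδ' : IsPivotPair ((p : ℤ) • δ) δ' κ' α' β') :
    listDet ((segIoc 0 p).map (.aux κ α) ++ ((segIoc 0 q).map (.aux κ' α') ++ bosons B₁ B₂))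
        ((segIoc 0 h).map (.wave β) ++ ((segIoc 0 t).map (.wave β') ++ fermions F)) (entry W 0) =
      (-(α ⬝ᵥ β : ℤ)) ^ min p h * (-(α' ⬝ᵥ β' : ℤ)) ^ min q t *
        sgn ((p - h : ℕ) * q + (h - p : ℕ) * t + (q - t : ℕ) * ((p - h : ℕ) + B₁.length + B₂.length)
          + (p - h : ℕ) * (B₁.length + B₂.length) + (t - q : ℕ) * ((h - p : ℕ) + F.length)
          + (h - p : ℕ) * F.length) *
        listDet (bosons B₁ B₂ ++ ((segIoc h p).map (.aux κ 0) ++ (segIoc t q).map (.aux κ' 0)))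
          (fermions F ++ ((segIoc p h).map (.wave β) ++ (segIoc q t).map (.wave β')))
          (entry W ((p : ℤ) • δ + (q : ℤ) • δ')) := by
  have swap_rows := listDet_append_swap (β := Col ι) [] ((segIoc h p).map (.aux κ α))
    ((segIoc 0 q).map (.aux κ' α')) (bosons B₁ B₂)
  have swap_cols := fun R : List (Row ι) => listDet_append_swap_col R []
    ((segIoc p h).map (.wave β)) ((segIoc 0 t).map (.wave β')) (fermions F)
  have unweighted : listDet (bosons B₁ B₂ ++ ((segIoc h p).map (.aux κ α) ++
      (segIoc t q).map (.aux κ' α')))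
      (fermions F ++ ((segIoc p h).map (.wave β) ++ (segIoc q t).map (.wave β')))
      (entry W ((p : ℤ) • δ + (q : ℤ) • δ')) = _ := (listDet_map_unweighted (by
    simp only [bosons, fermions, List.mem_append, List.mem_map, mem_segIoc]
    grind)).symm
  simp only [List.nil_append] at swap_rows swap_cols
  rw [listDet_entry_eliminate hW hδ hα' hβ', swap_rows, swap_cols, zero_add,
    listDet_entry_eliminate hW hδ' hβ' hα', listDet_append_rev, listDet_append_rev_col, unweighted]
  simp only [List.map_append, bosons, List.map_map, List.length_append, List.length_map,
    length_segIoc, Int.toNat_sub, Int.toNat_natCast, sub_zero, sgn_add, fermions, Nat.cast_add]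
  simp only [Function.comp_def, Row.unweighted]
  ring_nf

end Elimination

/-! ### One determinant for all regions -/

section HookDet

open Matrix

variable {ι : Type*} (W : WaveData ι) (B₁ B₂ F : List ι)

/-- The determinant that represents the T-functions in all regions of the hook at once, with the
two sectors at equal time. The extents `p`, `q` of the two families of auxiliary rows and `t`, `h`
of the two families of waves encode the position in the hook. -/
noncomputable def hookDet (p q t h : ℕ) : ℂ :=
  listDet
    ((segIoc 0 p).map (.aux 1 ![1, 0]) ++ ((segIoc 0 q).map (.aux 0 ![1, -1]) ++ bosons B₁ B₂))
    ((segIoc 0 t).map (.wave ![1, 1]) ++ ((segIoc 0 h).map (.wave ![1, 0]) ++ fermions F))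
    (entry W 0)

/-- The sparse determinant of the T-functions, in terms of the wave data. -/
noncomputable def regionDet (x : Fin 2 → ℤ) (R S T₁ T₂ : List ℤ) : ℂ :=
  listDet (bosons B₁ B₂ ++ R.map (.aux 1 0))
    (fermions F ++ (S.map (.wave ![1, 1]) ++ (T₁.map (.wave ![1, 0]) ++ T₂.map (.wave ![0, 1]))))
    (entry W x)

variable {W B₁ B₂ F}

theorem hookDet_eq_zero_of_lt {p q t h : ℕ} (hq : h < q) : hookDet W B₁ B₂ F p q t h = 0 := by
  refine listDet_zero_row (x := .aux 0 ![1, -1] q) ?_ fun c hc => ?_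
  · simp only [List.mem_append, List.mem_map, mem_segIoc]
    exact Or.inr (Or.inl ⟨q, by omega, rfl⟩)
  · simp only [fermions, List.mem_append, List.mem_map, mem_segIoc] at hc
    rcases hc with ⟨j, -, rfl⟩ | ⟨j, hj, rfl⟩ | ⟨f, -, rfl⟩
    · simp [entry]
    · exact if_neg (by omega)
    · simp [entry]

variable (W) in
theorem entry_aux_second (x : Fin 2 → ℤ) (i : ℤ) (c : Col ι) :
    entry W x (.aux 1 ![0, 1] i) c =
      entry W x (.aux 1 ![1, 0] i) c - entry W x (.aux 0 ![1, -1] i) c := by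
  rcases c with f | ⟨β, j⟩
  · simp [entry]
  · by_cases hij : i = j <;> simp [entry, hij, vecHead, vecTail]

variable (W) in
theorem entry_wave_second (x : Fin 2 → ℤ) (r : Row ι) (j : ℤ) :
    entry W x r (.wave ![0, 1] j) =
      entry W x r (.wave ![1, 1] j) - entry W x r (.wave ![1, 0] j) := by
  rcases r with ⟨γ, b⟩ | ⟨κ, α, i⟩
  · fin_cases γ <;> simp [entry]
  · by_cases hij : i = j <;> simp [entry, hij]

theorem hookDet_eq_listDet_sectors {p q t h : ℕ} (hqp : q ≤ p) (hth : t ≤ h) :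
    hookDet W B₁ B₂ F p q t h = sgn (q + h * t) *
      listDet
        ((segIoc 0 p).map (.aux 1 ![1, 0]) ++ ((segIoc 0 q).map (.aux 1 ![0, 1]) ++ bosons B₁ B₂))
        ((segIoc 0 h).map (.wave ![1, 0]) ++ ((segIoc 0 t).map (.wave ![0, 1]) ++ fermions F))
        (entry W 0) := by
  have second_rows := fun C => listDet_replace_rows (segIoc 0 q) (.aux 0 ![1, -1]) (.aux 1 ![0, 1])
    (.aux 1 ![1, 0]) ((segIoc 0 p).map (.aux 1 ![1, 0])) (bosons B₁ B₂) (C := C)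
    (e := entry W 0) (κ := -1) (μ := fun _ => 1)
    (fun i hi => by
      simp only [List.mem_append, List.mem_map, mem_segIoc] at hi ⊢
      exact Or.inl ⟨i, by omega, rfl⟩)
    fun i _ c _ => by rw [entry_aux_second]; ring
  have second_cols := fun R => listDet_replace_cols (segIoc 0 t) (.wave ![1, 1]) (.wave ![0, 1])
    (.wave ![1, 0]) [] ((segIoc 0 h).map (.wave ![1, 0]) ++ fermions F) (R := R)
    (e := entry W 0) (κ := 1) (μ := fun _ => -1)
    (fun i hi => by
      simp only [List.mem_append, List.mem_map, mem_segIoc] at hi ⊢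
      exact Or.inr (Or.inl ⟨i, by omega, rfl⟩))
    fun i _ c _ => by rw [entry_wave_second]; ring
  have swap_cols := fun R : List (Row ι) => listDet_append_swap_col R []
    ((segIoc 0 t).map (.wave ![0, 1])) ((segIoc 0 h).map (.wave ![1, 0])) (fermions F) (entry W 0)
  simp only [List.nil_append, List.length_map, length_segIoc, sub_zero, Int.toNat_natCast,
    one_pow, one_mul, ← sgn_natCast] at second_rows second_cols swap_cols
  rw [hookDet, ← second_cols, swap_cols, ← one_mul (listDet _ _ _), ← sgn_mul_self q, mul_assoc,
    ← second_rows, sgn_add]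
  ring_nf

theorem hookDet_eq_of_le_of_le (hW : W.IsRankOneFlow (B₁ ++ B₂) F) {p q t h : ℕ} (hqp : q ≤ p)
    (hth : t ≤ h) :
    hookDet W B₁ B₂ F p q t h =
      sgn (q + h * t + min p h + min q t + (p - h : ℕ) * q + (h - p : ℕ) * t +
        (q - t : ℕ) * ((p - h : ℕ) + B₁.length + B₂.length) +
        (p - h : ℕ) * (B₁.length + B₂.length) + (t - q : ℕ) * ((h - p : ℕ) + F.length) +
        (h - p : ℕ) * F.length) *
      regionDet W B₁ B₂ F ![p, q] (segIoc h p ++ segIoc t q) [] (segIoc p h) (segIoc q t) := by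
  have eliminated := listDet_entry_eliminate_two (κ := 1) (κ' := 1) (α := ![1, 0]) (α' := ![0, 1])
    (β := ![1, 0]) (β' := ![0, 1]) (δ := ![1, 0]) (δ' := ![0, 1]) hW
    ⟨by simp, fun γ => by fin_cases γ <;> simp, fun γ => by fin_cases γ <;> simp⟩
    (by simp) (by simp) p h q t
    ⟨by simp, fun γ => by fin_cases γ <;> simp, fun γ => by fin_cases γ <;> simp⟩
  have dots : ![1, 0] ⬝ᵥ ![1, 0] = (1 : ℤ) ∧ ![0, 1] ⬝ᵥ ![0, 1] = (1 : ℤ) := by simp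
  have time : (p : ℤ) • ![(1 : ℤ), 0] + (q : ℤ) • ![0, 1] = ![(p : ℤ), (q : ℤ)] := by
    ext γ; fin_cases γ <;> simp
  rw [hookDet_eq_listDet_sectors hqp hth, eliminated, dots.1, dots.2, time, Int.cast_one,
    ← sgn_natCast, ← sgn_natCast, regionDet]
  simp only [sgn_add, List.map_append, List.map_nil, List.nil_append]
  ring

theorem hookDet_eq_of_le_left (hW : W.IsRankOneFlow (B₁ ++ B₂) F) {p q t h : ℕ} (hpq : p ≤ q)
    (hqh : q ≤ h) :
    hookDet W B₁ B₂ F p q t h =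
      sgn (min p t + q + (p - t : ℕ) * q + (t - p : ℕ) * h +
        (p - t : ℕ) * (B₁.length + B₂.length) + (h - q : ℕ) * ((t - p : ℕ) + F.length) +
        (t - p : ℕ) * F.length) *
      regionDet W B₁ B₂ F ![p, p] (segIoc t p) (segIoc p t) (segIoc q h) [] := by
  have second_rows := listDet_replace_rows (segIoc 0 p) (.aux 1 ![1, 0]) (.aux 1 ![0, 1])
    (.aux 0 ![1, -1]) [] ((segIoc 0 q).map (.aux 0 ![1, -1]) ++ bosons B₁ B₂)
    (C := (segIoc 0 t).map (.wave ![1, 1]) ++ ((segIoc 0 h).map (.wave ![1, 0]) ++ fermions F))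
    (e := entry W 0) (κ := 1) (μ := fun _ => -1)
    (fun i hi => by
      simp only [List.mem_append, List.mem_map, mem_segIoc] at hi ⊢
      exact Or.inr (Or.inl ⟨i, by omega, rfl⟩))
    fun i _ c _ => by rw [entry_aux_second]; ring
  have eliminated := listDet_entry_eliminate_two (κ := 1) (κ' := 0) (α := ![0, 1]) (α' := ![1, -1])
    (β := ![1, 1]) (β' := ![1, 0]) (δ := 1) (δ' := 0) hW
    ⟨by simp, fun γ => by fin_cases γ <;> simp, by simp⟩ (by simp) (by simp) p t q h
    ⟨by simp, by simp, by simp⟩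
  have dots : ![0, 1] ⬝ᵥ ![1, 1] = (1 : ℤ) ∧ ![1, -1] ⬝ᵥ ![1, 0] = (1 : ℤ) := by simp
  have time : (p : ℤ) • (1 : Fin 2 → ℤ) + (q : ℤ) • (0 : Fin 2 → ℤ) = ![(p : ℤ), (p : ℤ)] := by
    ext γ; fin_cases γ <;> simp
  rw [one_pow, one_mul, List.nil_append, List.nil_append] at second_rows
  rw [hookDet, ← second_rows, eliminated, dots.1, dots.2, time,
    segIoc_eq_nil (a := (h : ℤ)) (b := q) (by omega), min_eq_left hqh, Nat.sub_eq_zero_of_le hqh,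
    Int.cast_one, ← sgn_natCast, ← sgn_natCast, regionDet, ← sgn_add, ← sgn_add]
  simp [add_assoc]

theorem hookDet_eq_of_le_right (hW : W.IsRankOneFlow (B₁ ++ B₂) F) {p q t h : ℕ} (hht : h ≤ t)
    (hqh : q ≤ h) :
    hookDet W B₁ B₂ F p q t h =
      sgn (h + min p t + (p - t : ℕ) * q + (t - p : ℕ) * h +
        (p - t : ℕ) * (B₁.length + B₂.length) + (h - q : ℕ) * ((t - p : ℕ) + F.length) +
        (t - p : ℕ) * F.length) *
      regionDet W B₁ B₂ F ![p, p] (segIoc t p) (segIoc p t) [] (segIoc q h) := by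
  have second_cols := listDet_replace_cols (segIoc 0 h) (.wave ![1, 0]) (.wave ![0, 1])
    (.wave ![1, 1]) ((segIoc 0 t).map (.wave ![1, 1])) (fermions F)
    (R := (segIoc 0 p).map (.aux 1 ![1, 0]) ++
      ((segIoc 0 q).map (.aux 0 ![1, -1]) ++ bosons B₁ B₂))
    (e := entry W 0) (κ := -1) (μ := fun _ => 1)
    (fun i hi => by
      simp only [List.mem_append, List.mem_map, mem_segIoc] at hi ⊢
      exact Or.inl ⟨i, by omega, rfl⟩)
    fun i _ c _ => by rw [entry_wave_second]; ring
  have eliminated := listDet_entry_eliminate_two (κ := 1) (κ' := 0) (α := ![1, 0]) (α' := ![1, -1])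
    (β := ![1, 1]) (β' := ![0, 1]) (δ := 1) (δ' := 0) hW
    ⟨by simp, fun γ => by fin_cases γ <;> simp, by simp⟩ (by simp) (by simp) p t q h
    ⟨by simp, by simp, by simp⟩
  have dots : ![1, 0] ⬝ᵥ ![1, 1] = (1 : ℤ) ∧ ![1, -1] ⬝ᵥ ![0, 1] = (-1 : ℤ) := by simp
  have time : (p : ℤ) • (1 : Fin 2 → ℤ) + (q : ℤ) • (0 : Fin 2 → ℤ) = ![(p : ℤ), (p : ℤ)] := by
    ext γ; fin_cases γ <;> simp
  rw [length_segIoc, sub_zero, Int.toNat_natCast, ← sgn_natCast] at second_cols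
  rw [hookDet, ← one_mul (listDet _ _ _), ← sgn_mul_self h, mul_assoc, ← second_cols, eliminated,
    dots.1, dots.2, time, segIoc_eq_nil (a := (h : ℤ)) (b := q) (by omega), min_eq_left hqh,
    Nat.sub_eq_zero_of_le hqh, Int.cast_one, Int.cast_neg, Int.cast_one, neg_neg, one_pow, mul_one,
    ← sgn_natCast, regionDet, ← sgn_add, ← mul_assoc, ← sgn_add]
  simp [add_assoc]

end HookDet

/-! ### The T-functions as determinants of wave data -/

theorem prod_sgn_segIoc (a : ℤ) (n : ℕ) :
    ((segIoc a (a + n)).map fun r => sgn (r - 1 : ℤ)).prod = sgn (n * a + (n.choose 2 : ℕ)) := by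
  induction n with
  | zero => simp [segIoc_eq_nil, sgn_zero]
  | succ n ih =>
    rw [Nat.cast_succ, ← add_assoc, segIoc_succ (by omega), List.map_append, List.prod_append, ih,
      Nat.choose_succ_succ' n 1, Nat.choose_one_right]
    simp only [List.map_cons, List.map_nil, List.prod_singleton, ← sgn_add]
    push_cast
    ring_nf

/-- Reversing a family of auxiliary rows cancels the quadratic sign of the factors `(-1)^(r-1)`. -/
theorem regionDet_map_sub {ι : Type*} (W : WaveData ι) (B₁ B₂ F : List ι) (x : Fin 2 → ℤ)
    (k l y w : ℤ) (S T₁ T₂ : List ℤ) :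
    ((segIoc 0 l ++ segIoc y w).map fun r => sgn (r - 1 : ℤ)).prod *
      regionDet W B₁ B₂ F x ((segIoc 0 l ++ segIoc y w).map (k + 1 - ·)) S T₁ T₂ =
    sgn ((w - y).toNat * y) *
      regionDet W B₁ B₂ F x (segIoc (k - l) k ++ segIoc (k - w) (k - y)) S T₁ T₂ := by
  have prod_sgn : ∀ a b : ℤ, ((segIoc a b).map fun r => sgn (r - 1 : ℤ)).prod =
      sgn ((b - a).toNat * a + ((b - a).toNat.choose 2 : ℕ)) := fun a b => by
    rcases le_total a b with h | h
    · rw [← prod_sgn_segIoc, Int.toNat_sub_of_le h, add_sub_cancel]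
    · simp [segIoc_eq_nil h, Int.toNat_eq_zero.mpr (sub_nonpos.mpr h), sgn_zero]
  have reverse_left := fun L C =>
    listDet_reverse (bosons B₁ B₂) ((segIoc (k - l) k).map (.aux 1 0)) L C (entry W x)
  have reverse_right := fun K C =>
    listDet_reverse K ((segIoc (k - w) (k - y)).map (.aux 1 0)) [] C (entry W x)
  simp only [List.append_nil] at reverse_right
  unfold regionDet
  rw [List.map_append, List.prod_append, prod_sgn, prod_sgn, List.map_append, map_sub_segIoc,
    map_sub_segIoc]
  simp only [List.map_append, List.map_reverse, sub_zero, reverse_left]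
  rw [← List.append_assoc, reverse_right]
  simp only [List.length_map, length_segIoc, sub_sub_cancel, sub_sub_sub_cancel_left, sgn_add,
    List.append_assoc, Int.cast_zero, mul_zero, sgn_zero]
  grind [sgn_mul_self (l.toNat.choose 2 : ℕ), sgn_mul_self ((w - y).toNat.choose 2 : ℕ)]

section Gauge

variable {ι : Type*} [DecidableEq ι] (z : ι → ℂ) (hbar : ℂ) (Q : Finset ι → ℂ → ℂ)

/-- The twist parameters are nonzero, different for bosons and fermions, and the Q-functions
satisfy the mixed QQ-relations with `I = ∅`. -/
structure IsMixedQ (B F : List ι) : Prop where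
  ne_zero_left : ∀ b ∈ B, z b ≠ 0
  ne_zero_right : ∀ f ∈ F, z f ≠ 0
  ne : ∀ b ∈ B, ∀ f ∈ F, z b ≠ z f
  relation : ∀ b ∈ B, ∀ f ∈ F, ∀ u, (z b - z f) * (Q {b} u * Q {f} u) =
    z b * Q {b, f} (u + hbar) - z f * Q {b, f} (u - hbar)

/-- The wave data of the Q-functions with base point `v`, where one unit of time is a shift of the
spectral parameter by `2ħ`. The powers of `z` make the mixed QQ-relation a rank-one flow. -/
noncomputable def qWave (v : ℂ) : WaveData ι where
  X k b f := z b ^ k * z f ^ (-k) * Q {b, f} (v + (2 * k : ℤ) * hbar) / (z b - z f)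
  c k b := z b ^ (k - 1) * Q {b} (v + (2 * k - 1 : ℤ) * hbar)
  r k f := z f ^ (-k) * Q {f} (v + (2 * k - 1 : ℤ) * hbar)

variable {z hbar Q}

theorem IsMixedQ.isRankOneFlow {B F : List ι} (h : IsMixedQ z hbar Q B F) (v : ℂ) :
    (qWave z hbar Q v).IsRankOneFlow B F := by
  intro k b hb f hf
  have hb0 := h.ne_zero_left b hb
  have hf0 := h.ne_zero_right f hf
  have hbf := sub_ne_zero.mpr (h.ne b hb f hf)
  have relation := h.relation b hb f hf (v + (2 * k + 1 : ℤ) * hbar)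
  rw [show v + (2 * k + 1 : ℤ) * hbar + hbar = v + (2 * (k + 1) : ℤ) * hbar by push_cast; ring,
    show v + (2 * k + 1 : ℤ) * hbar - hbar = v + (2 * k : ℤ) * hbar by push_cast; ring] at relation
  simp only [qWave, add_sub_cancel_right, show 2 * (k + 1) - 1 = 2 * k + 1 by ring]
  rw [zpow_add_one₀ hb0, neg_add, zpow_add₀ hf0, zpow_neg_one]
  rw [div_add' _ _ _ hbf, div_left_inj' hbf]
  linear_combination (-z b ^ k * z f ^ (-k) * (z f)⁻¹) * relation +
    z b ^ k * z f ^ (-k) * Q {b, f} (v + (2 * k : ℤ) * hbar) * mul_inv_cancel₀ hf0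

theorem zpow_neg_mul_zpow_add {w : ℂ} (hw : w ≠ 0) (k n : ℤ) : w ^ (-k) * w ^ (k + n) = w ^ n := by
  rw [← zpow_add₀ hw, neg_add_cancel_left]

theorem qWave_X_add {b f : ι} (hb : z b ≠ 0) (hf : z f ≠ 0) (v : ℂ) (k n : ℤ) :
    (qWave z hbar Q (v + (2 * k : ℤ) * hbar)).X n b f =
      z b ^ (-k) * z f ^ k * (qWave z hbar Q v).X (k + n) b f := by
  have cancel := zpow_neg_mul_zpow_add hf (-k) (-n)
  rw [neg_neg, ← neg_add] at cancel
  simp only [qWave]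
  rw [← zpow_neg_mul_zpow_add hb k n, ← cancel,
    show v + (2 * k : ℤ) * hbar + (2 * n : ℤ) * hbar = v + (2 * (k + n) : ℤ) * hbar by
      push_cast; ring]
  ring

theorem qWave_c_add {b : ι} (hb : z b ≠ 0) (v : ℂ) (k n : ℤ) :
    (qWave z hbar Q (v + (2 * k : ℤ) * hbar)).c n b =
      z b ^ (-k) * (qWave z hbar Q v).c (k + n) b := by
  simp only [qWave]
  rw [← mul_assoc, add_sub_assoc, zpow_neg_mul_zpow_add hb]
  congr 2
  push_cast
  ring

theorem qWave_r_add {f : ι} (hf : z f ≠ 0) (v : ℂ) (k n : ℤ) :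
    (qWave z hbar Q (v + (2 * k : ℤ) * hbar)).r n f =
      z f ^ k * (qWave z hbar Q v).r (k + n) f := by
  have cancel := zpow_neg_mul_zpow_add hf (-k) (-n)
  rw [neg_neg, ← neg_add] at cancel
  simp only [qWave]
  rw [← mul_assoc, cancel]
  congr 2
  push_cast
  ring

/-- The factor that the determinants acquire when the base point is moved by one unit of time. -/
noncomputable def stepFactor (z : ι → ℂ) (B F : List ι) : ℂ := (F.map z).prod / (B.map z).prod

theorem regionDet_qWave_add {B₁ B₂ F : List ι} (hB : ∀ b ∈ B₁ ++ B₂, z b ≠ 0)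
    (hF : ∀ f ∈ F, z f ≠ 0) (v : ℂ) (k : ℤ) (x : Fin 2 → ℤ) (R S T₁ T₂ : List ℤ) :
    regionDet (qWave z hbar Q (v + (2 * k : ℤ) * hbar)) B₁ B₂ F x R S T₁ T₂ =
      stepFactor z (B₁ ++ B₂) F ^ k *
        regionDet (qWave z hbar Q v) B₁ B₂ F (fun γ => k + x γ) (R.map (k + ·)) (S.map (k + ·))
          (T₁.map (k + ·)) (T₂.map (k + ·)) := by
  have prod_map_zpow : ∀ (L : List ι) (n : ℤ),
      (L.map fun i => z i ^ n).prod = (L.map z).prod ^ n := fun L n => by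
    rw [List.prod_zpow, List.map_map, Function.comp_def]
  unfold regionDet
  rw [listDet_scale _ _ _
    (fun | .boson γ b => .boson γ b | .aux κ α i => .aux κ α (k + i))
    (fun | .fermion f => .fermion f | .wave β j => .wave β (k + j))
    (entry (qWave z hbar Q v) fun γ => k + x γ)
    (fun | .boson _ b => z b ^ (-k) | .aux _ _ _ => 1)
    (fun | .fermion f => z f ^ k | .wave _ _ => 1)]
  · simp only [bosons, fermions, List.map_append, List.map_map, Function.comp_def,
      List.prod_append, List.map_const', List.prod_replicate, one_pow, mul_one, prod_map_zpow]
    rw [stepFactor, List.map_append, List.prod_append, div_zpow, mul_zpow, zpow_neg, zpow_neg]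
    ring
  · rintro row hrow (f | ⟨β, j⟩) hcol <;> rcases List.mem_append.mp hrow with hrow | hrow
    · obtain ⟨γ, b, hb, rfl⟩ := exists_of_mem_bosons hrow
      exact qWave_X_add (hB b hb) (hF f (by simpa [fermions] using hcol)) v k (x γ)
    · obtain ⟨i, -, rfl⟩ := List.mem_map.mp hrow
      have := qWave_r_add (hbar := hbar) (Q := Q) (hF f (by simpa [fermions] using hcol)) v k i
      simpa [entry] using this
    · obtain ⟨γ, b, hb, rfl⟩ := exists_of_mem_bosons hrow
      simp only [entry, qWave_c_add (hB b hb)]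
      ring
    · obtain ⟨i, -, rfl⟩ := List.mem_map.mp hrow
      simp [entry]

theorem qWave_X_neg (u : ℂ) (ξ η : ℤ) (b f : ι) :
    (qWave z hbar Q (u + ξ * hbar)).X (-η) b f =
      sgn η * ((-z f / z b) ^ η * Q {b, f} (u + (ξ - 2 * η : ℤ) * hbar) / (z b - z f)) := by
  simp only [qWave]
  rw [show u + (ξ - 2 * η : ℤ) * hbar = u + ξ * hbar + (2 * -η : ℤ) * hbar by push_cast; ring,
    neg_div, neg_zpow_eq_sgn_mul, div_zpow, neg_neg, zpow_neg]
  linear_combination -(z f ^ η / z b ^ η *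
    Q {b, f} (u + ξ * hbar + (2 * -η : ℤ) * hbar) / (z b - z f)) * sgn_mul_self η

theorem qWave_c_apply (u : ℂ) (ξ j : ℤ) (b : ι) :
    (qWave z hbar Q (u + ξ * hbar)).c j b =
      z b ^ (j - 1) * Q {b} (u + (ξ + 2 * j - 1 : ℤ) * hbar) := by
  simp only [qWave]
  congr 2
  push_cast
  ring

theorem qWave_r_one_sub (u : ℂ) (ξ r : ℤ) (f : ι) :
    (qWave z hbar Q (u + ξ * hbar)).r (1 - r) f =
      sgn (r - 1 : ℤ) * ((-z f) ^ (r - 1) * Q {f} (u + (ξ - 2 * r + 1 : ℤ) * hbar)) := by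
  simp only [qWave]
  rw [show u + (ξ - 2 * r + 1 : ℤ) * hbar = u + ξ * hbar + (2 * (1 - r) - 1 : ℤ) * hbar by
    push_cast; ring, neg_zpow_eq_sgn_mul, neg_sub]
  linear_combination -(z f ^ (r - 1) *
    Q {f} (u + ξ * hbar + (2 * (1 - r) - 1 : ℤ) * hbar)) * sgn_mul_self (r - 1 : ℤ)

theorem DeltaT_eq_regionDet {B₁ B₂ F : List ι} {R S T₁ T₂ : List ℤ} {η : ℤ} (hη : S = [] ∨ η = 0)
    (ξ : ℤ) (u : ℂ) :
    DeltaT z hbar Q B₁ B₂ F R S T₁ T₂ η ξ u =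
      sgn (η * (B₂.length + T₂.length)) * (R.map fun r => sgn (r - 1 : ℤ)).prod *
        regionDet (qWave z hbar Q (u + ξ * hbar)) B₁ B₂ F ![0, -η] (R.map (1 - ·)) S T₁ T₂ := by
  unfold DeltaT regionDet
  rw [listDet_scale _ _ _
    (fun | .inl b => .boson 0 b | .inr (.inl b) => .boson 1 b | .inr (.inr r) => .aux 1 0 (1 - r))
    (fun | .inl f => .fermion f | .inr (.inl j) => .wave ![1, 1] j
         | .inr (.inr (.inl j)) => .wave ![1, 0] j | .inr (.inr (.inr j)) => .wave ![0, 1] j)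
    (entry (qWave z hbar Q (u + ξ * hbar)) ![0, -η])
    (fun | .inl _ => 1 | .inr (.inl _) => sgn η | .inr (.inr r) => sgn (r - 1 : ℤ))
    (fun | .inr (.inr (.inr _)) => sgn η | _ => 1)]
  · simp only [bosons, fermions, List.map_append, List.map_map, Function.comp_def,
      List.prod_append, List.map_const', List.prod_replicate, one_pow, one_mul,
      List.append_assoc, mul_add, sgn_add, sgn_pow]
    ring
  · simp only [List.mem_append, List.mem_map]
    rintro _ ((⟨b, -, rfl⟩ | ⟨b, -, rfl⟩) | ⟨r, -, rfl⟩)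
      _ (((⟨f, -, rfl⟩ | ⟨j, hj, rfl⟩) | ⟨j, -, rfl⟩) | ⟨j, -, rfl⟩)
    case inl.inr.inl.inl.inl =>
      simp [entry, qWave_X_neg, ← mul_assoc, sgn_mul_self, mul_div_assoc]
    case inl.inr.inl.inl.inr =>
      rcases hη with rfl | rfl
      · simp at hj
      · simp [entry, sgn_zero, qWave_c_apply]
    case inr.inl.inl.inl => simp [entry, qWave_r_one_sub, ← mul_assoc, sgn_mul_self]
    case inl.inl.inl.inl.inl => simp [entry, qWave]
    all_goals simp [entry, qWave_c_apply, ← mul_assoc, sgn_mul_self]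

end Gauge

section Representation

variable {ι : Type*} [DecidableEq ι] {z : ι → ℂ} {hbar : ℂ} {Q : Finset ι → ℂ → ℂ}

theorem DeltaT_eq_regionDet_translate {B₁ B₂ F : List ι} (hB : ∀ b ∈ B₁ ++ B₂, z b ≠ 0)
    (hF : ∀ f ∈ F, z f ≠ 0) {S : List ℤ} {η : ℤ} (hη : S = [] ∨ η = 0) {u v : ℂ} {ξ k : ℤ}
    (hu : u + ξ * hbar = v + (2 * k : ℤ) * hbar) (T₁ T₂ : List ℤ) (l y w : ℤ) :
    DeltaT z hbar Q B₁ B₂ F (segIoc 0 l ++ segIoc y w) S T₁ T₂ η ξ u =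
      sgn (η * (B₂.length + T₂.length) + (w - y).toNat * y) *
        stepFactor z (B₁ ++ B₂) F ^ k *
          regionDet (qWave z hbar Q v) B₁ B₂ F ![k, k - η] (segIoc (k - l) k ++
            segIoc (k - w) (k - y)) (S.map (k + ·)) (T₁.map (k + ·)) (T₂.map (k + ·)) := by
  have times : (fun γ => k + ![0, -η] γ) = ![k, k - η] := by
    funext γ
    fin_cases γ <;> simp [sub_eq_add_neg]
  rw [DeltaT_eq_regionDet hη, hu, regionDet_qWave_add hB hF, List.map_map, times, sgn_add]
  simp only [Function.comp_def, ← add_sub_assoc]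
  linear_combination sgn (η * (B₂.length + T₂.length)) *
    stepFactor z (B₁ ++ B₂) F ^ k *
      regionDet_map_sub (qWave z hbar Q v) B₁ B₂ F ![k, k - η] k l y w (S.map (k + ·))
        (T₁.map (k + ·)) (T₂.map (k + ·))

/-- The endpoints `p`, `q`, `t`, `h` of `hookDet` that correspond to the point `(a, s)` of the hook
with the corners `η₁` and `η₂`. They are determined up to a common translation. -/
structure IsPosition (η₁ η₂ a s : ℤ) (p q t h : ℕ) : Prop where
  vertical : a = h - q
  horizontal : s = h - p - η₁
  square : p + q + η₁ + η₂ = t + h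

theorem exists_isPosition (η₁ η₂ a s : ℤ) : ∃ p q t h, IsPosition η₁ η₂ a s p q t h := by
  set N : ℤ := |a| + |s| + |η₁| + |η₂|
  refine ⟨(N - s - η₁).toNat, (N - a).toNat, (N - a - s + η₂).toNat, N.toNat, ⟨?_, ?_, ?_⟩⟩ <;>
  · have := abs_le.mp (le_refl |a|)
    have := abs_le.mp (le_refl |s|)
    have := abs_le.mp (le_refl |η₁|)
    have := abs_le.mp (le_refl |η₂|)
    omega

theorem IsPosition.relations {η₁ η₂ a s : ℤ} {p q t h : ℕ} (hpos : IsPosition η₁ η₂ a s p q t h) :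
    s + η₁ = h - p ∧ -s - η₁ = p - h ∧ a - s - η₁ = p - q ∧ s - a + η₁ = q - p ∧
      a - η₁ - η₂ = p - t ∧ -a + η₁ + η₂ = t - p := by
  obtain ⟨vertical, horizontal, square⟩ := hpos
  omega

theorem IsPosition.parity_of_le {m₁ n₁ : ℕ} {η₂ a s : ℤ} {p q t h : ℕ}
    (hpos : IsPosition (m₁ - n₁) η₂ a s p q t h) (m₂ n₂ : ℕ) (hph : p ≤ h) :
    (((h : ℤ) - p) * (s + n₂) : ℤ) =
      ((p - h : ℕ) * m₂ + (h - p : ℕ) * (1 + m₁ + n₁ + n₂) : ZMod 2) := by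
  rw [Nat.sub_eq_zero_of_le hph, hpos.horizontal, Nat.cast_sub hph]
  push_cast
  generalize (h : ZMod 2) = h, (p : ZMod 2) = p, (m₁ : ZMod 2) = m₁, (m₂ : ZMod 2) = m₂,
    (n₁ : ZMod 2) = n₁, (n₂ : ZMod 2) = n₂
  decide +revert

/-- The factor `(-1)^θ / D(B|F)`. -/
noncomputable def prefactor (z : ι → ℂ) (B₁ B₂ F₁ F₂ : List ι) : ℂ :=
  (-1) ^ (((B₁.length : ℤ) + B₂.length) * (B₁.length + B₂.length - 1) / 2 +
    ((F₁.length : ℤ) + F₂.length) * (F₁.length + F₂.length - 1) / 2) /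
      Dden z (B₁ ++ B₂) (F₁ ++ F₂)

variable {B₁ B₂ F₁ F₂ : List ι} {T : ℤ → ℤ → ℂ → ℂ} {a s : ℤ} {p q t h : ℕ}

theorem IsT.eq_of_le_of_le (hT : IsT z hbar Q B₁ B₂ F₁ F₂ T)
    (hpos : IsPosition (B₁.length - F₁.length) (B₂.length - F₂.length) a s p q t h)
    (hqp : q ≤ p) (hth : t ≤ h) (hqh : q ≤ h) (u : ℂ) :
    T a s u = sgn ((p - h : ℕ) * B₂.length +
        (h - p : ℕ) * (1 + B₁.length + F₁.length + F₂.length)) * prefactor z B₁ B₂ F₁ F₂ *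
      DeltaT z hbar Q B₁ B₂ (F₁ ++ F₂) (segIoc 0 (p - h) ++ segIoc (p - q) (p - t)) []
        (segIoc 0 (h - p)) (segIoc (q - p) (t - p)) (p - q)
        (p - q - (B₂.length - F₂.length)) u := by
  obtain ⟨e₁, e₂, e₃, e₄, e₅, e₆⟩ := hpos.relations
  have sign_of_le := hpos.parity_of_le B₂.length F₂.length
  obtain ⟨_, _, _⟩ := hpos
  obtain ⟨-, h₁, h₂, h₃, h₄, -, -, -, -⟩ := hT
  have sign_of_ge : h ≤ p → (((h : ℤ) - p) * B₂.length : ℤ) = ((p - h : ℕ) * B₂.length +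
      (h - p : ℕ) * (1 + B₁.length + F₁.length + F₂.length) : ZMod 2) := fun hhp => by
    rw [Nat.sub_eq_zero_of_le hhp, Nat.cast_sub hhp]
    push_cast
    grind
  rcases le_total p h with hph | hhp <;> rcases le_total q t with hqt | htq
  · rw [h₁ a s (by omega) (by omega) (by omega) (by omega) (by omega), zpow_add₀ (by simp),
      ← sgn_intCast, e₁, sign_of_le hph, segIoc_eq_nil (a := 0) (b := p - h) (by omega),
      segIoc_eq_nil (a := p - q) (by omega)]
    simp only [prefactor, segIoc, e₃, e₄, e₆, zero_add, List.nil_append]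
    ring
  · rw [h₂ a s (by omega) (by omega) (by omega) (by omega) (by omega), zpow_add₀ (by simp),
      ← sgn_intCast, e₁, sign_of_le hph, segIoc_eq_nil (a := 0) (b := p - h) (by omega),
      segIoc_eq_nil (a := q - p) (by omega)]
    simp only [prefactor, segIoc, e₃, e₅, zero_add, List.nil_append]
    ring
  · rw [h₃ a s (by omega) (by omega) (by omega) (by omega) (by omega), zpow_add₀ (by simp),
      ← sgn_intCast, e₁, sign_of_ge hhp, segIoc_eq_nil (a := 0) (b := h - p) (by omega),
      segIoc_eq_nil (a := p - q) (by omega)]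
    simp only [prefactor, segIoc, e₂, e₃, e₄, e₆, zero_add, List.append_nil]
    ring
  · rw [h₄ a s (by omega) (by omega) (by omega) (by omega) (by omega), zpow_add₀ (by simp),
      ← sgn_intCast, e₁, sign_of_ge hhp, segIoc_eq_nil (a := 0) (b := h - p) (by omega),
      segIoc_eq_nil (a := q - p) (by omega)]
    simp only [prefactor, segIoc, e₂, e₃, e₅, zero_add]
    ring

theorem IsT.eq_of_le_left (hT : IsT z hbar Q B₁ B₂ F₁ F₂ T)
    (hpos : IsPosition (B₁.length - F₁.length) (B₂.length - F₂.length) a s p q t h)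
    (hpq : p ≤ q) (u : ℂ) :
    T a s u = sgn ((h + q) * (B₂.length + (p - t : ℕ))) * prefactor z B₁ B₂ F₁ F₂ *
      DeltaT z hbar Q B₁ B₂ (F₁ ++ F₂) (segIoc 0 (p - t)) (segIoc 0 (t - p))
        (segIoc (q - p) (h - p)) [] 0 (p - q - (B₂.length - F₂.length)) u := by
  obtain ⟨e₁, _, e₃, e₄, e₅, e₆⟩ := hpos.relations
  obtain ⟨vertical, _, square⟩ := hpos
  obtain ⟨-, -, -, -, -, h₅, h₆, -, -⟩ := hT
  rcases le_total p t with hpt | htp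
  · have sign : (B₂.length * a : ℤ) = ((h + q) * (B₂.length + (p - t : ℕ)) : ZMod 2) := by
      rw [Nat.sub_eq_zero_of_le hpt, vertical]
      push_cast
      grind
    rw [h₅ a s (by omega) (by omega), zpow_add₀ (by simp), ← sgn_intCast, sign,
      segIoc_eq_nil (a := 0) (b := p - t) (by omega)]
    simp only [prefactor, segIoc, e₁, e₃, e₄, e₆, zero_add]
    ring
  · have sign : (a * (B₁.length - F₁.length + F₂.length + 1) : ℤ) =
        ((h + q) * (B₂.length + (p - t : ℕ)) : ZMod 2) := by
      have parity := congrArg (Int.cast : ℤ → ZMod 2) square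
      rw [Nat.cast_sub htp, vertical]
      push_cast at parity ⊢
      generalize (h : ZMod 2) = h, (q : ZMod 2) = q, (p : ZMod 2) = p, (t : ZMod 2) = t,
        (B₁.length : ZMod 2) = m₁, (B₂.length : ZMod 2) = m₂, (F₁.length : ZMod 2) = n₁,
        (F₂.length : ZMod 2) = n₂ at parity ⊢
      decide +revert
    rw [h₆ a s (by omega) (by omega), zpow_add₀ (by simp), ← sgn_intCast, sign,
      segIoc_eq_nil (a := 0) (b := t - p) (by omega)]
    simp only [prefactor, segIoc, e₁, e₃, e₄, e₅, zero_add]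
    ring

theorem IsT.eq_of_le_right (hT : IsT z hbar Q B₁ B₂ F₁ F₂ T)
    (hpos : IsPosition (B₁.length - F₁.length) (B₂.length - F₂.length) a s p q t h)
    (hht : h ≤ t) (u : ℂ) :
    T a s u = sgn ((h + q) * (B₂.length + 1 + (p - t : ℕ))) * prefactor z B₁ B₂ F₁ F₂ *
      DeltaT z hbar Q B₁ B₂ (F₁ ++ F₂) (segIoc 0 (p - t)) (segIoc 0 (t - p)) []
        (segIoc (q - p) (h - p)) 0 (p - q - (B₂.length - F₂.length)) u := by
  obtain ⟨e₁, _, e₃, e₄, e₅, e₆⟩ := hpos.relations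
  obtain ⟨vertical, _, square⟩ := hpos
  obtain ⟨-, -, -, -, -, -, -, h₇, h₈⟩ := hT
  rcases le_total p t with hpt | htp
  · have sign : (a * (B₂.length + 1) : ℤ) =
        ((h + q) * (B₂.length + 1 + (p - t : ℕ)) : ZMod 2) := by
      rw [Nat.sub_eq_zero_of_le hpt, vertical]
      push_cast
      grind
    rw [h₇ a s (by omega) (by omega), zpow_add₀ (by simp), ← sgn_intCast, sign,
      segIoc_eq_nil (a := 0) (b := p - t) (by omega)]
    simp only [prefactor, segIoc, e₁, e₃, e₄, e₆, zero_add]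
    ring
  · have sign : (a * (B₁.length - F₁.length + F₂.length) : ℤ) =
        ((h + q) * (B₂.length + 1 + (p - t : ℕ)) : ZMod 2) := by
      have parity := congrArg (Int.cast : ℤ → ZMod 2) square
      rw [Nat.cast_sub htp, vertical]
      push_cast at parity ⊢
      generalize (h : ZMod 2) = h, (q : ZMod 2) = q, (p : ZMod 2) = p, (t : ZMod 2) = t,
        (B₁.length : ZMod 2) = m₁, (B₂.length : ZMod 2) = m₂, (F₁.length : ZMod 2) = n₁,
        (F₂.length : ZMod 2) = n₂ at parity ⊢
      decide +revert
    rw [h₈ a s (by omega) (by omega), zpow_add₀ (by simp), ← sgn_intCast, sign,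
      segIoc_eq_nil (a := 0) (b := t - p) (by omega)]
    simp only [prefactor, segIoc, e₁, e₃, e₄, e₅, zero_add]
    ring

end Representation

/-- The parity of the sign between the T-functions and `hookDet`. -/
def hookParity (m₁ m₂ n₁ n₂ p q h : ZMod 2) : ZMod 2 :=
  p + h * q + m₂ * h + (m₁ + n₁ + n₂) * q + (n₁ + n₂) * (1 + m₁ + m₂)

section Parity

variable {ι : Type*} {B₁ B₂ F₁ F₂ : List ι} {a s : ℤ} {p q t h : ℕ}

theorem IsPosition.parity_middle
    (hpos : IsPosition (B₁.length - F₁.length) (B₂.length - F₂.length) a s p q t h) :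
    ((p - h : ℕ) * B₂.length + (h - p : ℕ) * (1 + B₁.length + F₁.length + F₂.length) +
      ((p - q : ℤ) * (B₂.length + (t - q : ℕ)) + (q - t : ℕ) * (p - q : ℤ)) : ZMod 2) =
    hookParity B₁.length B₂.length F₁.length F₂.length p q h +
      (q + h * t + min p h + min q t + (p - h : ℕ) * q + (h - p : ℕ) * t +
        (q - t : ℕ) * ((p - h : ℕ) + B₁.length + B₂.length) +
        (p - h : ℕ) * (B₁.length + B₂.length) + (t - q : ℕ) * ((h - p : ℕ) + (F₁ ++ F₂).length) +
        (h - p : ℕ) * (F₁ ++ F₂).length) := by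
  have parity := congrArg (Int.cast : ℤ → ZMod 2) hpos.square
  rw [hookParity, List.length_append]
  rcases le_total p h with hph | hhp <;> rcases le_total q t with hqt | htq <;>
  simp only [*, Nat.sub_eq_zero_of_le, Nat.cast_sub, min_eq_left, min_eq_right] <;>
  push_cast at parity ⊢ <;>
  generalize (h : ZMod 2) = h, (p : ZMod 2) = p, (q : ZMod 2) = q, (t : ZMod 2) = t,
    (B₁.length : ZMod 2) = m₁, (B₂.length : ZMod 2) = m₂, (F₁.length : ZMod 2) = n₁,
    (F₂.length : ZMod 2) = n₂ at parity ⊢ <;>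
  clear * - parity <;>
  decide +revert

theorem IsPosition.parity_left
    (hpos : IsPosition (B₁.length - F₁.length) (B₂.length - F₂.length) a s p q t h)
    (hqh : q ≤ h) :
    ((h + q) * (B₂.length + (p - t : ℕ)) : ZMod 2) =
    hookParity B₁.length B₂.length F₁.length F₂.length p q h +
      ((min p t : ℕ) + q + (p - t : ℕ) * q + (t - p : ℕ) * h +
        (p - t : ℕ) * (B₁.length + B₂.length) +
        (h - q : ℕ) * ((t - p : ℕ) + (F₁ ++ F₂).length) +
        (t - p : ℕ) * (F₁ ++ F₂).length) := by
  have parity := congrArg (Int.cast : ℤ → ZMod 2) hpos.square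
  rw [hookParity, List.length_append]
  rcases le_total p t with hpt | htp <;>
  simp only [*, Nat.sub_eq_zero_of_le, Nat.cast_sub, min_eq_left, min_eq_right] <;>
  push_cast at parity ⊢ <;>
  generalize (h : ZMod 2) = h, (p : ZMod 2) = p, (q : ZMod 2) = q, (t : ZMod 2) = t,
    (B₁.length : ZMod 2) = m₁, (B₂.length : ZMod 2) = m₂, (F₁.length : ZMod 2) = n₁,
    (F₂.length : ZMod 2) = n₂ at parity ⊢ <;>
  clear * - parity <;>
  decide +revert

theorem IsPosition.parity_right
    (hpos : IsPosition (B₁.length - F₁.length) (B₂.length - F₂.length) a s p q t h)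
    (hqh : q ≤ h) :
    ((h + q) * (B₂.length + 1 + (p - t : ℕ)) : ZMod 2) =
    hookParity B₁.length B₂.length F₁.length F₂.length p q h +
      (h + (min p t : ℕ) + (p - t : ℕ) * q + (t - p : ℕ) * h +
        (p - t : ℕ) * (B₁.length + B₂.length) +
        (h - q : ℕ) * ((t - p : ℕ) + (F₁ ++ F₂).length) +
        (t - p : ℕ) * (F₁ ++ F₂).length) := by
  have := hpos.parity_left hqh
  grind

end Parity

section Representation

variable {ι : Type*} [DecidableEq ι] {z : ι → ℂ} {hbar : ℂ} {Q : Finset ι → ℂ → ℂ}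
  {B₁ B₂ F₁ F₂ : List ι} {T : ℤ → ℤ → ℂ → ℂ} {a s : ℤ} {p q t h : ℕ} {u v : ℂ}

theorem mul_sgn_mul_of_eq {x₁ x₂ x₃ x₄ : ZMod 2} (hx : x₁ + x₂ = x₃ + x₄) (c V R : ℂ) :
    sgn x₁ * c * (sgn x₂ * V * R) = c * sgn x₃ * V * (sgn x₄ * R) := by
  have := congrArg sgn hx
  rw [sgn_add, sgn_add] at this
  linear_combination c * V * R * this

theorem IsT.eq_hookDet (hT : IsT z hbar Q B₁ B₂ F₁ F₂ T)
    (hQ : IsMixedQ z hbar Q (B₁ ++ B₂) (F₁ ++ F₂))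
    (hpos : IsPosition (B₁.length - F₁.length) (B₂.length - F₂.length) a s p q t h)
    (hu : u = v + (p + q + (B₂.length - F₂.length) : ℤ) * hbar) :
    T a s u = prefactor z B₁ B₂ F₁ F₂ *
      sgn (hookParity B₁.length B₂.length F₁.length F₂.length p q h) *
      stepFactor z (B₁ ++ B₂) (F₁ ++ F₂) ^ (p : ℤ) *
      hookDet (qWave z hbar Q v) B₁ B₂ (F₁ ++ F₂) p q t h := by
  have hW := hQ.isRankOneFlow v
  have hu' : u + (p - q - (B₂.length - F₂.length) : ℤ) * hbar = v + (2 * p : ℤ) * hbar := by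
    rw [hu]
    push_cast
    ring
  rcases lt_or_ge h q with hhq | hqh
  · rw [hookDet_eq_zero_of_lt hhq, mul_zero]
    exact hT.1 a s (Or.inl (by have := hpos.vertical; omega)) u
  have no_rows : segIoc 0 (p - t : ℤ) = segIoc 0 (p - t : ℤ) ++ segIoc 0 0 := by
    rw [segIoc_eq_nil (le_refl 0), List.append_nil]
  have no_cols : segIoc (p : ℤ) p = [] := segIoc_eq_nil (le_refl _)
  rcases le_total q p with hqp | hpq
  · rcases le_total t h with hth | hht
    · rw [hT.eq_of_le_of_le hpos hqp hth hqh, DeltaT_eq_regionDet_translate hQ.ne_zero_left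
        hQ.ne_zero_right (Or.inl rfl) hu', hookDet_eq_of_le_of_le hW hqp hth]
      simp only [length_segIoc, map_add_segIoc, sub_sub_cancel, sub_sub_sub_cancel_left, add_zero,
        sub_sub_sub_cancel_right, add_sub_cancel, Int.toNat_sub, List.map_nil]
      exact mul_sgn_mul_of_eq hpos.parity_middle _ _ _
    · rw [hT.eq_of_le_right hpos hht, no_rows, DeltaT_eq_regionDet_translate hQ.ne_zero_left
        hQ.ne_zero_right (Or.inr rfl) hu', hookDet_eq_of_le_right hW hht hqh]
      simp only [map_add_segIoc, sub_sub_cancel, sub_zero, add_zero,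
        add_sub_cancel, no_cols, List.append_nil, Int.cast_zero, zero_mul, mul_zero]
      exact mul_sgn_mul_of_eq ((add_zero _).trans (hpos.parity_right hqh)) _ _ _
  · rw [hT.eq_of_le_left hpos hpq, no_rows, DeltaT_eq_regionDet_translate hQ.ne_zero_left
        hQ.ne_zero_right (Or.inr rfl) hu', hookDet_eq_of_le_left hW hpq hqh]
    simp only [map_add_segIoc, sub_sub_cancel, sub_zero, add_zero,
      add_sub_cancel, no_cols, List.append_nil, Int.cast_zero, zero_mul, mul_zero]
    exact mul_sgn_mul_of_eq ((add_zero _).trans (hpos.parity_left hqh)) _ _ _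

end Representation

/-! ### Plücker relations for the hook determinant -/

/-- The Plücker relations between determinants `D` and `D'` of hook type, where `D'` has one row
less or one column more than `D`, belonging to the first sector. -/
structure IsPlueckerPairLeft (D D' : ℕ → ℕ → ℕ → ℕ → ℂ) : Prop where
  vertical : ∀ p q t h, D' (p + 1) q t h * D p (q + 1) (t + 1) h
    - D' p (q + 1) t h * D (p + 1) q (t + 1) h + D p q t h * D' (p + 1) (q + 1) (t + 1) h = 0
  horizontal : ∀ p q t h, D' (p + 1) q t h * D p (q + 1) t (h + 1)
    - D' p (q + 1) t h * D (p + 1) q t (h + 1) + D p q t h * D' (p + 1) (q + 1) t (h + 1) = 0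

/-- The Plücker relations between determinants `D` and `D'` of hook type, where `D'` has one row
less or one column more than `D`, belonging to the second sector. -/
structure IsPlueckerPairRight (D D' : ℕ → ℕ → ℕ → ℕ → ℂ) : Prop where
  vertical : ∀ p q t h, D' p q t h * D (p + 1) q (t + 1) (h + 1)
    - D' (p + 1) q (t + 1) h * D p q t (h + 1) + D' (p + 1) q t (h + 1) * D p q (t + 1) h = 0
  horizontal : ∀ p q t h, D' p q t h * D p (q + 1) (t + 1) (h + 1)
    - D' p (q + 1) (t + 1) h * D p q t (h + 1) + D' p (q + 1) t (h + 1) * D p q (t + 1) h = 0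

section HookDetPluecker

variable {ι : Type*} [DecidableEq ι] (W : WaveData ι) {B₁ B₂ F₁ F₂ : List ι} {i : ι}

theorem isPlueckerPairLeft_hookDet_erase_boson (hi : i ∈ B₁) (B₂ F : List ι) :
    IsPlueckerPairLeft (hookDet W B₁ B₂ F) (hookDet W (B₁.erase i) B₂ F) := by
  obtain ⟨K, L, -, eq, erase_eq⟩ := List.exists_erase_eq hi
  rw [erase_eq, eq]
  constructor <;> intro p q t h <;>
    simp only [hookDet, Nat.cast_succ, segIoc_succ (Int.natCast_nonneg _), bosons, List.map_append,
      List.map_cons, List.map_nil, List.append_assoc, List.cons_append, List.nil_append]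
  · exact pluecker_three_rows ((segIoc 0 p).map (Row.aux 1 ![1, 0]))
      ((segIoc 0 q).map (Row.aux 0 ![1, -1])) (K.map (Row.boson 0)) _ _ _ _
      ((segIoc 0 t).map (Col.wave ![1, 1])) _ _ _
  · have := pluecker_three_rows ((segIoc 0 p).map (Row.aux 1 ![1, 0]))
      ((segIoc 0 q).map (Row.aux 0 ![1, -1])) (K.map (Row.boson 0))
      (L.map (Row.boson 0) ++ B₂.map (Row.boson 1)) (.aux 1 ![1, 0] (p + 1))
      (.aux 0 ![1, -1] (q + 1)) (.boson 0 i)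
      ((segIoc 0 t).map (Col.wave ![1, 1]) ++ (segIoc 0 h).map (Col.wave ![1, 0]))
      (fermions F) (.wave ![1, 0] (h + 1)) (entry W 0)
    simp only [List.append_assoc] at this
    exact this

theorem isPlueckerPairLeft_hookDet_erase_fermion (B₁ B₂ : List ι) (hi : i ∈ F₁) (F₂ : List ι) :
    IsPlueckerPairLeft (hookDet W B₁ B₂ (F₁.erase i ++ F₂)) (hookDet W B₁ B₂ (F₁ ++ F₂)) := by
  obtain ⟨K, L, -, eq, erase_eq⟩ := List.exists_erase_eq hi
  rw [erase_eq, eq]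
  constructor <;> intro p q t h <;>
    simp only [hookDet, Nat.cast_succ, segIoc_succ (Int.natCast_nonneg _), fermions,
      List.map_append, List.map_cons, List.map_nil, List.append_assoc, List.cons_append,
      List.nil_append]
  · have := pluecker_two_rows_cols ((segIoc 0 p).map (Row.aux 1 ![1, 0]))
      ((segIoc 0 q).map (Row.aux 0 ![1, -1])) (bosons B₁ B₂) (.aux 1 ![1, 0] (p + 1))
      (.aux 0 ![1, -1] (q + 1)) ((segIoc 0 t).map (Col.wave ![1, 1]))
      ((segIoc 0 h).map (Col.wave ![1, 0]) ++ K.map Col.fermion)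
      (L.map Col.fermion ++ F₂.map Col.fermion) (.wave ![1, 1] (t + 1)) (.fermion i) (entry W 0)
    simp only [List.append_assoc] at this
    linear_combination this
  · have := pluecker_two_rows_cols ((segIoc 0 p).map (Row.aux 1 ![1, 0]))
      ((segIoc 0 q).map (Row.aux 0 ![1, -1])) (bosons B₁ B₂) (.aux 1 ![1, 0] (p + 1))
      (.aux 0 ![1, -1] (q + 1))
      ((segIoc 0 t).map (Col.wave ![1, 1]) ++ (segIoc 0 h).map (Col.wave ![1, 0]))
      (K.map Col.fermion) (L.map Col.fermion ++ F₂.map Col.fermion) (.wave ![1, 0] (h + 1))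
      (.fermion i) (entry W 0)
    simp only [List.append_assoc] at this
    linear_combination this

theorem isPlueckerPairRight_hookDet_erase_boson (B₁ : List ι) (hi : i ∈ B₂) (F : List ι) :
    IsPlueckerPairRight (hookDet W B₁ B₂ F) (hookDet W B₁ (B₂.erase i) F) := by
  obtain ⟨K, L, -, eq, erase_eq⟩ := List.exists_erase_eq hi
  rw [erase_eq, eq]
  constructor <;> intro p q t h <;>
    simp only [hookDet, Nat.cast_succ, segIoc_succ (Int.natCast_nonneg _), bosons, List.map_append,
      List.map_cons, List.map_nil, List.append_assoc, List.cons_append, List.nil_append]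
  · have := pluecker_two_rows_cols ((segIoc 0 p).map (Row.aux 1 ![1, 0]))
      ((segIoc 0 q).map (Row.aux 0 ![1, -1]) ++ (B₁.map (Row.boson 0) ++ K.map (Row.boson 1)))
      (L.map (Row.boson 1)) (.aux 1 ![1, 0] (p + 1)) (.boson 1 i)
      ((segIoc 0 t).map (Col.wave ![1, 1])) ((segIoc 0 h).map (Col.wave ![1, 0])) (fermions F)
      (.wave ![1, 1] (t + 1)) (.wave ![1, 0] (h + 1)) (entry W 0)
    simp only [List.append_assoc] at this
    linear_combination this
  · have := pluecker_two_rows_cols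
      ((segIoc 0 p).map (Row.aux 1 ![1, 0]) ++ (segIoc 0 q).map (Row.aux 0 ![1, -1]))
      (B₁.map (Row.boson 0) ++ K.map (Row.boson 1)) (L.map (Row.boson 1))
      (.aux 0 ![1, -1] (q + 1)) (.boson 1 i)
      ((segIoc 0 t).map (Col.wave ![1, 1])) ((segIoc 0 h).map (Col.wave ![1, 0])) (fermions F)
      (.wave ![1, 1] (t + 1)) (.wave ![1, 0] (h + 1)) (entry W 0)
    simp only [List.append_assoc] at this
    linear_combination this

theorem isPlueckerPairRight_hookDet_erase_fermion (B₁ B₂ F₁ : List ι) (hi : i ∈ F₂) :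
    IsPlueckerPairRight (hookDet W B₁ B₂ (F₁ ++ F₂.erase i)) (hookDet W B₁ B₂ (F₁ ++ F₂)) := by
  obtain ⟨K, L, -, eq, erase_eq⟩ := List.exists_erase_eq hi
  rw [erase_eq, eq]
  constructor <;> intro p q t h <;>
    simp only [hookDet, Nat.cast_succ, segIoc_succ (Int.natCast_nonneg _), fermions,
      List.map_append, List.map_cons, List.map_nil, List.append_assoc, List.cons_append,
      List.nil_append]
  · have := pluecker_three_cols ((segIoc 0 p).map (Row.aux 1 ![1, 0]))
      ((segIoc 0 q).map (Row.aux 0 ![1, -1]) ++ bosons B₁ B₂) (.aux 1 ![1, 0] (p + 1))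
      ((segIoc 0 t).map (Col.wave ![1, 1])) ((segIoc 0 h).map (Col.wave ![1, 0]))
      (F₁.map Col.fermion ++ K.map Col.fermion) (L.map Col.fermion)
      (.wave ![1, 1] (t + 1)) (.wave ![1, 0] (h + 1)) (.fermion i) (entry W 0)
    simp only [List.append_assoc] at this
    linear_combination this
  · have := pluecker_three_cols
      ((segIoc 0 p).map (Row.aux 1 ![1, 0]) ++ (segIoc 0 q).map (Row.aux 0 ![1, -1]))
      (bosons B₁ B₂) (.aux 0 ![1, -1] (q + 1))
      ((segIoc 0 t).map (Col.wave ![1, 1])) ((segIoc 0 h).map (Col.wave ![1, 0]))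
      (F₁.map Col.fermion ++ K.map Col.fermion) (L.map Col.fermion)
      (.wave ![1, 1] (t + 1)) (.wave ![1, 0] (h + 1)) (.fermion i) (entry W 0)
    simp only [List.append_assoc] at this
    linear_combination this

end HookDetPluecker

/-! ### Bäcklund transformations -/

/-- The parity of the sign in the gauge factor relating the T-functions to `hookDet`, up to a
constant. -/
def gaugeParity (α β : ZMod 2) (p q h : ℕ) : ZMod 2 := p + h * q + α * q + β * h

/-- The function `T` on the lattice is a gauge transform of determinants `D v` of hook type, where
`v` is the base point of the spectral parameter. The gauge is given by the parities `α`, `β`, the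
constant `C` and the step factor `σ`. -/
def HasHookExpansion (hbar : ℂ) (T : ℤ → ℤ → ℂ → ℂ) (η₁ η₂ : ℤ) (α β : ZMod 2) (C σ : ℂ)
    (D : ℂ → ℕ → ℕ → ℕ → ℕ → ℂ) : Prop :=
  ∀ v (p q t h : ℕ) ⦃a s u⦄, IsPosition η₁ η₂ a s p q t h →
    u = v + (p + q + η₂ : ℤ) * hbar →
    T a s u = C * sgn (gaugeParity α β p q h) * σ ^ p * D v p q t h

theorem sgn_gaugeParity_mul {α β α' β' ε : ZMod 2} {p₁ p₂ p₃ p₄ q₁ q₂ q₃ q₄ h₁ h₂ h₃ h₄ : ℕ}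
    (heq : gaugeParity α β p₁ q₁ h₁ + gaugeParity α' β' p₂ q₂ h₂ =
      gaugeParity α β p₃ q₃ h₃ + gaugeParity α' β' p₄ q₄ h₄ + ε) :
    sgn (gaugeParity α β p₁ q₁ h₁) * sgn (gaugeParity α' β' p₂ q₂ h₂) =
      sgn ε * (sgn (gaugeParity α β p₃ q₃ h₃) * sgn (gaugeParity α' β' p₄ q₄ h₄)) := by
  rw [← sgn_add, heq, sgn_add, sgn_add, mul_comm]

section HasHookExpansion

variable {hbar : ℂ} {X Y : ℤ → ℤ → ℂ → ℂ} {η₁ η₂ η₁' η₂' : ℤ} {α β α' β' ε : ZMod 2}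
  {C C' σ w : ℂ} {D D' : ℂ → ℕ → ℕ → ℕ → ℕ → ℂ}

theorem HasHookExpansion.eq (hX : HasHookExpansion hbar X η₁ η₂ α β C σ D) (v : ℂ) (p q t h : ℕ)
    {a s : ℤ} {u : ℂ} (ha : a = h - q := by omega) (hs : s = h - p - η₁ := by omega)
    (ht : p + q + η₁ + η₂ = t + h := by omega)
    (hu : u = v + (p + q + η₂ : ℤ) * hbar := by push_cast; ring) :
    X a s u = C * sgn (gaugeParity α β p q h) * σ ^ p * D v p q t h :=
  hX v p q t h ⟨ha, hs, ht⟩ hu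

theorem HasHookExpansion.backlund_left_vertical (hX : HasHookExpansion hbar X η₁ η₂ α β C σ D)
    (hY : HasHookExpansion hbar Y η₁' η₂ α' β C' (w * σ) D') (hη : η₁ = η₁' + 1) (hα : α' = α + 1)
    (hD : ∀ v, IsPlueckerPairLeft (D v) (D' v)) (a s : ℤ) (u : ℂ) :
    X (a + 1) s (u - hbar) * Y a s (u + hbar) - X a s u * Y (a + 1) s u =
      w * X (a + 1) (s - 1) u * Y a (s + 1) u := by
  obtain ⟨p, q, t, h, vertical, horizontal, square⟩ := exists_isPosition η₁ η₂ (a + 1) s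
  obtain ⟨v, rfl⟩ : ∃ v, u = v + (p + q + η₂ + 1) * hbar := ⟨u - _, (sub_add_cancel _ _).symm⟩
  rw [hX.eq v p q t h, hY.eq v (p + 1) (q + 1) (t + 1) h,
    hX.eq v p (q + 1) (t + 1) h, hY.eq v (p + 1) q t h,
    hX.eq v (p + 1) q (t + 1) h, hY.eq v p (q + 1) t h, hα]
  have sign₂ :=
    sgn_gaugeParity_mul (ε := 1)
      (show gaugeParity α β p (q + 1) h + gaugeParity (α + 1) β (p + 1) q h =
        gaugeParity α β p q h + gaugeParity (α + 1) β (p + 1) (q + 1) h + _ by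
        simp only [gaugeParity]; push_cast; grind)
  have sign₃ :=
    sgn_gaugeParity_mul (ε := 0)
      (show gaugeParity α β (p + 1) q h + gaugeParity (α + 1) β p (q + 1) h =
        gaugeParity α β p q h + gaugeParity (α + 1) β (p + 1) (q + 1) h + _ by
        simp only [gaugeParity]; push_cast; grind)
  rw [sgn_one] at sign₂
  rw [sgn_zero] at sign₃
  linear_combination C * C' * σ ^ p * (w * σ) ^ (p + 1) *
    (sgn (gaugeParity α β p q h) *
      sgn (gaugeParity (α + 1) β (p + 1) (q + 1) h) * (hD v).vertical p q t h -
    D v p (q + 1) (t + 1) h * D' v (p + 1) q t h * sign₂ -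
    D v (p + 1) q (t + 1) h * D' v p (q + 1) t h * sign₃)

theorem HasHookExpansion.backlund_left_horizontal (hX : HasHookExpansion hbar X η₁ η₂ α β C σ D)
    (hY : HasHookExpansion hbar Y η₁' η₂ α' β C' (w * σ) D') (hη : η₁ = η₁' + 1) (hα : α' = α + 1)
    (hD : ∀ v, IsPlueckerPairLeft (D v) (D' v)) (a s : ℤ) (u : ℂ) :
    X a (s + 1) u * Y a s u - X a s (u - hbar) * Y a (s + 1) (u + hbar) =
      w * X (a + 1) s u * Y (a - 1) (s + 1) u := by
  obtain ⟨p, q, t, h, vertical, horizontal, square⟩ := exists_isPosition η₁ η₂ a s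
  obtain ⟨v, rfl⟩ : ∃ v, u = v + (p + q + η₂ + 1) * hbar := ⟨u - _, (sub_add_cancel _ _).symm⟩
  rw [hX.eq v p (q + 1) t (h + 1), hY.eq v (p + 1) q t h,
    hX.eq v p q t h, hY.eq v (p + 1) (q + 1) t (h + 1),
    hX.eq v (p + 1) q t (h + 1), hY.eq v p (q + 1) t h, hα]
  have sign₁ :=
    sgn_gaugeParity_mul (ε := 1)
      (show gaugeParity α β p (q + 1) (h + 1) + gaugeParity (α + 1) β (p + 1) q h =
        gaugeParity α β p q h + gaugeParity (α + 1) β (p + 1) (q + 1) (h + 1) + _ by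
        simp only [gaugeParity]; push_cast; grind)
  have sign₃ :=
    sgn_gaugeParity_mul (ε := 1)
      (show gaugeParity α β (p + 1) q (h + 1) + gaugeParity (α + 1) β p (q + 1) h =
        gaugeParity α β p q h + gaugeParity (α + 1) β (p + 1) (q + 1) (h + 1) + _ by
        simp only [gaugeParity]; push_cast; grind)
  rw [sgn_one] at sign₁
  rw [sgn_one] at sign₃
  linear_combination C * C' * σ ^ p * (w * σ) ^ (p + 1) *
    (-sgn (gaugeParity α β p q h) *
      sgn (gaugeParity (α + 1) β (p + 1) (q + 1) (h + 1)) * (hD v).horizontal p q t h +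
    D v p (q + 1) t (h + 1) * D' v (p + 1) q t h * sign₁ -
    D v (p + 1) q t (h + 1) * D' v p (q + 1) t h * sign₃)

theorem HasHookExpansion.backlund_right_vertical (hX : HasHookExpansion hbar X η₁ η₂ α β C σ D)
    (hY : HasHookExpansion hbar Y η₁ η₂' α' β' C' (w * σ) D') (hη : η₂ = η₂' + 1)
    (hα : α' = α + ε) (hβ : β' = β + 1 + ε) (hD : ∀ v, IsPlueckerPairRight (D v) (D' v))
    (a s : ℤ) (u : ℂ) :
    w * X (a + 1) s (u + hbar) * Y a s (u - hbar) - sgn ε * (X a s u * Y (a + 1) s u) =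
      X (a + 1) (s + 1) u * Y a (s - 1) u := by
  subst hη
  obtain ⟨p, q, t, h, vertical, horizontal, square⟩ := exists_isPosition η₁ η₂' a s
  obtain ⟨v, rfl⟩ : ∃ v, u = v + (p + q + η₂' + 1) * hbar := ⟨u - _, (sub_add_cancel _ _).symm⟩
  rw [hX.eq v (p + 1) q (t + 1) (h + 1), hY.eq v p q t h,
    hX.eq v p q (t + 1) h, hY.eq v (p + 1) q t (h + 1),
    hX.eq v p q t (h + 1), hY.eq v (p + 1) q (t + 1) h, hα, hβ]
  have sign₂ :=
    sgn_gaugeParity_mul (ε := 1 + ε)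
      (show gaugeParity α β p q h + gaugeParity (α + ε) (β + 1 + ε) (p + 1) q (h + 1) =
        gaugeParity α β (p + 1) q (h + 1) + gaugeParity (α + ε) (β + 1 + ε) p q h + _ by
        simp only [gaugeParity]; push_cast; grind)
  have sign₃ :=
    sgn_gaugeParity_mul (ε := 0)
      (show gaugeParity α β p q (h + 1) + gaugeParity (α + ε) (β + 1 + ε) (p + 1) q h =
        gaugeParity α β (p + 1) q (h + 1) + gaugeParity (α + ε) (β + 1 + ε) p q h + _ by
        simp only [gaugeParity]; push_cast; grind)
  rw [sgn_add, sgn_one] at sign₂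
  rw [sgn_zero] at sign₃
  linear_combination C * C' * σ ^ p * (w * σ) ^ (p + 1) *
    (sgn (gaugeParity α β (p + 1) q (h + 1)) *
      sgn (gaugeParity (α + ε) (β + 1 + ε) p q h) * (hD v).vertical p q t h -
    sgn ε * D v p q (t + 1) h * D' v (p + 1) q t (h + 1) * sign₂ -
    D v p q t (h + 1) * D' v (p + 1) q (t + 1) h * sign₃ +
    sgn (gaugeParity α β (p + 1) q (h + 1)) *
      sgn (gaugeParity (α + ε) (β + 1 + ε) p q h) *
        D v p q (t + 1) h * D' v (p + 1) q t (h + 1) * sgn_mul_self ε)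

theorem HasHookExpansion.backlund_right_horizontal (hX : HasHookExpansion hbar X η₁ η₂ α β C σ D)
    (hY : HasHookExpansion hbar Y η₁ η₂' α' β' C' (w * σ) D') (hη : η₂ = η₂' + 1)
    (hα : α' = α + ε) (hβ : β' = β + 1 + ε) (hD : ∀ v, IsPlueckerPairRight (D v) (D' v))
    (a s : ℤ) (u : ℂ) :
    X a (s - 1) u * Y a s u - X a s (u + hbar) * Y a (s - 1) (u - hbar) =
      sgn ε * (X (a + 1) s u * Y (a - 1) (s - 1) u) := by
  subst hη
  obtain ⟨p, q, t, h, vertical, horizontal, square⟩ := exists_isPosition η₁ η₂' a (s - 1)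
  obtain ⟨v, rfl⟩ : ∃ v, u = v + (p + q + η₂' + 1) * hbar := ⟨u - _, (sub_add_cancel _ _).symm⟩
  rw [hX.eq v p q (t + 1) h, hY.eq v p (q + 1) t (h + 1),
    hX.eq v p (q + 1) (t + 1) (h + 1), hY.eq v p q t h,
    hX.eq v p q t (h + 1), hY.eq v p (q + 1) (t + 1) h, hα, hβ]
  have sign₁ :=
    sgn_gaugeParity_mul (ε := 1)
      (show gaugeParity α β p q h + gaugeParity (α + ε) (β + 1 + ε) p (q + 1) (h + 1) =
        gaugeParity α β p (q + 1) (h + 1) + gaugeParity (α + ε) (β + 1 + ε) p q h + _ by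
        simp only [gaugeParity]; push_cast; grind)
  have sign₃ :=
    sgn_gaugeParity_mul (ε := 1 + ε)
      (show gaugeParity α β p q (h + 1) + gaugeParity (α + ε) (β + 1 + ε) p (q + 1) h =
        gaugeParity α β p (q + 1) (h + 1) + gaugeParity (α + ε) (β + 1 + ε) p q h + _ by
        simp only [gaugeParity]; push_cast; grind)
  rw [sgn_one] at sign₁
  rw [sgn_add, sgn_one] at sign₃
  linear_combination C * C' * σ ^ p * (w * σ) ^ p *
    (-sgn (gaugeParity α β p (q + 1) (h + 1)) *
      sgn (gaugeParity (α + ε) (β + 1 + ε) p q h) * (hD v).horizontal p q t h +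
    D v p q (t + 1) h * D' v p (q + 1) t (h + 1) * sign₁ -
    sgn ε * D v p q t (h + 1) * D' v p (q + 1) (t + 1) h * sign₃ +
    sgn (gaugeParity α β p (q + 1) (h + 1)) *
      sgn (gaugeParity (α + ε) (β + 1 + ε) p q h) *
        D v p q t (h + 1) * D' v p (q + 1) (t + 1) h * sgn_mul_self ε)

end HasHookExpansion

section Assembly

variable {ι : Type*} [DecidableEq ι] {z : ι → ℂ} {hbar : ℂ} {Q : Finset ι → ℂ → ℂ}
  {B₁ B₂ F₁ F₂ B B' F F' : List ι} {T T' : ℤ → ℤ → ℂ → ℂ} {i : ι}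

theorem IsT.hasHookExpansion (hT : IsT z hbar Q B₁ B₂ F₁ F₂ T)
    (hQ : IsMixedQ z hbar Q (B₁ ++ B₂) (F₁ ++ F₂)) :
    HasHookExpansion hbar T (B₁.length - F₁.length) (B₂.length - F₂.length)
      (B₁.length + F₁.length + F₂.length) B₂.length
      (prefactor z B₁ B₂ F₁ F₂ *
        sgn ((F₁.length + F₂.length) * (1 + B₁.length + B₂.length)))
      (stepFactor z (B₁ ++ B₂) (F₁ ++ F₂))
      fun v => hookDet (qWave z hbar Q v) B₁ B₂ (F₁ ++ F₂) := by
  intro v p q t h a s u hpos hu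
  have parity : hookParity B₁.length B₂.length F₁.length F₂.length p q h =
      (F₁.length + F₂.length) * (1 + B₁.length + B₂.length) +
        gaugeParity (B₁.length + F₁.length + F₂.length) B₂.length p q h := by
    rw [hookParity, gaugeParity]
    ring
  rw [hT.eq_hookDet hQ hpos hu, parity, sgn_add, zpow_natCast]
  ring

theorem IsMixedQ.mono (hQ : IsMixedQ z hbar Q B F) (hB : B' ⊆ B) (hF : F' ⊆ F) :
    IsMixedQ z hbar Q B' F' where
  ne_zero_left b hb := hQ.ne_zero_left b (hB hb)
  ne_zero_right f hf := hQ.ne_zero_right f (hF hf)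
  ne b hb f hf := hQ.ne b (hB hb) f (hF hf)
  relation b hb f hf := hQ.relation b (hB hb) f (hF hf)

theorem stepFactor_erase_boson_left (hz : z i ≠ 0) (hi : i ∈ B₁) (B₂ F : List ι) :
    stepFactor z (B₁.erase i ++ B₂) F = z i * stepFactor z (B₁ ++ B₂) F := by
  simp only [stepFactor, List.map_append, List.prod_append, ← List.prod_map_erase z hi]
  field_simp

theorem stepFactor_erase_boson_right (hz : z i ≠ 0) (B₁ : List ι) (hi : i ∈ B₂) (F : List ι) :
    stepFactor z (B₁ ++ B₂.erase i) F = z i * stepFactor z (B₁ ++ B₂) F := by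
  simp only [stepFactor, List.map_append, List.prod_append, ← List.prod_map_erase z hi]
  field_simp

theorem stepFactor_erase_fermion_left (z : ι → ℂ) (B : List ι) (hi : i ∈ F₁) (F₂ : List ι) :
    stepFactor z B (F₁ ++ F₂) = z i * stepFactor z B (F₁.erase i ++ F₂) := by
  simp only [stepFactor, List.map_append, List.prod_append, ← List.prod_map_erase z hi]
  ring

theorem stepFactor_erase_fermion_right (z : ι → ℂ) (B F₁ : List ι) (hi : i ∈ F₂) :
    stepFactor z B (F₁ ++ F₂) = z i * stepFactor z B (F₁ ++ F₂.erase i) := by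
  simp only [stepFactor, List.map_append, List.prod_append, ← List.prod_map_erase z hi]
  ring

theorem IsT.backlund_erase_left_boson (hT : IsT z hbar Q B₁ B₂ F₁ F₂ T)
    (hQ : IsMixedQ z hbar Q (B₁ ++ B₂) (F₁ ++ F₂)) (hi : i ∈ B₁)
    (hT' : IsT z hbar Q (B₁.erase i) B₂ F₁ F₂ T') :
    (∀ a s u, T (a + 1) s (u - hbar) * T' a s (u + hbar) - T a s u * T' (a + 1) s u =
      z i * T (a + 1) (s - 1) u * T' a (s + 1) u) ∧
    (∀ a s u, T a (s + 1) u * T' a s u - T a s (u - hbar) * T' a (s + 1) (u + hbar) =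
      z i * T (a + 1) s u * T' (a - 1) (s + 1) u) := by
  have hX := hT.hasHookExpansion hQ
  have hY := hT'.hasHookExpansion (hQ.mono
    (List.erase_sublist.append_right B₂).subset (List.Subset.refl _))
  rw [stepFactor_erase_boson_left (hQ.ne_zero_left i (List.mem_append_left _ hi)) hi] at hY
  have hη : (B₁.length - F₁.length : ℤ) = (B₁.erase i).length - F₁.length + 1 := by
    rw [← List.length_erase_add_one hi]; push_cast; ring
  have hα : ((B₁.erase i).length + F₁.length + F₂.length : ZMod 2) =
      B₁.length + F₁.length + F₂.length + 1 := by
    rw [← List.length_erase_add_one hi]; push_cast; grind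
  have hD := fun v => isPlueckerPairLeft_hookDet_erase_boson (qWave z hbar Q v) hi B₂ (F₁ ++ F₂)
  exact ⟨hX.backlund_left_vertical hY hη hα hD, hX.backlund_left_horizontal hY hη hα hD⟩

theorem IsT.backlund_erase_left_fermion (hT : IsT z hbar Q B₁ B₂ F₁ F₂ T)
    (hQ : IsMixedQ z hbar Q (B₁ ++ B₂) (F₁ ++ F₂)) (hi : i ∈ F₁)
    (hT' : IsT z hbar Q B₁ B₂ (F₁.erase i) F₂ T') :
    (∀ a s u, T' (a + 1) s (u - hbar) * T a s (u + hbar) - T' a s u * T (a + 1) s u =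
      z i * T' (a + 1) (s - 1) u * T a (s + 1) u) ∧
    (∀ a s u, T' a (s + 1) u * T a s u - T' a s (u - hbar) * T a (s + 1) (u + hbar) =
      z i * T' (a + 1) s u * T (a - 1) (s + 1) u) := by
  have hX := hT'.hasHookExpansion (hQ.mono (List.Subset.refl _)
    (List.erase_sublist.append_right F₂).subset)
  have hY := hT.hasHookExpansion hQ
  rw [stepFactor_erase_fermion_left z _ hi] at hY
  have hη : (B₁.length - (F₁.erase i).length : ℤ) = B₁.length - F₁.length + 1 := by
    rw [← List.length_erase_add_one hi]; push_cast; ring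
  have hα : (B₁.length + F₁.length + F₂.length : ZMod 2) =
      B₁.length + (F₁.erase i).length + F₂.length + 1 := by
    rw [← List.length_erase_add_one hi]; push_cast; grind
  have hD := fun v => isPlueckerPairLeft_hookDet_erase_fermion (qWave z hbar Q v) B₁ B₂ hi F₂
  exact ⟨hX.backlund_left_vertical hY hη hα hD, hX.backlund_left_horizontal hY hη hα hD⟩

theorem IsT.backlund_erase_right_boson (hT : IsT z hbar Q B₁ B₂ F₁ F₂ T)
    (hQ : IsMixedQ z hbar Q (B₁ ++ B₂) (F₁ ++ F₂)) (hi : i ∈ B₂)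
    (hT' : IsT z hbar Q B₁ (B₂.erase i) F₁ F₂ T') :
    (∀ a s u, z i * T (a + 1) s (u + hbar) * T' a s (u - hbar) - T a s u * T' (a + 1) s u =
      T (a + 1) (s + 1) u * T' a (s - 1) u) ∧
    (∀ a s u, T a (s - 1) u * T' a s u - T a s (u + hbar) * T' a (s - 1) (u - hbar) =
      T (a + 1) s u * T' (a - 1) (s - 1) u) := by
  have hX := hT.hasHookExpansion hQ
  have hY := hT'.hasHookExpansion (hQ.mono
    (List.erase_sublist.append_left B₁).subset (List.Subset.refl _))
  rw [stepFactor_erase_boson_right (hQ.ne_zero_left i (List.mem_append_right _ hi)) B₁ hi] at hY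
  have hη : (B₂.length - F₂.length : ℤ) = (B₂.erase i).length - F₂.length + 1 := by
    rw [← List.length_erase_add_one hi]; push_cast; ring
  have hβ : ((B₂.erase i).length : ZMod 2) = B₂.length + 1 + 0 := by
    rw [← List.length_erase_add_one hi]; push_cast; grind
  have hD := fun v => isPlueckerPairRight_hookDet_erase_boson (qWave z hbar Q v) B₁ hi (F₁ ++ F₂)
  have vertical := hX.backlund_right_vertical hY hη (add_zero _).symm hβ hD
  have horizontal := hX.backlund_right_horizontal hY hη (add_zero _).symm hβ hD
  simp only [sgn_zero, one_mul] at vertical horizontal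
  exact ⟨vertical, horizontal⟩

theorem IsT.backlund_erase_right_fermion (hT : IsT z hbar Q B₁ B₂ F₁ F₂ T)
    (hQ : IsMixedQ z hbar Q (B₁ ++ B₂) (F₁ ++ F₂)) (hi : i ∈ F₂)
    (hT' : IsT z hbar Q B₁ B₂ F₁ (F₂.erase i) T') :
    (∀ a s u, z i * T' (a + 1) s (u + hbar) * T a s (u - hbar) + T' a s u * T (a + 1) s u =
      T' (a + 1) (s + 1) u * T a (s - 1) u) ∧
    (∀ a s u, T' a (s - 1) u * T a s u - T' a s (u + hbar) * T a (s - 1) (u - hbar) =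
      -(T' (a + 1) s u * T (a - 1) (s - 1) u)) := by
  have hX := hT'.hasHookExpansion (hQ.mono (List.Subset.refl _)
    (List.erase_sublist.append_left F₁).subset)
  have hY := hT.hasHookExpansion hQ
  rw [stepFactor_erase_fermion_right z _ _ hi] at hY
  have hη : (B₂.length - (F₂.erase i).length : ℤ) = B₂.length - F₂.length + 1 := by
    rw [← List.length_erase_add_one hi]; push_cast; ring
  have hα : (B₁.length + F₁.length + F₂.length : ZMod 2) =
      B₁.length + F₁.length + (F₂.erase i).length + 1 := by
    rw [← List.length_erase_add_one hi]; push_cast; ring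
  have hβ : (B₂.length : ZMod 2) = B₂.length + 1 + 1 := by grind
  have hD := fun v => isPlueckerPairRight_hookDet_erase_fermion (qWave z hbar Q v) B₁ B₂ F₁ hi
  have vertical := hX.backlund_right_vertical hY hη hα hβ hD
  have horizontal := hX.backlund_right_horizontal hY hη hα hβ hD
  simp only [sgn_one, neg_one_mul, sub_neg_eq_add] at vertical horizontal
  exact ⟨vertical, horizontal⟩

theorem QQsys.mixed_relation {p : ι → ℤ} {S : Set ι} (hQQ : QQsys z hbar p S Q) {b f : ι}
    (hb : b ∈ S) (hf : f ∈ S) (hpb : p b = 1) (hpf : p f = -1) (u : ℂ) :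
    (z b - z f) * (Q {b} u * Q {f} u) =
      z b * Q {b, f} (u + hbar) - z f * Q {b, f} (u - hbar) := by
  have hbf : b ≠ f := by
    rintro rfl
    omega
  simpa [hpb, hQQ.1] using hQQ.2.2 ∅ (by simp) b hb f hf (by simp) (by simp) hbf (by omega) u

end Assembly

theorem backlund_T_general {ι : Type*} [DecidableEq ι] (hbar : ℂ)
    (z : ι → ℂ) (B1 B2 F1 F2 : List ι)
    (hnd : (B1 ++ B2 ++ F1 ++ F2).Nodup)
    (hz0 : ∀ i ∈ B1 ++ B2 ++ F1 ++ F2, z i ≠ 0)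
    (hzd : ∀ i ∈ B1 ++ B2 ++ F1 ++ F2, ∀ j ∈ B1 ++ B2 ++ F1 ++ F2, i ≠ j → z i ≠ z j)
    (Q : Finset ι → ℂ → ℂ)
    (hQ : ∀ b ∈ B1 ++ B2, ∀ f ∈ F1 ++ F2, ∀ u, (z b - z f) * (Q {b} u * Q {f} u) =
      z b * Q {b, f} (u + hbar) - z f * Q {b, f} (u - hbar))
    (b1 : ι) (hb1 : b1 ∈ B1) (f1 : ι) (hf1 : f1 ∈ F1)
    (b2 : ι) (hb2 : b2 ∈ B2) (f2 : ι) (hf2 : f2 ∈ F2)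
    (T TB1 TF1 TB2 TF2 : ℤ → ℤ → ℂ → ℂ)
    (hT : IsT z hbar Q B1 B2 F1 F2 T)
    (hTB1 : IsT z hbar Q (B1.erase b1) B2 F1 F2 TB1)
    (hTF1 : IsT z hbar Q B1 B2 (F1.erase f1) F2 TF1)
    (hTB2 : IsT z hbar Q B1 (B2.erase b2) F1 F2 TB2)
    (hTF2 : IsT z hbar Q B1 B2 F1 (F2.erase f2) TF2) :
    (∀ a s : ℤ, ∀ u : ℂ,
      T (a + 1) s (u - hbar) * TB1 a s (u + hbar) - T a s u * TB1 (a + 1) s u =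
        z b1 * T (a + 1) (s - 1) u * TB1 a (s + 1) u) ∧
    (∀ a s : ℤ, ∀ u : ℂ,
      T a (s + 1) u * TB1 a s u - T a s (u - hbar) * TB1 a (s + 1) (u + hbar) =
        z b1 * T (a + 1) s u * TB1 (a - 1) (s + 1) u) ∧
    (∀ a s : ℤ, ∀ u : ℂ,
      TF1 (a + 1) s (u - hbar) * T a s (u + hbar) - TF1 a s u * T (a + 1) s u =
        z f1 * TF1 (a + 1) (s - 1) u * T a (s + 1) u) ∧
    (∀ a s : ℤ, ∀ u : ℂ,
      TF1 a (s + 1) u * T a s u - TF1 a s (u - hbar) * T a (s + 1) (u + hbar) =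
        z f1 * TF1 (a + 1) s u * T (a - 1) (s + 1) u) ∧
    (∀ a s : ℤ, ∀ u : ℂ,
      z b2 * T (a + 1) s (u + hbar) * TB2 a s (u - hbar) - T a s u * TB2 (a + 1) s u =
        T (a + 1) (s + 1) u * TB2 a (s - 1) u) ∧
    (∀ a s : ℤ, ∀ u : ℂ,
      T a (s - 1) u * TB2 a s u - T a s (u + hbar) * TB2 a (s - 1) (u - hbar) =
        T (a + 1) s u * TB2 (a - 1) (s - 1) u) ∧
    (∀ a s : ℤ, ∀ u : ℂ,
      z f2 * TF2 (a + 1) s (u + hbar) * T a s (u - hbar) + TF2 a s u * T (a + 1) s u =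
        TF2 (a + 1) (s + 1) u * T a (s - 1) u) ∧
    (∀ a s : ℤ, ∀ u : ℂ,
      TF2 a (s - 1) u * T a s u - TF2 a s (u + hbar) * T a (s - 1) (u - hbar) =
        -(TF2 (a + 1) s u * T (a - 1) (s - 1) u)) := by
  have hB : ∀ b ∈ B1 ++ B2, b ∈ B1 ++ B2 ++ F1 ++ F2 := by grind
  have hF : ∀ f ∈ F1 ++ F2, f ∈ B1 ++ B2 ++ F1 ++ F2 := by grind
  have hne : ∀ b ∈ B1 ++ B2, ∀ f ∈ F1 ++ F2, b ≠ f := by grind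
  have hQ' : IsMixedQ z hbar Q (B1 ++ B2) (F1 ++ F2) :=
    ⟨fun b hb => hz0 b (hB b hb), fun f hf => hz0 f (hF f hf),
      fun b hb f hf => hzd b (hB b hb) f (hF f hf) (hne b hb f hf), hQ⟩
  obtain ⟨eq₁, eq₂⟩ := hT.backlund_erase_left_boson hQ' hb1 hTB1
  obtain ⟨eq₃, eq₄⟩ := hT.backlund_erase_left_fermion hQ' hf1 hTF1
  obtain ⟨eq₅, eq₆⟩ := hT.backlund_erase_right_boson hQ' hb2 hTB2
  obtain ⟨eq₇, eq₈⟩ := hT.backlund_erase_right_fermion hQ' hf2 hTF2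
  exact ⟨eq₁, eq₂, eq₃, eq₄, eq₅, eq₆, eq₇, eq₈⟩

/-- **Bäcklund transformations for the Wronskian T-functions.** -/
theorem backlund_T {ι : Type*} [DecidableEq ι] (hbar : ℂ) (hbar_ne : hbar ≠ 0)
    (z : ι → ℂ) (B1 B2 F1 F2 : List ι)
    (hnd : (B1 ++ B2 ++ F1 ++ F2).Nodup)
    (hz0 : ∀ i ∈ B1 ++ B2 ++ F1 ++ F2, z i ≠ 0)
    (hzd : ∀ i ∈ B1 ++ B2 ++ F1 ++ F2, ∀ j ∈ B1 ++ B2 ++ F1 ++ F2, i ≠ j → z i ≠ z j)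
    (Q : Finset ι → ℂ → ℂ)
    (hQQ : QQsys z hbar (fun i => if i ∈ B1 ++ B2 then 1 else -1)
      {i | i ∈ B1 ++ B2 ++ F1 ++ F2} Q)
    (b1 : ι) (hb1 : b1 ∈ B1) (f1 : ι) (hf1 : f1 ∈ F1)
    (b2 : ι) (hb2 : b2 ∈ B2) (f2 : ι) (hf2 : f2 ∈ F2)
    (T TB1 TF1 TB2 TF2 : ℤ → ℤ → ℂ → ℂ)
    (hT : IsT z hbar Q B1 B2 F1 F2 T)
    (hTB1 : IsT z hbar Q (B1.erase b1) B2 F1 F2 TB1)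
    (hTF1 : IsT z hbar Q B1 B2 (F1.erase f1) F2 TF1)
    (hTB2 : IsT z hbar Q B1 (B2.erase b2) F1 F2 TB2)
    (hTF2 : IsT z hbar Q B1 B2 F1 (F2.erase f2) TF2) :
    (∀ a s : ℤ, ∀ u : ℂ,
      T (a + 1) s (u - hbar) * TB1 a s (u + hbar) - T a s u * TB1 (a + 1) s u =
        z b1 * T (a + 1) (s - 1) u * TB1 a (s + 1) u) ∧
    (∀ a s : ℤ, ∀ u : ℂ,
      T a (s + 1) u * TB1 a s u - T a s (u - hbar) * TB1 a (s + 1) (u + hbar) =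
        z b1 * T (a + 1) s u * TB1 (a - 1) (s + 1) u) ∧
    (∀ a s : ℤ, ∀ u : ℂ,
      TF1 (a + 1) s (u - hbar) * T a s (u + hbar) - TF1 a s u * T (a + 1) s u =
        z f1 * TF1 (a + 1) (s - 1) u * T a (s + 1) u) ∧
    (∀ a s : ℤ, ∀ u : ℂ,
      TF1 a (s + 1) u * T a s u - TF1 a s (u - hbar) * T a (s + 1) (u + hbar) =
        z f1 * TF1 (a + 1) s u * T (a - 1) (s + 1) u) ∧
    (∀ a s : ℤ, ∀ u : ℂ,
      z b2 * T (a + 1) s (u + hbar) * TB2 a s (u - hbar) - T a s u * TB2 (a + 1) s u =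
        T (a + 1) (s + 1) u * TB2 a (s - 1) u) ∧
    (∀ a s : ℤ, ∀ u : ℂ,
      T a (s - 1) u * TB2 a s u - T a s (u + hbar) * TB2 a (s - 1) (u - hbar) =
        T (a + 1) s u * TB2 (a - 1) (s - 1) u) ∧
    (∀ a s : ℤ, ∀ u : ℂ,
      z f2 * TF2 (a + 1) s (u + hbar) * T a s (u - hbar) + TF2 a s u * T (a + 1) s u =
        TF2 (a + 1) (s + 1) u * T a (s - 1) u) ∧
    (∀ a s : ℤ, ∀ u : ℂ,
      TF2 a (s - 1) u * T a s u - TF2 a s (u + hbar) * T a (s - 1) (u - hbar) =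
        -(TF2 (a + 1) s u * T (a - 1) (s - 1) u)) := by
  have hQ : ∀ b ∈ B1 ++ B2, ∀ f ∈ F1 ++ F2, ∀ u, (z b - z f) * (Q {b} u * Q {f} u) =
      z b * Q {b, f} (u + hbar) - z f * Q {b, f} (u - hbar) := fun b hb f hf u =>
    hQQ.mixed_relation (by grind) (by grind) (if_pos hb) (if_neg (by grind)) u
  exact backlund_T_general hbar z B1 B2 F1 F2 hnd hz0 hzd Q hQ b1 hb1 f1 hf1 b2 hb2 f2 hf2
    T TB1 TF1 TB2 TF2 hT hTB1 hTF1 hTB2 hTF2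

end StmtT
end

section
/- Shift lemma, part (i). Suppose S = ∅, so that m+α = n+c1+c2. If t¹_i = 0 for some 1 ≤ i ≤ c1, or r_j = 1 for some 1 ≤ j ≤ α, then Δ^{R,[η;ξ]}_{∅,T1,T2} = (−1)^{α+m2+c2} · Δ^{R−1,[η−1;ξ−2]}_{∅,T1+1,T2+1}, where R−1 = (r_1−1, …, r_α−1), T1+1 = (t¹_1+1, …, t¹_{c1}+1), and T2+1 = (t²_1+1, …, t²_{c2}+1). -/
open scoped BigOperators

namespace Stmt9

/-- The integer segment tuple `⟨a,b⟩ = (a, a+1, …, b)`, empty when `b < a`. -/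
def seg (a b : ℤ) : List ℤ := (List.range (b - a + 1).toNat).map (fun k => a + (k : ℤ))

/-- Product of `g x y` over ordered pairs `x ≺ y` in the list `L`. -/
def pairProd {ι : Type*} (L : List ι) (g : ι → ι → ℂ) : ℂ :=
  ∏ i : Fin L.length, ∏ j : Fin L.length, if i < j then g (L.get i) (L.get j) else 1

/-- Product of `g x` over a list. -/
def prodL {ι : Type*} (L : List ι) (g : ι → ℂ) : ℂ := (L.map g).prod

/-- Product of `g x y` over pairs `(x, y) ∈ L × M`. -/
def prodLL {ι : Type*} (L M : List ι) (g : ι → ι → ℂ) : ℂ :=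
  (L.map (fun x => (M.map (g x)).prod)).prod

/-- Determinant of the square matrix whose rows and columns are labelled by the given
key lists (by convention `0` if the two lists have different lengths). -/
noncomputable def listDet {α β : Type*} (rows : List α) (cols : List β) (e : α → β → ℂ) : ℂ :=
  if h : rows.length = cols.length then
    Matrix.det (Matrix.of fun i j : Fin rows.length =>
      e (rows.get i) (cols.get (Fin.cast h j)))
  else 0

/-- The coefficient-free sparse determinant `Δ^{R,[η;ξ]}_{S,T1,T2}` built from the
coefficient-free Baxter Q-functions, as a function of the spectral parameter `u`. -/
noncomputable def DeltaCF {ι : Type*} (hbar : ℂ) (Qb Qf : ι → ℂ → ℂ) (Qbf : ι → ι → ℂ → ℂ)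
    (B1 B2 F : List ι) (R S T1 T2 : List ℤ) (η ξ : ℤ) (u : ℂ) : ℂ :=
  listDet
    ((B1.map (Sum.inl : ι → ι ⊕ (ι ⊕ ℤ)) ++
      B2.map (fun b => (Sum.inr (Sum.inl b) : ι ⊕ (ι ⊕ ℤ))) ++
      R.map (fun r => (Sum.inr (Sum.inr r) : ι ⊕ (ι ⊕ ℤ)))))
    ((F.map (Sum.inl : ι → ι ⊕ (ℤ ⊕ (ℤ ⊕ ℤ))) ++
      S.map (fun j => (Sum.inr (Sum.inl j) : ι ⊕ (ℤ ⊕ (ℤ ⊕ ℤ)))) ++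
      T1.map (fun j => (Sum.inr (Sum.inr (Sum.inl j)) : ι ⊕ (ℤ ⊕ (ℤ ⊕ ℤ)))) ++
      T2.map (fun j => (Sum.inr (Sum.inr (Sum.inr j)) : ι ⊕ (ℤ ⊕ (ℤ ⊕ ℤ))))))
    (fun row col =>
      match row, col with
      | Sum.inl b, Sum.inl f => Qbf b f (u + (ξ : ℂ) * hbar)
      | Sum.inl b, Sum.inr (Sum.inl j) => Qb b (u + ((ξ + 2 * j - 1 : ℤ) : ℂ) * hbar)
      | Sum.inl b, Sum.inr (Sum.inr (Sum.inl j)) =>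
          Qb b (u + ((ξ + 2 * j - 1 : ℤ) : ℂ) * hbar)
      | Sum.inl _, Sum.inr (Sum.inr (Sum.inr _)) => 0
      | Sum.inr (Sum.inl b), Sum.inl f =>
          (-1 : ℂ) ^ η * Qbf b f (u + ((ξ - 2 * η : ℤ) : ℂ) * hbar)
      | Sum.inr (Sum.inl b), Sum.inr (Sum.inl j) =>
          Qb b (u + ((ξ + 2 * j - 1 : ℤ) : ℂ) * hbar)
      | Sum.inr (Sum.inl _), Sum.inr (Sum.inr (Sum.inl _)) => 0
      | Sum.inr (Sum.inl b), Sum.inr (Sum.inr (Sum.inr j)) =>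
          Qb b (u + ((ξ + 2 * j - 1 : ℤ) : ℂ) * hbar)
      | Sum.inr (Sum.inr r), Sum.inl f =>
          (-1 : ℂ) ^ (r - 1) * Qf f (u + ((ξ - 2 * r + 1 : ℤ) : ℂ) * hbar)
      | Sum.inr (Sum.inr _), Sum.inr _ => 0)

/-!
Write `v = u + (ξ - 1) ħ` and compare the matrix of `Δ^{R,[η;ξ]}_{∅,T1,T2}` with that of
`Δ^{R-1,[η-1;ξ-2]}_{∅,T1+1,T2+1}`. Once the rows in `B2 ⊔ R` and the columns in `T2` of the second
are negated, the two differ only in the block `B1 × F`, where by the QQ-relation at `v` the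
difference is the rank-one matrix `Q_b(v) Q_f(v)`. This correction does not change the determinant:
if `0 ∈ T1`, then `Q_b(v)` is the column `0` of the first matrix; if `1 ∈ R`, then `Q_f(v)` is its
row `1`.
-/

section RankOne

variable {n A : Type*} [Fintype n] [DecidableEq n] [CommRing A]

theorem det_sub_vecMulVec_of_row_eq (M : Matrix n n A) {a d : n → A} {k : n} (ha : a k = 0)
    (hd : ∀ j, M k j = d j) : (M - Matrix.vecMulVec a d).det = M.det := by
  refine Matrix.det_eq_of_forall_row_eq_smul_add_const (-a) k (by simp [ha]) fun i j => ?_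
  simp only [Matrix.sub_apply, Matrix.vecMulVec_apply, Pi.neg_apply, hd]
  ring

theorem det_sub_vecMulVec_of_col_eq (M : Matrix n n A) {a d : n → A} {k : n} (hd : d k = 0)
    (ha : ∀ i, M i k = a i) : (M - Matrix.vecMulVec a d).det = M.det := by
  rw [← Matrix.det_transpose, Matrix.transpose_sub, Matrix.transpose_vecMulVec,
    det_sub_vecMulVec_of_row_eq M.transpose hd ha, Matrix.det_transpose]

end RankOne

theorem neg_one_zpow_sub_one {K : Type*} [DivisionRing K] (k : ℤ) :
    (-1 : K) ^ (k - 1) = -(-1) ^ k := by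
  rw [zpow_sub_one₀ (neg_ne_zero.mpr one_ne_zero), inv_neg_one, mul_neg_one]

section ListDet

variable {α β : Type*} {rows : List α} {cols : List β}

theorem listDet_of_length_eq (h : rows.length = cols.length) (e : α → β → ℂ) :
    listDet rows cols e =
      (Matrix.of fun i j : Fin rows.length => e (rows.get i) (cols.get (Fin.cast h j))).det :=
  dif_pos h

theorem listDet_congr {e e' : α → β → ℂ} (he : ∀ r ∈ rows, ∀ c ∈ cols, e r c = e' r c) :
    listDet rows cols e = listDet rows cols e' := by
  unfold listDet
  congr! 5 with h i j
  exact he _ (List.get_mem ..) _ (List.get_mem ..)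

theorem listDet_map {α' β' : Type*} (h : rows.length = cols.length) (g : α → α') (k : β → β')
    (e : α' → β' → ℂ) :
    listDet (rows.map g) (cols.map k) e = listDet rows cols fun r c => e (g r) (k c) := by
  rw [listDet_of_length_eq h, listDet_of_length_eq (by simpa using h),
    ← Matrix.det_submatrix_equiv_self (finCongr (List.length_map g (as := rows)).symm)]
  congr 1
  ext i j
  simp

theorem listDet_mul_mul (h : rows.length = cols.length) (s : α → ℂ) (t : β → ℂ)
    (e : α → β → ℂ) :
    listDet rows cols (fun r c => s r * (t c * e r c)) =
      (rows.map s).prod * (cols.map t).prod * listDet rows cols e := by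
  have row_prod : ∏ i : Fin rows.length, s (rows.get i) = (rows.map s).prod :=
    Fin.prod_univ_fun_getElem rows s
  have col_prod : ∏ j : Fin rows.length, t (cols.get (Fin.cast h j)) = (cols.map t).prod :=
    ((finCongr h).prod_comp fun j => t (cols.get j)).trans (Fin.prod_univ_fun_getElem cols t)
  simp only [listDet_of_length_eq h]
  rw [← row_prod, ← col_prod, mul_assoc, ← Matrix.det_mul_row, ← Matrix.det_mul_column]
  rfl

theorem listDet_sub_mul_of_row_eq (h : rows.length = cols.length) {e : α → β → ℂ} {a : α → ℂ}
    {d : β → ℂ} {r₀ : α} (hr₀ : r₀ ∈ rows) (ha : a r₀ = 0) (hd : ∀ c ∈ cols, e r₀ c = d c) :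
    listDet rows cols (fun r c => e r c - a r * d c) = listDet rows cols e := by
  obtain ⟨i, rfl⟩ := List.get_of_mem hr₀
  simp only [listDet_of_length_eq h]
  exact det_sub_vecMulVec_of_row_eq (Matrix.of _) (a := a ∘ rows.get)
    (d := d ∘ cols.get ∘ Fin.cast h) ha fun _ => hd _ (List.get_mem ..)

theorem listDet_sub_mul_of_col_eq (h : rows.length = cols.length) {e : α → β → ℂ} {a : α → ℂ}
    {d : β → ℂ} {c₀ : β} (hc₀ : c₀ ∈ cols) (hd : d c₀ = 0) (ha : ∀ r ∈ rows, e r c₀ = a r) :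
    listDet rows cols (fun r c => e r c - a r * d c) = listDet rows cols e := by
  obtain ⟨j, rfl⟩ := List.get_of_mem hc₀
  simp only [listDet_of_length_eq h]
  exact det_sub_vecMulVec_of_col_eq (Matrix.of _) (k := Fin.cast h.symm j) (a := a ∘ rows.get)
    (d := d ∘ cols.get ∘ Fin.cast h) hd fun _ => ha _ (List.get_mem ..)

end ListDet

section Keys

variable {ι : Type*}

/-- The row keys `B1 ⊔ B2 ⊔ R` of `DeltaCF`. -/
def rowKeys (B1 B2 : List ι) (R : List ℤ) : List (ι ⊕ ι ⊕ ℤ) :=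
  B1.map .inl ++ B2.map (fun b => .inr (.inl b)) ++ R.map (fun r => .inr (.inr r))

/-- The column keys `F ⊔ T1 ⊔ T2` of `DeltaCF` in the case `S = ∅`. -/
def colKeys (F : List ι) (T1 T2 : List ℤ) : List (ι ⊕ ℤ ⊕ ℤ) :=
  F.map .inl ++ T1.map (fun t => .inr (.inl t)) ++ T2.map (fun t => .inr (.inr t))

/-- The shift `R ↦ R - 1` on row keys. -/
def shiftRow : ι ⊕ ι ⊕ ℤ → ι ⊕ ι ⊕ ℤ := Sum.map id (Sum.map id fun r => r - 1)

/-- The shift `T1 ↦ T1 + 1`, `T2 ↦ T2 + 1` on column keys. -/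
def shiftCol : ι ⊕ ℤ ⊕ ℤ → ι ⊕ ℤ ⊕ ℤ := Sum.map id (Sum.map (fun t => t + 1) fun t => t + 1)

/-- The sign acquired by each row under the shift: `-1` on `B2` and `R`. -/
def rowSign : ι ⊕ ι ⊕ ℤ → ℂ := Sum.elim (fun _ => 1) fun _ => -1

/-- The sign acquired by each column under the shift: `-1` on `T2`. -/
def colSign : ι ⊕ ℤ ⊕ ℤ → ℂ := Sum.elim (fun _ => 1) (Sum.elim (fun _ => 1) fun _ => -1)

theorem length_rowKeys (B1 B2 : List ι) (R : List ℤ) :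
    (rowKeys B1 B2 R).length = B1.length + B2.length + R.length := by
  simp [rowKeys, add_assoc]

theorem length_colKeys (F : List ι) (T1 T2 : List ℤ) :
    (colKeys F T1 T2).length = F.length + T1.length + T2.length := by
  simp [colKeys, add_assoc]

theorem map_shiftRow_rowKeys (B1 B2 : List ι) (R : List ℤ) :
    (rowKeys B1 B2 R).map shiftRow = rowKeys B1 B2 (R.map fun r => r - 1) := by
  simp [rowKeys, shiftRow, Function.comp_def]

theorem map_shiftCol_colKeys (F : List ι) (T1 T2 : List ℤ) :
    (colKeys F T1 T2).map shiftCol =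
      colKeys F (T1.map fun t => t + 1) (T2.map fun t => t + 1) := by
  simp [colKeys, shiftCol, Function.comp_def]

theorem prod_map_rowSign_mul_prod_map_colSign (B1 B2 F : List ι) (R T1 T2 : List ℤ) :
    ((rowKeys B1 B2 R).map rowSign).prod * ((colKeys F T1 T2).map colSign).prod =
      (-1) ^ (R.length + B2.length + T2.length) := by
  simp [rowKeys, colKeys, rowSign, colSign, Function.comp_def, pow_add, mul_comm]

end Keys

section Entries

variable {ι : Type*} (hbar : ℂ) (Qb Qf : ι → ℂ → ℂ) (Qbf : ι → ι → ℂ → ℂ) (η ξ : ℤ) (u : ℂ)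

/-- The matrix entries of `DeltaCF` in the case `S = ∅`. -/
noncomputable def entry : ι ⊕ ι ⊕ ℤ → ι ⊕ ℤ ⊕ ℤ → ℂ
  | .inl b, .inl f => Qbf b f (u + (ξ : ℂ) * hbar)
  | .inl b, .inr (.inl t) => Qb b (u + ((ξ + 2 * t - 1 : ℤ) : ℂ) * hbar)
  | .inl _, .inr (.inr _) => 0
  | .inr (.inl b), .inl f => (-1) ^ η * Qbf b f (u + ((ξ - 2 * η : ℤ) : ℂ) * hbar)
  | .inr (.inl _), .inr (.inl _) => 0
  | .inr (.inl b), .inr (.inr t) => Qb b (u + ((ξ + 2 * t - 1 : ℤ) : ℂ) * hbar)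
  | .inr (.inr r), .inl f => (-1) ^ (r - 1) * Qf f (u + ((ξ - 2 * r + 1 : ℤ) : ℂ) * hbar)
  | .inr (.inr _), .inr _ => 0

/-- The column vector `Q_b^{[ξ-1]}` supported on the rows in `B1`: the left factor of the rank-one
correction. -/
def bosonVec : ι ⊕ ι ⊕ ℤ → ℂ := Sum.elim (fun b => Qb b (u + ((ξ - 1 : ℤ) : ℂ) * hbar)) 0

/-- The row vector `Q_f^{[ξ-1]}` supported on the columns in `F`: the right factor of the rank-one
correction. -/
def fermionVec : ι ⊕ ℤ ⊕ ℤ → ℂ := Sum.elim (fun f => Qf f (u + ((ξ - 1 : ℤ) : ℂ) * hbar)) 0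

theorem entry_zero_eq_bosonVec (r : ι ⊕ ι ⊕ ℤ) :
    entry hbar Qb Qf Qbf η ξ u r (.inr (.inl 0)) = bosonVec hbar Qb ξ u r := by
  rcases r with b | b | r <;> simp [entry, bosonVec]

theorem entry_one_eq_fermionVec (c : ι ⊕ ℤ ⊕ ℤ) :
    entry hbar Qb Qf Qbf η ξ u (.inr (.inr 1)) c = fermionVec hbar Qf ξ u c := by
  have shift_eq : ξ - 2 * 1 + 1 = ξ - 1 := by ring
  rcases c with f | t <;> simp only [entry, fermionVec, shift_eq] <;> simp

theorem rowSign_mul_colSign_mul_entry_shift {B1 B2 F : List ι} {R T1 T2 : List ℤ}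
    (hQQ : ∀ b ∈ B1, ∀ f ∈ F,
      Qb b (u + ((ξ - 1 : ℤ) : ℂ) * hbar) * Qf f (u + ((ξ - 1 : ℤ) : ℂ) * hbar) =
        Qbf b f (u + (ξ : ℂ) * hbar) - Qbf b f (u + ((ξ - 2 : ℤ) : ℂ) * hbar))
    {r : ι ⊕ ι ⊕ ℤ} (hr : r ∈ rowKeys B1 B2 R) {c : ι ⊕ ℤ ⊕ ℤ} (hc : c ∈ colKeys F T1 T2) :
    rowSign r * (colSign c *
        entry hbar Qb Qf Qbf (η - 1) (ξ - 2) u (shiftRow r) (shiftCol c)) =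
      entry hbar Qb Qf Qbf η ξ u r c - bosonVec hbar Qb ξ u r * fermionVec hbar Qf ξ u c := by
  have boson_index : ξ - 2 - 2 * (η - 1) = ξ - 2 * η := by ring
  have row_index (r : ℤ) : ξ - 2 - 2 * (r - 1) + 1 = ξ - 2 * r + 1 := by ring
  have col_index (t : ℤ) : ξ - 2 + 2 * (t + 1) - 1 = ξ + 2 * t - 1 := by ring
  rcases r with b | b | r <;> rcases c with f | t | t
  case inl.inl =>
    have hb : b ∈ B1 := by simpa [rowKeys] using hr
    have hf : f ∈ F := by simpa [colKeys] using hc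
    simp only [rowSign, colSign, shiftRow, shiftCol, entry, bosonVec, fermionVec, Sum.map_inl,
      Sum.elim_inl, id, hQQ b hb f hf]
    ring
  all_goals
    simp [rowSign, colSign, shiftRow, shiftCol, entry, bosonVec, fermionVec,
      neg_one_zpow_sub_one, boson_index, row_index, col_index,
      -Int.cast_sub, -Int.cast_add, -Int.cast_mul]

theorem DeltaCF_nil_eq_listDet {B1 B2 F : List ι} {R T1 T2 : List ℤ}
    (hlen : (rowKeys B1 B2 R).length = (colKeys F T1 T2).length) :
    DeltaCF hbar Qb Qf Qbf B1 B2 F R [] T1 T2 η ξ u =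
      listDet (rowKeys B1 B2 R) (colKeys F T1 T2) (entry hbar Qb Qf Qbf η ξ u) := by
  have cols_eq : F.map .inl ++ [].map (fun j => .inr (.inl j)) ++
        T1.map (fun t => .inr (.inr (.inl t))) ++ T2.map (fun t => .inr (.inr (.inr t))) =
      (colKeys F T1 T2).map (Sum.map id (.inr : ℤ ⊕ ℤ → ℤ ⊕ ℤ ⊕ ℤ)) := by
    simp [colKeys, Function.comp_def]
  unfold DeltaCF
  rw [cols_eq, ← rowKeys]
  nth_rw 1 [← List.map_id (rowKeys B1 B2 R)]
  rw [listDet_map hlen]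
  refine listDet_congr fun r _ c _ => ?_
  rcases r with b | b | r <;> rcases c with f | t | t <;> rfl

theorem listDet_entry_sub_bosonVec_mul_fermionVec {B1 B2 F : List ι} {R T1 T2 : List ℤ}
    (hlen : (rowKeys B1 B2 R).length = (colKeys F T1 T2).length)
    (hcase : (0 : ℤ) ∈ T1 ∨ (1 : ℤ) ∈ R) :
    listDet (rowKeys B1 B2 R) (colKeys F T1 T2) (fun r c =>
        entry hbar Qb Qf Qbf η ξ u r c - bosonVec hbar Qb ξ u r * fermionVec hbar Qf ξ u c) =
      listDet (rowKeys B1 B2 R) (colKeys F T1 T2) (entry hbar Qb Qf Qbf η ξ u) := by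
  rcases hcase with zero_mem | one_mem
  · exact listDet_sub_mul_of_col_eq hlen (c₀ := .inr (.inl 0)) (by simpa [colKeys]) rfl
      fun r _ => entry_zero_eq_bosonVec hbar Qb Qf Qbf η ξ u r
  · exact listDet_sub_mul_of_row_eq hlen (r₀ := .inr (.inr 1)) (by simpa [rowKeys]) rfl
      fun c _ => entry_one_eq_fermionVec hbar Qb Qf Qbf η ξ u c

end Entries

theorem shift_lemma_i_general {ι : Type*} (hbar : ℂ)
    (Qb Qf : ι → ℂ → ℂ) (Qbf : ι → ι → ℂ → ℂ) (B1 B2 F : List ι) (R T1 T2 : List ℤ) (η ξ : ℤ)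
    (u : ℂ)
    (hQQ : ∀ b ∈ B1, ∀ f ∈ F,
      Qb b (u + ((ξ - 1 : ℤ) : ℂ) * hbar) * Qf f (u + ((ξ - 1 : ℤ) : ℂ) * hbar) =
        Qbf b f (u + (ξ : ℂ) * hbar) - Qbf b f (u + ((ξ - 2 : ℤ) : ℂ) * hbar))
    (hlen : B1.length + B2.length + R.length = F.length + T1.length + T2.length)
    (hcase : (0 : ℤ) ∈ T1 ∨ (1 : ℤ) ∈ R) :
    DeltaCF hbar Qb Qf Qbf B1 B2 F R [] T1 T2 η ξ u =
      (-1 : ℂ) ^ (R.length + B2.length + T2.length) *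
        DeltaCF hbar Qb Qf Qbf B1 B2 F (R.map (fun r => r - 1)) []
          (T1.map (fun t => t + 1)) (T2.map (fun t => t + 1)) (η - 1) (ξ - 2) u := by
  have square : (rowKeys B1 B2 R).length = (colKeys F T1 T2).length := by
    rw [length_rowKeys, length_colKeys, hlen]
  have square_shift : (rowKeys B1 B2 (R.map fun r => r - 1)).length =
      (colKeys F (T1.map fun t => t + 1) (T2.map fun t => t + 1)).length := by
    simpa only [length_rowKeys, length_colKeys, List.length_map] using hlen
  rw [DeltaCF_nil_eq_listDet _ _ _ _ _ _ _ square,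
    DeltaCF_nil_eq_listDet _ _ _ _ _ _ _ square_shift,
    ← listDet_entry_sub_bosonVec_mul_fermionVec _ _ _ _ _ _ _ square hcase,
    ← prod_map_rowSign_mul_prod_map_colSign B1 B2 F, ← map_shiftRow_rowKeys,
    ← map_shiftCol_colKeys, listDet_map square, ← listDet_mul_mul square]
  exact listDet_congr fun r hr c hc =>
    (rowSign_mul_colSign_mul_entry_shift hbar Qb Qf Qbf η ξ u hQQ hr hc).symm

/-- **Shift lemma, part (i).** -/
theorem shift_lemma_i {ι : Type*} (hbar : ℂ) (hbar_ne : hbar ≠ 0)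
    (Qb Qf : ι → ℂ → ℂ) (Qbf : ι → ι → ℂ → ℂ)
    (B1 B2 F : List ι) (hnd : (B1 ++ B2 ++ F).Nodup)
    (hQQ : ∀ b ∈ B1 ++ B2, ∀ f ∈ F, ∀ u : ℂ,
      Qb b u * Qf f u = Qbf b f (u + hbar) - Qbf b f (u - hbar))
    (R T1 T2 : List ℤ) (η ξ : ℤ)
    (hlen : B1.length + B2.length + R.length = F.length + T1.length + T2.length)
    (hcase : (0 : ℤ) ∈ T1 ∨ (1 : ℤ) ∈ R) :
    ∀ u : ℂ,
      DeltaCF hbar Qb Qf Qbf B1 B2 F R [] T1 T2 η ξ u =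
        (-1 : ℂ) ^ (R.length + B2.length + T2.length) *
          DeltaCF hbar Qb Qf Qbf B1 B2 F (R.map (fun r => r - 1)) []
            (T1.map (fun t => t + 1)) (T2.map (fun t => t + 1)) (η - 1) (ξ - 2) u := by
  refine fun u => shift_lemma_i_general hbar Qb Qf Qbf B1 B2 F R T1 T2 η ξ u
    (fun b hb f hf => (hQQ b (List.mem_append_left B2 hb) f hf _).trans ?_) hlen hcase
  congr 2 <;> push_cast <;> ring

end Stmt9
end

section
/- Shift lemma, part (ii). Suppose η = 0 and s_i = 0 for some 1 ≤ i ≤ β. Then Δ^{R,[0;ξ]}_{S,T1,T2} = (−1)^{α} · Δ^{R−1,[0;ξ−2]}_{S+1,T1+1,T2+1}, where R−1 = (r_1−1, …, r_α−1), S+1 = (s_1+1, …, s_β+1), T1+1 = (t¹_1+1, …, t¹_{c1}+1), and T2+1 = (t²_1+1, …, t²_{c2}+1). -/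
open scoped BigOperators

namespace Stmt10

/-- The integer segment tuple `⟨a,b⟩ = (a, a+1, …, b)`, empty when `b < a`. -/
def seg (a b : ℤ) : List ℤ := (List.range (b - a + 1).toNat).map (fun k => a + (k : ℤ))

/-- Product of `g x y` over ordered pairs `x ≺ y` in the list `L`. -/
def pairProd {ι : Type*} (L : List ι) (g : ι → ι → ℂ) : ℂ :=
  ∏ i : Fin L.length, ∏ j : Fin L.length, if i < j then g (L.get i) (L.get j) else 1

/-- Product of `g x` over a list. -/
def prodL {ι : Type*} (L : List ι) (g : ι → ℂ) : ℂ := (L.map g).prod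

/-- Product of `g x y` over pairs `(x, y) ∈ L × M`. -/
def prodLL {ι : Type*} (L M : List ι) (g : ι → ι → ℂ) : ℂ :=
  (L.map (fun x => (M.map (g x)).prod)).prod

/-- Determinant of the square matrix whose rows and columns are labelled by the given
key lists (by convention `0` if the two lists have different lengths). -/
noncomputable def listDet {α β : Type*} (rows : List α) (cols : List β) (e : α → β → ℂ) : ℂ :=
  if h : rows.length = cols.length then
    Matrix.det (Matrix.of fun i j : Fin rows.length =>
      e (rows.get i) (cols.get (Fin.cast h j)))
  else 0

/-- The coefficient-free sparse determinant `Δ^{R,[η;ξ]}_{S,T1,T2}` built from the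
coefficient-free Baxter Q-functions, as a function of the spectral parameter `u`. -/
noncomputable def DeltaCF {ι : Type*} (hbar : ℂ) (Qb Qf : ι → ℂ → ℂ) (Qbf : ι → ι → ℂ → ℂ)
    (B1 B2 F : List ι) (R S T1 T2 : List ℤ) (η ξ : ℤ) (u : ℂ) : ℂ :=
  listDet
    ((B1.map (Sum.inl : ι → ι ⊕ (ι ⊕ ℤ)) ++
      B2.map (fun b => (Sum.inr (Sum.inl b) : ι ⊕ (ι ⊕ ℤ))) ++
      R.map (fun r => (Sum.inr (Sum.inr r) : ι ⊕ (ι ⊕ ℤ)))))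
    ((F.map (Sum.inl : ι → ι ⊕ (ℤ ⊕ (ℤ ⊕ ℤ))) ++
      S.map (fun j => (Sum.inr (Sum.inl j) : ι ⊕ (ℤ ⊕ (ℤ ⊕ ℤ)))) ++
      T1.map (fun j => (Sum.inr (Sum.inr (Sum.inl j)) : ι ⊕ (ℤ ⊕ (ℤ ⊕ ℤ)))) ++
      T2.map (fun j => (Sum.inr (Sum.inr (Sum.inr j)) : ι ⊕ (ℤ ⊕ (ℤ ⊕ ℤ))))))
    (fun row col =>
      match row, col with
      | Sum.inl b, Sum.inl f => Qbf b f (u + (ξ : ℂ) * hbar)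
      | Sum.inl b, Sum.inr (Sum.inl j) => Qb b (u + ((ξ + 2 * j - 1 : ℤ) : ℂ) * hbar)
      | Sum.inl b, Sum.inr (Sum.inr (Sum.inl j)) =>
          Qb b (u + ((ξ + 2 * j - 1 : ℤ) : ℂ) * hbar)
      | Sum.inl _, Sum.inr (Sum.inr (Sum.inr _)) => 0
      | Sum.inr (Sum.inl b), Sum.inl f =>
          (-1 : ℂ) ^ η * Qbf b f (u + ((ξ - 2 * η : ℤ) : ℂ) * hbar)
      | Sum.inr (Sum.inl b), Sum.inr (Sum.inl j) =>
          Qb b (u + ((ξ + 2 * j - 1 : ℤ) : ℂ) * hbar)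
      | Sum.inr (Sum.inl _), Sum.inr (Sum.inr (Sum.inl _)) => 0
      | Sum.inr (Sum.inl b), Sum.inr (Sum.inr (Sum.inr j)) =>
          Qb b (u + ((ξ + 2 * j - 1 : ℤ) : ℂ) * hbar)
      | Sum.inr (Sum.inr r), Sum.inl f =>
          (-1 : ℂ) ^ (r - 1) * Qf f (u + ((ξ - 2 * r + 1 : ℤ) : ℂ) * hbar)
      | Sum.inr (Sum.inr _), Sum.inr _ => 0)

/- Going from `ξ` to `ξ - 2` with all labels shifted leaves the `Q_b` entries untouched and negates
the rows labelled by `R`. By the QQ-relation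
`Q_{b,f}^{[ξ-2]} = Q_{b,f}^{[ξ]} - Q_f^{[ξ-1]} Q_b^{[ξ-1]}`, on the bosonic rows the column of
`f ∈ F` loses `Q_f^{[ξ-1]}` times the column of `0 ∈ S`. That column vanishes on the rows labelled
by `R`, so the two matrices differ by `α` row negations and column operations with pivot `0 ∈ S`. -/

section ListDet

variable {α β : Type*} {rows : List α} {cols : List β}

theorem listDet_congr {e e' : α → β → ℂ} (h : ∀ a ∈ rows, ∀ c ∈ cols, e a c = e' a c) :
    listDet rows cols e = listDet rows cols e' := by
  unfold listDet
  split_ifs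
  · congr 1
    ext i j
    exact h _ (List.get_mem _ _) _ (List.get_mem _ _)
  · rfl

theorem listDet_map {γ δ : Type*} (φ : α → γ) (ψ : β → δ) (e : γ → δ → ℂ) :
    listDet (rows.map φ) (cols.map ψ) e = listDet rows cols (fun a c => e (φ a) (ψ c)) := by
  unfold listDet
  simp only [List.length_map]
  split_ifs
  · rw [← Matrix.det_submatrix_equiv_self (finCongr (List.length_map φ (as := rows)).symm)]
    congr 1
    ext i j
    simp
  · rfl

theorem listDet_mul_rows (s : α → ℂ) (e : α → β → ℂ) :
    listDet rows cols (fun a c => s a * e a c) = (rows.map s).prod * listDet rows cols e := by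
  unfold listDet
  split_ifs
  · rw [← Fin.prod_univ_fun_getElem, ← Matrix.det_mul_column]
    rfl
  · rw [mul_zero]

theorem listDet_add_mul_col {c₀ : β} (hc₀ : c₀ ∈ cols) {w : β → ℂ} (hw : w c₀ = 0)
    (e : α → β → ℂ) :
    listDet rows cols (fun a c => e a c + w c * e a c₀) = listDet rows cols e := by
  unfold listDet
  split_ifs with h
  · obtain ⟨k, rfl⟩ := List.get_of_mem hc₀
    rw [← Matrix.det_transpose, ← Matrix.det_transpose (Matrix.of fun i j => e _ _)]
    exact Matrix.det_eq_of_forall_row_eq_smul_add_const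
      (fun j => w (cols.get (Fin.cast h j))) (Fin.cast h.symm k) hw fun _ _ => rfl
  · rfl

end ListDet

section Labels

variable {ι : Type*}

/-- The tuple `B1 ⊔ B2 ⊔ R` of row labels of `Δ`, in the encoding used by `DeltaCF`. -/
def rowLabels (B1 B2 : List ι) (R : List ℤ) : List (ι ⊕ (ι ⊕ ℤ)) :=
  B1.map Sum.inl ++ B2.map (fun b => Sum.inr (Sum.inl b)) ++ R.map (fun r => Sum.inr (Sum.inr r))

/-- The tuple `F ⊔ S ⊔ T1 ⊔ T2` of column labels of `Δ`, in the encoding used by `DeltaCF`. -/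
def colLabels (F : List ι) (S T1 T2 : List ℤ) : List (ι ⊕ (ℤ ⊕ (ℤ ⊕ ℤ))) :=
  F.map Sum.inl ++ S.map (fun j => Sum.inr (Sum.inl j)) ++
    T1.map (fun j => Sum.inr (Sum.inr (Sum.inl j))) ++
    T2.map (fun j => Sum.inr (Sum.inr (Sum.inr j)))

/-- The relabelling of rows that turns `R` into `R - 1`. -/
def shiftRow : ι ⊕ (ι ⊕ ℤ) → ι ⊕ (ι ⊕ ℤ) :=
  Sum.map id (Sum.map id (· - 1))

/-- The relabelling `j ↦ j + 1` of `S ⊔ T1 ⊔ T2`. -/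
def shiftIndex : ℤ ⊕ (ℤ ⊕ ℤ) → ℤ ⊕ (ℤ ⊕ ℤ) :=
  Sum.map (· + 1) (Sum.map (· + 1) (· + 1))

/-- The relabelling of columns that turns `S, T1, T2` into `S + 1, T1 + 1, T2 + 1`. -/
def shiftCol : ι ⊕ (ℤ ⊕ (ℤ ⊕ ℤ)) → ι ⊕ (ℤ ⊕ (ℤ ⊕ ℤ)) :=
  Sum.map id shiftIndex

/-- The sign a row acquires under the shift: `-1` on the rows in `R`, `1` on the bosonic rows. -/
def rowSign : ι ⊕ (ι ⊕ ℤ) → ℂ :=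
  Sum.elim (fun _ => 1) (Sum.elim (fun _ => 1) (fun _ => -1))

theorem rowLabels_map_sub_one (B1 B2 : List ι) (R : List ℤ) :
    rowLabels B1 B2 (R.map (fun r => r - 1)) = (rowLabels B1 B2 R).map shiftRow := by
  simp [rowLabels, shiftRow, Function.comp_def]

theorem colLabels_map_add_one (F : List ι) (S T1 T2 : List ℤ) :
    colLabels F (S.map (fun s => s + 1)) (T1.map (fun t => t + 1)) (T2.map (fun t => t + 1)) =
      (colLabels F S T1 T2).map shiftCol := by
  simp [colLabels, shiftCol, shiftIndex, Function.comp_def]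

theorem prod_map_rowSign_rowLabels (B1 B2 : List ι) (R : List ℤ) :
    ((rowLabels B1 B2 R).map rowSign).prod = (-1) ^ R.length := by
  simp [rowLabels, rowSign, Function.comp_def]

theorem inl_mem_rowLabels {B1 B2 : List ι} {R : List ℤ} {b : ι} :
    Sum.inl b ∈ rowLabels B1 B2 R ↔ b ∈ B1 := by
  simp [rowLabels]

theorem inr_inl_mem_rowLabels {B1 B2 : List ι} {R : List ℤ} {b : ι} :
    Sum.inr (Sum.inl b) ∈ rowLabels B1 B2 R ↔ b ∈ B2 := by
  simp [rowLabels]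

theorem inl_mem_colLabels {F : List ι} {S T1 T2 : List ℤ} {f : ι} :
    Sum.inl f ∈ colLabels F S T1 T2 ↔ f ∈ F := by
  simp [colLabels]

theorem inr_inl_mem_colLabels {F : List ι} {S T1 T2 : List ℤ} {j : ℤ} :
    Sum.inr (Sum.inl j) ∈ colLabels F S T1 T2 ↔ j ∈ S := by
  simp [colLabels]

end Labels

theorem qq_shift_sub_two {A K : Type*} [Ring A] [Ring K] {hbar : A} {qb qf qbf : A → K}
    (hQQ : ∀ u, qb u * qf u = qbf (u + hbar) - qbf (u - hbar)) (ξ : ℤ) (u : A) :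
    qbf (u + ((ξ - 2 : ℤ) : A) * hbar) = qbf (u + (ξ : A) * hbar) -
      qb (u + ((ξ - 1 : ℤ) : A) * hbar) * qf (u + ((ξ - 1 : ℤ) : A) * hbar) := by
  have h_add : u + (ξ : A) * hbar = u + ((ξ - 1 : ℤ) : A) * hbar + hbar := by
    push_cast; noncomm_ring
  have h_sub : u + ((ξ - 2 : ℤ) : A) * hbar = u + ((ξ - 1 : ℤ) : A) * hbar - hbar := by
    push_cast; noncomm_ring
  rw [h_add, h_sub, hQQ, sub_sub_cancel]

section DeltaEntry

variable {ι : Type*} (hbar : ℂ) (Qb Qf : ι → ℂ → ℂ) (Qbf : ι → ι → ℂ → ℂ)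

/-- The entry of the matrix of `Δ^{R,[η;ξ]}_{S,T1,T2}` at `u`, by row and column label. -/
noncomputable def deltaEntry (η ξ : ℤ) (u : ℂ) : ι ⊕ (ι ⊕ ℤ) → ι ⊕ (ℤ ⊕ (ℤ ⊕ ℤ)) → ℂ
  | Sum.inl b, Sum.inl f => Qbf b f (u + (ξ : ℂ) * hbar)
  | Sum.inl b, Sum.inr (Sum.inl j) => Qb b (u + ((ξ + 2 * j - 1 : ℤ) : ℂ) * hbar)
  | Sum.inl b, Sum.inr (Sum.inr (Sum.inl j)) => Qb b (u + ((ξ + 2 * j - 1 : ℤ) : ℂ) * hbar)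
  | Sum.inl _, Sum.inr (Sum.inr (Sum.inr _)) => 0
  | Sum.inr (Sum.inl b), Sum.inl f =>
      (-1 : ℂ) ^ η * Qbf b f (u + ((ξ - 2 * η : ℤ) : ℂ) * hbar)
  | Sum.inr (Sum.inl b), Sum.inr (Sum.inl j) => Qb b (u + ((ξ + 2 * j - 1 : ℤ) : ℂ) * hbar)
  | Sum.inr (Sum.inl _), Sum.inr (Sum.inr (Sum.inl _)) => 0
  | Sum.inr (Sum.inl b), Sum.inr (Sum.inr (Sum.inr j)) =>
      Qb b (u + ((ξ + 2 * j - 1 : ℤ) : ℂ) * hbar)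
  | Sum.inr (Sum.inr r), Sum.inl f =>
      (-1 : ℂ) ^ (r - 1) * Qf f (u + ((ξ - 2 * r + 1 : ℤ) : ℂ) * hbar)
  | Sum.inr (Sum.inr _), Sum.inr _ => 0

/-- The coefficient of the column `0 ∈ S` in the column operation that the shift performs on each
column: `-Q_f^{[ξ-1]}` at `f ∈ F`, and `0` at the other columns. -/
noncomputable def pivotCoeff (ξ : ℤ) (u : ℂ) : ι ⊕ (ℤ ⊕ (ℤ ⊕ ℤ)) → ℂ :=
  Sum.elim (fun f => -Qf f (u + ((ξ - 1 : ℤ) : ℂ) * hbar)) (fun _ => 0)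

theorem DeltaCF_eq_listDet (B1 B2 F : List ι) (R S T1 T2 : List ℤ) (η ξ : ℤ) (u : ℂ) :
    DeltaCF hbar Qb Qf Qbf B1 B2 F R S T1 T2 η ξ u =
      listDet (rowLabels B1 B2 R) (colLabels F S T1 T2) (deltaEntry hbar Qb Qf Qbf η ξ u) :=
  rfl

theorem deltaEntry_shift_inr (η ξ : ℤ) (u : ℂ) (a : ι ⊕ (ι ⊕ ℤ)) (c : ℤ ⊕ (ℤ ⊕ ℤ)) :
    deltaEntry hbar Qb Qf Qbf η (ξ - 2) u (shiftRow a) (Sum.inr (shiftIndex c)) =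
      deltaEntry hbar Qb Qf Qbf η ξ u a (Sum.inr c) := by
  have h_index (j : ℤ) : ξ - 2 + 2 * (j + 1) - 1 = ξ + 2 * j - 1 := by ring
  rcases a with b | b | r <;> rcases c with j | j | j <;>
    simp only [deltaEntry, shiftRow, shiftIndex, Sum.map_inl, Sum.map_inr, id, h_index]

theorem rowSign_mul_deltaEntry_inr (η ξ : ℤ) (u : ℂ) (a : ι ⊕ (ι ⊕ ℤ)) (c : ℤ ⊕ (ℤ ⊕ ℤ)) :
    rowSign a * deltaEntry hbar Qb Qf Qbf η ξ u a (Sum.inr c) =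
      deltaEntry hbar Qb Qf Qbf η ξ u a (Sum.inr c) := by
  rcases a with _ | _ | _
  · exact one_mul _
  · exact one_mul _
  · exact mul_zero (-1)

theorem deltaEntry_shift_fermionic (η ξ : ℤ) (u : ℂ) (r : ℤ) (f : ι) :
    deltaEntry hbar Qb Qf Qbf η (ξ - 2) u (Sum.inr (Sum.inr (r - 1))) (Sum.inl f) =
      -deltaEntry hbar Qb Qf Qbf η ξ u (Sum.inr (Sum.inr r)) (Sum.inl f) := by
  have h_index : ξ - 2 - 2 * (r - 1) + 1 = ξ - 2 * r + 1 := by ring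
  have h_sign : (-1 : ℂ) ^ (r - 1 - 1) = -(-1) ^ (r - 1) := by
    rw [zpow_sub_one₀ (neg_ne_zero.mpr one_ne_zero), inv_neg_one, mul_neg_one]
  simp only [deltaEntry, h_index, h_sign, neg_mul]

variable {hbar Qb Qf Qbf}

theorem deltaEntry_zero_shift_bosonic {b f : ι}
    (hQQ : ∀ u, Qb b u * Qf f u = Qbf b f (u + hbar) - Qbf b f (u - hbar)) (ξ : ℤ) (u : ℂ)
    {a : ι ⊕ (ι ⊕ ℤ)} (ha : a = Sum.inl b ∨ a = Sum.inr (Sum.inl b)) :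
    deltaEntry hbar Qb Qf Qbf 0 (ξ - 2) u a (Sum.inl f) =
      deltaEntry hbar Qb Qf Qbf 0 ξ u a (Sum.inl f) +
        pivotCoeff hbar Qf ξ u (Sum.inl f) *
          deltaEntry hbar Qb Qf Qbf 0 ξ u a (Sum.inr (Sum.inl 0)) := by
  rcases ha with rfl | rfl <;>
    simp only [deltaEntry, pivotCoeff, Sum.elim_inl, zpow_zero, one_mul, mul_zero, sub_zero,
      add_zero, neg_mul, ← sub_eq_add_neg, qq_shift_sub_two hQQ ξ u,
      mul_comm (Qf f _)]

theorem deltaEntry_zero_shift {B1 B2 F : List ι} {R S T1 T2 : List ℤ}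
    (hQQ : ∀ b ∈ B1 ++ B2, ∀ f ∈ F, ∀ u : ℂ,
      Qb b u * Qf f u = Qbf b f (u + hbar) - Qbf b f (u - hbar)) (ξ : ℤ) (u : ℂ)
    {a : ι ⊕ (ι ⊕ ℤ)} (ha : a ∈ rowLabels B1 B2 R)
    {c : ι ⊕ (ℤ ⊕ (ℤ ⊕ ℤ))} (hc : c ∈ colLabels F S T1 T2) :
    deltaEntry hbar Qb Qf Qbf 0 (ξ - 2) u (shiftRow a) (shiftCol c) =
      rowSign a * (deltaEntry hbar Qb Qf Qbf 0 ξ u a c +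
        pivotCoeff hbar Qf ξ u c *
          deltaEntry hbar Qb Qf Qbf 0 ξ u a (Sum.inr (Sum.inl 0))) := by
  rcases c with f | c
  · have hf := inl_mem_colLabels.mp hc
    rcases a with b | b | r
    · have hb := List.mem_append_left B2 (inl_mem_rowLabels.mp ha)
      exact (deltaEntry_zero_shift_bosonic (hQQ b hb f hf) ξ u (.inl rfl)).trans (one_mul _).symm
    · have hb := List.mem_append_right B1 (inr_inl_mem_rowLabels.mp ha)
      exact (deltaEntry_zero_shift_bosonic (hQQ b hb f hf) ξ u (.inr rfl)).trans (one_mul _).symm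
    · have h_pivot : deltaEntry hbar Qb Qf Qbf 0 ξ u (Sum.inr (Sum.inr r))
          (Sum.inr (Sum.inl 0)) = 0 := rfl
      rw [h_pivot, mul_zero, add_zero]
      exact (deltaEntry_shift_fermionic hbar Qb Qf Qbf 0 ξ u r f).trans (neg_one_mul _).symm
  · have h_coeff : pivotCoeff hbar Qf ξ u (Sum.inr c) = 0 := rfl
    rw [h_coeff, zero_mul, add_zero, rowSign_mul_deltaEntry_inr]
    exact deltaEntry_shift_inr hbar Qb Qf Qbf 0 ξ u a c

end DeltaEntry

/-- **Shift lemma, part (ii).** -/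
theorem shift_lemma_ii {ι : Type*} (hbar : ℂ) (hbar_ne : hbar ≠ 0)
    (Qb Qf : ι → ℂ → ℂ) (Qbf : ι → ι → ℂ → ℂ)
    (B1 B2 F : List ι) (hnd : (B1 ++ B2 ++ F).Nodup)
    (hQQ : ∀ b ∈ B1 ++ B2, ∀ f ∈ F, ∀ u : ℂ,
      Qb b u * Qf f u = Qbf b f (u + hbar) - Qbf b f (u - hbar))
    (R S T1 T2 : List ℤ) (ξ : ℤ)
    (hlen : B1.length + B2.length + R.length =
      F.length + S.length + T1.length + T2.length)
    (hcase : (0 : ℤ) ∈ S) :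
    ∀ u : ℂ,
      DeltaCF hbar Qb Qf Qbf B1 B2 F R S T1 T2 0 ξ u =
        (-1 : ℂ) ^ R.length *
          DeltaCF hbar Qb Qf Qbf B1 B2 F (R.map (fun r => r - 1)) (S.map (fun s => s + 1))
            (T1.map (fun t => t + 1)) (T2.map (fun t => t + 1)) 0 (ξ - 2) u := by
  intro u
  simp only [DeltaCF_eq_listDet, rowLabels_map_sub_one, colLabels_map_add_one, listDet_map]
  set D := deltaEntry hbar Qb Qf Qbf 0 ξ u
  have h_shift : listDet (rowLabels B1 B2 R) (colLabels F S T1 T2)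
      (fun a c => deltaEntry hbar Qb Qf Qbf 0 (ξ - 2) u (shiftRow a) (shiftCol c)) =
      (-1) ^ R.length * listDet (rowLabels B1 B2 R) (colLabels F S T1 T2) D :=
    calc
      _ = listDet (rowLabels B1 B2 R) (colLabels F S T1 T2) (fun a c => rowSign a *
            (D a c + pivotCoeff hbar Qf ξ u c * D a (Sum.inr (Sum.inl 0)))) :=
        listDet_congr fun _ ha _ hc => deltaEntry_zero_shift hQQ ξ u ha hc
      _ = (-1) ^ R.length * listDet (rowLabels B1 B2 R) (colLabels F S T1 T2) (fun a c =>
            D a c + pivotCoeff hbar Qf ξ u c * D a (Sum.inr (Sum.inl 0))) := by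
        rw [listDet_mul_rows, prod_map_rowSign_rowLabels]
      _ = _ := by
        rw [listDet_add_mul_col (inr_inl_mem_colLabels.mpr hcase) rfl]
  rw [h_shift, ← mul_assoc, ← mul_pow, neg_one_mul, neg_neg, one_pow, one_mul]

end Stmt10
end

section
/- Shift lemma, part (iii). Suppose S = ∅, so that m+α = n+c1+c2. If t²_i = −η+1 for some 1 ≤ i ≤ c2, or r_j = η for some 1 ≤ j ≤ α, then Δ^{R,[η;ξ]}_{∅,T1,T2} = (−1)^{m2+c2} · Δ^{R,[η−1;ξ]}_{∅,T1,T2}. -/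
open scoped BigOperators

namespace Stmt11

/-- The integer segment tuple `⟨a,b⟩ = (a, a+1, …, b)`, empty when `b < a`. -/
def seg (a b : ℤ) : List ℤ := (List.range (b - a + 1).toNat).map (fun k => a + (k : ℤ))

/-- Product of `g x y` over ordered pairs `x ≺ y` in the list `L`. -/
def pairProd {ι : Type*} (L : List ι) (g : ι → ι → ℂ) : ℂ :=
  ∏ i : Fin L.length, ∏ j : Fin L.length, if i < j then g (L.get i) (L.get j) else 1

/-- Product of `g x` over a list. -/
def prodL {ι : Type*} (L : List ι) (g : ι → ℂ) : ℂ := (L.map g).prod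

/-- Product of `g x y` over pairs `(x, y) ∈ L × M`. -/
def prodLL {ι : Type*} (L M : List ι) (g : ι → ι → ℂ) : ℂ :=
  (L.map (fun x => (M.map (g x)).prod)).prod

/-- Determinant of the square matrix whose rows and columns are labelled by the given
key lists (by convention `0` if the two lists have different lengths). -/
noncomputable def listDet {α β : Type*} (rows : List α) (cols : List β) (e : α → β → ℂ) : ℂ :=
  if h : rows.length = cols.length then
    Matrix.det (Matrix.of fun i j : Fin rows.length =>
      e (rows.get i) (cols.get (Fin.cast h j)))
  else 0

/-- The coefficient-free sparse determinant `Δ^{R,[η;ξ]}_{S,T1,T2}` built from the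
coefficient-free Baxter Q-functions, as a function of the spectral parameter `u`. -/
noncomputable def DeltaCF {ι : Type*} (hbar : ℂ) (Qb Qf : ι → ℂ → ℂ) (Qbf : ι → ι → ℂ → ℂ)
    (B1 B2 F : List ι) (R S T1 T2 : List ℤ) (η ξ : ℤ) (u : ℂ) : ℂ :=
  listDet
    ((B1.map (Sum.inl : ι → ι ⊕ (ι ⊕ ℤ)) ++
      B2.map (fun b => (Sum.inr (Sum.inl b) : ι ⊕ (ι ⊕ ℤ))) ++
      R.map (fun r => (Sum.inr (Sum.inr r) : ι ⊕ (ι ⊕ ℤ)))))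
    ((F.map (Sum.inl : ι → ι ⊕ (ℤ ⊕ (ℤ ⊕ ℤ))) ++
      S.map (fun j => (Sum.inr (Sum.inl j) : ι ⊕ (ℤ ⊕ (ℤ ⊕ ℤ)))) ++
      T1.map (fun j => (Sum.inr (Sum.inr (Sum.inl j)) : ι ⊕ (ℤ ⊕ (ℤ ⊕ ℤ)))) ++
      T2.map (fun j => (Sum.inr (Sum.inr (Sum.inr j)) : ι ⊕ (ℤ ⊕ (ℤ ⊕ ℤ))))))
    (fun row col =>
      match row, col with
      | Sum.inl b, Sum.inl f => Qbf b f (u + (ξ : ℂ) * hbar)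
      | Sum.inl b, Sum.inr (Sum.inl j) => Qb b (u + ((ξ + 2 * j - 1 : ℤ) : ℂ) * hbar)
      | Sum.inl b, Sum.inr (Sum.inr (Sum.inl j)) =>
          Qb b (u + ((ξ + 2 * j - 1 : ℤ) : ℂ) * hbar)
      | Sum.inl _, Sum.inr (Sum.inr (Sum.inr _)) => 0
      | Sum.inr (Sum.inl b), Sum.inl f =>
          (-1 : ℂ) ^ η * Qbf b f (u + ((ξ - 2 * η : ℤ) : ℂ) * hbar)
      | Sum.inr (Sum.inl b), Sum.inr (Sum.inl j) =>
          Qb b (u + ((ξ + 2 * j - 1 : ℤ) : ℂ) * hbar)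
      | Sum.inr (Sum.inl _), Sum.inr (Sum.inr (Sum.inl _)) => 0
      | Sum.inr (Sum.inl b), Sum.inr (Sum.inr (Sum.inr j)) =>
          Qb b (u + ((ξ + 2 * j - 1 : ℤ) : ℂ) * hbar)
      | Sum.inr (Sum.inr r), Sum.inl f =>
          (-1 : ℂ) ^ (r - 1) * Qf f (u + ((ξ - 2 * r + 1 : ℤ) : ℂ) * hbar)
      | Sum.inr (Sum.inr _), Sum.inr _ => 0)

/-!
Regard `Δ^{R,[η;ξ]}` as a minor of an infinite matrix `M_η` indexed by all possible labels. On the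
columns outside `S`, the QQ-relation says precisely that
`M_η = D * M_{η-1} * D' + x yᵀ`, where `D` negates the `B2` rows, `D'` negates the `T2` columns,
`x` is the `T2` column labelled `1 - η` and `y` is the `R` row labelled `η`. If one of these two is
present in the minor, then adding `x yᵀ` is a combination of column (or row) operations and does
not affect the determinant, so only the signs of `D` and `D'` remain.
-/

section Determinant

open Matrix

variable {n K : Type*} [Fintype n] [DecidableEq n] [CommRing K] {A : Matrix n n K} {x y : n → K}

theorem det_add_vecMulVec_of_row_eq {i : n} (hy : A.row i = y) (hx : x i = 0) :
    (A + vecMulVec x y).det = A.det := by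
  subst hy
  exact det_eq_of_forall_row_eq_smul_add_const x i hx fun _ _ => rfl

theorem det_add_vecMulVec_of_col_eq {j : n} (hx : A.col j = x) (hy : y j = 0) :
    (A + vecMulVec x y).det = A.det := by
  rw [← det_transpose, transpose_add, transpose_vecMulVec,
    det_add_vecMulVec_of_row_eq (A := Aᵀ) hx hy, det_transpose]

end Determinant

section Labels

variable {ι : Type*}

/-- Row labels of `Δ`: the three summands are for `B1`, `B2` and `R`, as in `DeltaCF`. -/
abbrev RowLabel (ι : Type*) := ι ⊕ (ι ⊕ ℤ)

/-- Column labels of `Δ`: the four summands are for `F`, `S`, `T1` and `T2`, as in `DeltaCF`. -/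
abbrev ColLabel (ι : Type*) := ι ⊕ (ℤ ⊕ (ℤ ⊕ ℤ))

/-- The label of the row of `r ∈ R`. -/
abbrev RowLabel.ofR (r : ℤ) : RowLabel ι := .inr (.inr r)

/-- The label of the column of `j ∈ T2`. -/
abbrev ColLabel.ofT2 (j : ℤ) : ColLabel ι := .inr (.inr (.inr j))

/-- The labels of the rows `B1 ⊔ B2 ⊔ R` of `Δ`, in order. -/
def rowLabels (B1 B2 : List ι) (R : List ℤ) : List (RowLabel ι) :=
  B1.map .inl ++ B2.map (fun b => .inr (.inl b)) ++ R.map .ofR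

/-- The labels of the columns `F ⊔ S ⊔ T1 ⊔ T2` of `Δ`, in order. -/
def colLabels (F : List ι) (S T1 T2 : List ℤ) : List (ColLabel ι) :=
  F.map .inl ++ S.map (fun j => .inr (.inl j)) ++ T1.map (fun j => .inr (.inr (.inl j))) ++
    T2.map .ofT2

/-- The diagonal of the matrix `D` that negates the `B2` rows. -/
def rowSign : RowLabel ι → ℂ
  | .inr (.inl _) => -1
  | _ => 1

/-- The diagonal of the matrix `D'` that negates the `T2` columns. -/
def colSign : ColLabel ι → ℂ
  | .inr (.inr (.inr _)) => -1
  | _ => 1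

theorem prod_rowSign_rowLabels (B1 B2 : List ι) (R : List ℤ) :
    ∏ i, rowSign ((rowLabels B1 B2 R).get i) = (-1) ^ B2.length := by
  simp only [List.get_eq_getElem, Fin.prod_univ_fun_getElem]
  simp [rowLabels, rowSign, Function.comp_def]

theorem prod_colSign_colLabels (F : List ι) (S T1 T2 : List ℤ) {N : ℕ}
    (h : N = (colLabels F S T1 T2).length) :
    ∏ j, colSign ((colLabels F S T1 T2).get (Fin.cast h j)) = (-1) ^ T2.length := by
  subst h
  simp only [Fin.cast_eq_self, List.get_eq_getElem, Fin.prod_univ_fun_getElem]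
  simp [colLabels, colSign, Function.comp_def]

end Labels

section DeltaMatrix

open Matrix

variable {ι : Type*} (hbar : ℂ) (Qb Qf : ι → ℂ → ℂ) (Qbf : ι → ι → ℂ → ℂ)

/-- The infinite matrix `M_η` of all entries that can occur in a determinant `Δ^{R,[η;ξ]}`; its
rows and columns are indexed by labels, and `Δ` is a minor of it. -/
noncomputable def deltaMatrix (η ξ : ℤ) (u : ℂ) : Matrix (RowLabel ι) (ColLabel ι) ℂ
  | .inl b, .inl f => Qbf b f (u + (ξ : ℂ) * hbar)
  | .inl b, .inr (.inl j) => Qb b (u + ((ξ + 2 * j - 1 : ℤ) : ℂ) * hbar)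
  | .inl b, .inr (.inr (.inl j)) => Qb b (u + ((ξ + 2 * j - 1 : ℤ) : ℂ) * hbar)
  | .inl _, .inr (.inr (.inr _)) => 0
  | .inr (.inl b), .inl f => (-1 : ℂ) ^ η * Qbf b f (u + ((ξ - 2 * η : ℤ) : ℂ) * hbar)
  | .inr (.inl b), .inr (.inl j) => Qb b (u + ((ξ + 2 * j - 1 : ℤ) : ℂ) * hbar)
  | .inr (.inl _), .inr (.inr (.inl _)) => 0
  | .inr (.inl b), .inr (.inr (.inr j)) => Qb b (u + ((ξ + 2 * j - 1 : ℤ) : ℂ) * hbar)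
  | .inr (.inr r), .inl f => (-1 : ℂ) ^ (r - 1) * Qf f (u + ((ξ - 2 * r + 1 : ℤ) : ℂ) * hbar)
  | .inr (.inr _), .inr _ => 0

local notation "M" => deltaMatrix hbar Qb Qf Qbf

theorem DeltaCF_eq_det_submatrix (B1 B2 F : List ι) (R S T1 T2 : List ℤ) (η ξ : ℤ) (u : ℂ)
    (h : (rowLabels B1 B2 R).length = (colLabels F S T1 T2).length) :
    DeltaCF hbar Qb Qf Qbf B1 B2 F R S T1 T2 η ξ u =
      ((M η ξ u).submatrix (rowLabels B1 B2 R).get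
        fun j => (colLabels F S T1 T2).get (Fin.cast h j)).det :=
  dif_pos h

theorem deltaMatrix_ofR_mul_colSign (η ξ r : ℤ) (u : ℂ) (s : ColLabel ι) :
    M η ξ u (.ofR r) s * colSign s = M η ξ u (.ofR r) s := by
  rcases s with f | j | j | j <;> simp [deltaMatrix, colSign]

theorem rowSign_mul_deltaMatrix_ofT2 (η ξ j : ℤ) (u : ℂ) (r : RowLabel ι) :
    rowSign r * M η ξ u r (.ofT2 j) = -M η ξ u r (.ofT2 j) := by
  rcases r with b | b | r <;> simp [deltaMatrix, rowSign]

variable {hbar Qb Qf Qbf}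

theorem Qbf_shift_sub_two_mul {b f : ι}
    (hQQ : ∀ u, Qb b u * Qf f u = Qbf b f (u + hbar) - Qbf b f (u - hbar)) (η ξ : ℤ) (u : ℂ) :
    Qbf b f (u + ((ξ - 2 * η : ℤ) : ℂ) * hbar) =
      Qbf b f (u + ((ξ - 2 * (η - 1) : ℤ) : ℂ) * hbar) -
        Qb b (u + ((ξ - 2 * η + 1 : ℤ) : ℂ) * hbar) *
          Qf f (u + ((ξ - 2 * η + 1 : ℤ) : ℂ) * hbar) := by
  rw [hQQ, eq_sub_iff_add_eq]
  push_cast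
  ring_nf

variable {B1 B2 F : List ι} {R T1 T2 : List ℤ}

theorem deltaMatrix_eq_sign_mul_pred_add
    (hQQ : ∀ b ∈ B2, ∀ f ∈ F, ∀ u,
      Qb b u * Qf f u = Qbf b f (u + hbar) - Qbf b f (u - hbar))
    (η ξ : ℤ) (u : ℂ) {r : RowLabel ι} {s : ColLabel ι}
    (hr : r ∈ rowLabels B1 B2 R) (hs : s ∈ colLabels F [] T1 T2) :
    M η ξ u r s = rowSign r * M (η - 1) ξ u r s * colSign s +
      M (η - 1) ξ u r (.ofT2 (-η + 1)) * M (η - 1) ξ u (.ofR η) s := by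
  have hsign : (-1 : ℂ) ^ (η - 1) = -(-1) ^ η := by
    rw [zpow_sub_one₀ (by norm_num)]
    norm_num
  rcases r with b | b | r <;> rcases s with f | j | j | j <;>
    simp only [deltaMatrix, rowSign, colSign] <;> try ring1
  · have hb : b ∈ B2 := by simpa [rowLabels] using hr
    have hf : f ∈ F := by simpa [colLabels] using hs
    rw [Qbf_shift_sub_two_mul (hQQ b hb f hf), hsign,
      show ξ + 2 * (-η + 1) - 1 = ξ - 2 * η + 1 by ring]
    ring
  · simp [colLabels] at hs

theorem det_submatrix_deltaMatrix {n : Type*} [Fintype n] [DecidableEq n]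
    (hQQ : ∀ b ∈ B2, ∀ f ∈ F, ∀ u,
      Qb b u * Qf f u = Qbf b f (u + hbar) - Qbf b f (u - hbar))
    (η ξ : ℤ) (u : ℂ) {ρ : n → RowLabel ι} {σ : n → ColLabel ι}
    (hρ : ∀ i, ρ i ∈ rowLabels B1 B2 R) (hσ : ∀ j, σ j ∈ colLabels F [] T1 T2)
    (hcase : (∃ j, σ j = .ofT2 (-η + 1)) ∨ ∃ i, ρ i = .ofR η) :
    ((M η ξ u).submatrix ρ σ).det =
      (∏ i, rowSign (ρ i)) * (∏ j, colSign (σ j)) * ((M (η - 1) ξ u).submatrix ρ σ).det := by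
  set A := (M (η - 1) ξ u).submatrix ρ σ
  set N := diagonal (fun i => rowSign (ρ i)) * A * diagonal (fun j => colSign (σ j))
  set x : n → ℂ := fun i => M (η - 1) ξ u (ρ i) (.ofT2 (-η + 1))
  set y : n → ℂ := fun j => M (η - 1) ξ u (.ofR η) (σ j)
  have hN (i j : n) : N i j = rowSign (ρ i) * A i j * colSign (σ j) := by
    simp [N]
  have hM : (M η ξ u).submatrix ρ σ = N + vecMulVec x y := by
    ext i j
    rw [Matrix.add_apply, hN]
    exact deltaMatrix_eq_sign_mul_pred_add hQQ η ξ u (hρ i) (hσ j)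
  have hdet : (N + vecMulVec x y).det = N.det := by
    rcases hcase with ⟨j, hj⟩ | ⟨i, hi⟩
    · refine det_add_vecMulVec_of_col_eq (j := j) (funext fun i => ?_) ?_
      · simp [hN, A, x, hj, rowSign_mul_deltaMatrix_ofT2, colSign]
      · simp [y, hj, deltaMatrix]
    · refine det_add_vecMulVec_of_row_eq (i := i) (funext fun j => ?_) ?_
      · simp [hN, A, y, hi, deltaMatrix_ofR_mul_colSign, rowSign]
      · simp [x, hi, deltaMatrix]
  rw [hM, hdet, det_mul, det_mul, det_diagonal, det_diagonal, mul_right_comm]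

end DeltaMatrix

theorem shift_lemma_iii_general {ι : Type*} (hbar : ℂ)
    (Qb Qf : ι → ℂ → ℂ) (Qbf : ι → ι → ℂ → ℂ)
    (B1 B2 F : List ι)
    (hQQ : ∀ b ∈ B2, ∀ f ∈ F, ∀ u : ℂ,
      Qb b u * Qf f u = Qbf b f (u + hbar) - Qbf b f (u - hbar))
    (R T1 T2 : List ℤ) (η ξ : ℤ)
    (hlen : B1.length + B2.length + R.length = F.length + T1.length + T2.length)
    (hcase : (-η + 1 : ℤ) ∈ T2 ∨ η ∈ R) :
    ∀ u : ℂ,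
      DeltaCF hbar Qb Qf Qbf B1 B2 F R [] T1 T2 η ξ u =
        (-1 : ℂ) ^ (B2.length + T2.length) *
          DeltaCF hbar Qb Qf Qbf B1 B2 F R [] T1 T2 (η - 1) ξ u := by
  intro u
  have h : (rowLabels B1 B2 R).length = (colLabels F [] T1 T2).length := by
    simpa [rowLabels, colLabels, add_assoc] using hlen
  have hlabel : (∃ j, (colLabels F [] T1 T2).get (Fin.cast h j) = .ofT2 (-η + 1)) ∨
      ∃ i, (rowLabels B1 B2 R).get i = .ofR η := by
    refine hcase.imp (fun hT => ?_) fun hR => List.mem_iff_get.1 (by simp [rowLabels, hR])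
    obtain ⟨j, hj⟩ := List.mem_iff_get.1
      (show ColLabel.ofT2 (-η + 1) ∈ colLabels F [] T1 T2 by simp [colLabels, hT])
    exact ⟨Fin.cast h.symm j, hj⟩
  rw [DeltaCF_eq_det_submatrix (h := h), DeltaCF_eq_det_submatrix (h := h),
    det_submatrix_deltaMatrix hQQ η ξ u (List.get_mem _) (fun _ => List.get_mem _ _) hlabel,
    prod_rowSign_rowLabels, prod_colSign_colLabels, pow_add]

/-- **Shift lemma, part (iii).** -/
theorem shift_lemma_iii {ι : Type*} (hbar : ℂ) (hbar_ne : hbar ≠ 0)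
    (Qb Qf : ι → ℂ → ℂ) (Qbf : ι → ι → ℂ → ℂ)
    (B1 B2 F : List ι) (hnd : (B1 ++ B2 ++ F).Nodup)
    (hQQ : ∀ b ∈ B1 ++ B2, ∀ f ∈ F, ∀ u : ℂ,
      Qb b u * Qf f u = Qbf b f (u + hbar) - Qbf b f (u - hbar))
    (R T1 T2 : List ℤ) (η ξ : ℤ)
    (hlen : B1.length + B2.length + R.length = F.length + T1.length + T2.length)
    (hcase : (-η + 1 : ℤ) ∈ T2 ∨ η ∈ R) :
    ∀ u : ℂ,
      DeltaCF hbar Qb Qf Qbf B1 B2 F R [] T1 T2 η ξ u =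
        (-1 : ℂ) ^ (B2.length + T2.length) *
          DeltaCF hbar Qb Qf Qbf B1 B2 F R [] T1 T2 (η - 1) ξ u :=
  shift_lemma_iii_general hbar Qb Qf Qbf B1 B2 F
    (fun b hb => hQQ b (List.mem_append_right B1 hb)) R T1 T2 η ξ hlen hcase

end Stmt11
end
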